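/- Let p, q : Fin n → EuclideanSpace ℝ (Fin d) be injective families whose values are exactly the extreme points of P := convexHull ℝ (Set.range p) and Q := convexHull ℝ (Set.range q) respectively, and assume P and Q are combinatorially equivalent with compatible labelling. Assume: (1) there are points c_P, c_Q ∈ EuclideanSpace ℝ (Fin d) and real numbers r_P, r_Q ≥ 0 with ‖p i − c_P‖ = r_P and ‖q i − c_Q‖ = r_Q for all i (P and Q are inscribed in spheres of radii r_P and r_Q); (2) c_Q ∈ interior Q; (3) ‖q i − q j‖ ≤ ‖p i − p j‖ for every edge (i,j) of P. Then r_P ≥ r_Q, and r_P = r_Q holds if and only if there exists an isometry e : EuclideanSpace ℝ (Fin d) ≃ᵢ EuclideanSpace ℝ (Fin d) with e (p i) = q i for all i. -/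

import Mathlib

/-- For `i ≠ j`, the pair `(i,j)` is an edge of the polytope `convexHull ℝ (Set.range p)`
if the closed segment between `p i` and `p j` is an extreme subset of it. -/
def IsEdge {n d : ℕ} (p : Fin n → EuclideanSpace ℝ (Fin d)) (i j : Fin n) : Prop :=
  i ≠ j ∧ IsExtreme ℝ (convexHull ℝ (Set.range p)) (segment ℝ (p i) (p j))

/-- Two polytopes with labelled vertices are combinatorially equivalent with compatible
labelling if for every `S ⊆ Fin n`, `convexHull ℝ (p '' S)` is an extreme subset of the
first polytope exactly when `convexHull ℝ (q '' S)` is an extreme subset of the second. -/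
def CombEquiv {n d : ℕ} (p q : Fin n → EuclideanSpace ℝ (Fin d)) : Prop :=
  ∀ S : Set (Fin n),
    IsExtreme ℝ (convexHull ℝ (Set.range p)) (convexHull ℝ (p '' S)) ↔
    IsExtreme ℝ (convexHull ℝ (Set.range q)) (convexHull ℝ (q '' S))

/-!
Following Izmestiev and Winter, a point `x` in the interior of a polytope `P` with vertices `p i`
carries a symmetric form `B` on functions of the vertices which is nonnegative off the diagonal,
positive at most on edges of `P`, and has exactly one positive eigenvalue; its row sums `α i > 0`,
normalised by `∑ i, α i = 1`, are the Wachspress coordinates of `x`, and its kernel consists of the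
linear functions of `p i - x`. Expanding the squares, the edge inequalities
`‖q i - q j‖ ≤ ‖p i - p j‖` then give
`∑ i, α i * ‖q i - y‖ ^ 2 ≤ ∑ i, α i * ‖p i - x‖ ^ 2` with `y = ∑ i, α i • q i`, that is,
`rQ ^ 2 - ‖y - cQ‖ ^ 2 ≤ rP ^ 2 - ‖x - cP‖ ^ 2` for inscribed polytopes. A degree argument shows
that `x` can be chosen with `y = cQ`, so `rQ ≤ rP`. If the radii agree, then `x = cP` and
`q i - cQ = T (p i - cP)` for a linear map `T`; the inequality at points near `cP` makes `T`
expansive, and since `T` preserves the norms of the spanning vectors `p i - cP`, it is an isometry.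

The form `B` is the Hessian of the volume of the polar dual of `P - x` in the distances of its
facets from the origin. It is built without reference to volumes, from intersection numbers on the
simplicial fan over a triangulated boundary of `P`, where the triangulation comes from generic
heights of the vertices. Its signature follows by induction on the dimension, passing to the links
of the fan, through the Bochner argument of Shenfeld and van Handel.
-/

open scoped InnerProductSpace Topology
open Filter Module

section QuadraticForms

theorem apply_self_mul_apply_self_le_sq_of_nonpos_on_ker {V : Type*} [AddCommGroup V] [Module ℝ V]
    {B : LinearMap.BilinForm ℝ V} (hB : B.IsSymm) (l : Dual ℝ V)
    (hl : ∀ x, l x = 0 → B x x ≤ 0) {c : V} (hc : 0 < B c c) (x : V) :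
    B x x * B c c ≤ B c x ^ 2 := by
  by_cases hlc : l c = 0
  · exact absurd (hl c hlc) hc.not_ge
  have hker : B (x - (l x / l c) • c) (x - (l x / l c) • c) ≤ 0 :=
    hl _ (by simp [div_mul_cancel₀ _ hlc])
  have hsymm : B x c = B c x := hB.eq x c
  simp only [map_sub, map_smul, LinearMap.sub_apply, LinearMap.smul_apply, smul_eq_mul,
    hsymm] at hker
  nlinarith [sq_nonneg (B c x - l x / l c * B c c)]

theorem inner_map_self_nonpos_of_orthogonal_fixed {E : Type*} [NormedAddCommGroup E]
    [InnerProductSpace ℝ E] [FiniteDimensional ℝ E] {T : E →ₗ[ℝ] E} (hT : T.IsSymmetric)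
    (hle : ∀ x, ⟪T x, x⟫_ℝ ≤ ‖x‖ ^ 2) (hsq : ∀ x, ⟪T x, x⟫_ℝ ≤ ‖T x‖ ^ 2) {x : E}
    (hx : ∀ y, T y = y → ⟪y, x⟫_ℝ = 0) : ⟪T x, x⟫_ℝ ≤ 0 := by
  set b := hT.eigenvectorBasis rfl
  set μ := hT.eigenvalues rfl
  have hTb : ∀ k, T (b k) = μ k • b k := hT.apply_eigenvectorBasis rfl
  have hexpand : ⟪T x, x⟫_ℝ = ∑ k, μ k * ⟪b k, x⟫_ℝ ^ 2 := by
    rw [← b.sum_inner_mul_inner]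
    refine Finset.sum_congr rfl fun k _ => ?_
    rw [hT, hTb, real_inner_smul_right, real_inner_comm]
    ring
  rw [hexpand]
  refine Finset.sum_nonpos fun k _ => ?_
  have hμ_le : μ k ≤ 1 := by simpa [hTb, real_inner_smul_left] using hle (b k)
  have hμ_sq : μ k ≤ μ k ^ 2 := by simpa [hTb, real_inner_smul_left, norm_smul] using hsq (b k)
  rcases le_or_gt (μ k) 0 with hneg | hpos
  · exact mul_nonpos_of_nonpos_of_nonneg hneg (sq_nonneg _)
  · have hμ : μ k = 1 := by nlinarith
    rw [hx (b k) (by rw [hTb, hμ, one_smul])]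
    simp

theorem mul_sq_sub_div_nonneg {ι : Type*} {B : Matrix ι ι ℝ} {c : ι → ℝ} (hc : ∀ i, 0 < c i)
    (hoff : ∀ i j, i ≠ j → 0 ≤ B i j) (x : ι → ℝ) (i j : ι) :
    0 ≤ B i j * c i * c j * (x i / c i - x j / c j) ^ 2 := by
  rcases eq_or_ne i j with rfl | hij
  · simp
  · have := hoff i j hij
    have := (hc i).le
    have := (hc j).le
    positivity

variable {ι : Type*} [Fintype ι]

theorem sum_rowSum_mul_sq_sub_sum_mul {W : ι → ι → ℝ} (hW : ∀ i j, W i j = W j i) (f : ι → ℝ) :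
    ∑ i, (∑ j, W i j) * f i ^ 2 - ∑ i, ∑ j, W i j * (f i * f j) =
      2⁻¹ * ∑ i, ∑ j, W i j * (f i - f j) ^ 2 := by
  have hswap : ∑ i, ∑ j, W i j * f j ^ 2 = ∑ i, ∑ j, W i j * f i ^ 2 := by
    rw [Finset.sum_comm]
    simp only [hW]
  have hsq : ∀ i j, W i j * (f i - f j) ^ 2 =
      W i j * f i ^ 2 - 2 * (W i j * (f i * f j)) + W i j * f j ^ 2 := fun i j => by ring
  simp only [hsq, Finset.sum_add_distrib, Finset.sum_sub_distrib, ← Finset.mul_sum, hswap,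
    Finset.sum_mul]
  ring

open Matrix

variable {B : Matrix ι ι ℝ} {w c : ι → ℝ}

theorem sum_weight_sq_sub_dotProduct_mulVec (hB : B.IsSymm) (hc : ∀ i, 0 < c i)
    (hBc : ∀ i, (B *ᵥ c) i = w i * c i) (x : ι → ℝ) :
    ∑ i, w i * x i ^ 2 - x ⬝ᵥ B *ᵥ x =
      2⁻¹ * ∑ i, ∑ j, B i j * c i * c j * (x i / c i - x j / c j) ^ 2 := by
  have hW : ∀ i j, B i j * c i * c j = B j i * c j * c i := fun i j => by
    rw [hB.apply j i]; ring
  rw [← sum_rowSum_mul_sq_sub_sum_mul hW fun i => x i / c i]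
  congr 1
  · refine Finset.sum_congr rfl fun i _ => ?_
    have hrow : ∑ j, B i j * c i * c j = c i * (w i * c i) := by
      rw [← hBc, mulVec, dotProduct, Finset.mul_sum]
      exact Finset.sum_congr rfl fun j _ => by ring
    have := (hc i).ne'
    rw [hrow]
    field_simp
  · simp only [dotProduct, mulVec, Finset.mul_sum]
    refine Finset.sum_congr rfl fun i _ => Finset.sum_congr rfl fun j _ => ?_
    have := (hc i).ne'
    have := (hc j).ne'
    field_simp

/-- The relation `0 < B i j` between distinct indices connects the whole index set: a nonempty set
of indices which is closed under it contains every index. -/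
def IsPosConnected (B : Matrix ι ι ℝ) : Prop :=
  ∀ I : Set ι, I.Nonempty → (∀ i ∈ I, ∀ j, i ≠ j → 0 < B i j → j ∈ I) → ∀ i, i ∈ I

theorem dotProduct_mulVec_le_sum_weight_sq (hB : B.IsSymm) (hc : ∀ i, 0 < c i)
    (hoff : ∀ i j, i ≠ j → 0 ≤ B i j) (hBc : ∀ i, (B *ᵥ c) i = w i * c i) (x : ι → ℝ) :
    x ⬝ᵥ B *ᵥ x ≤ ∑ i, w i * x i ^ 2 := by
  have hsum : 0 ≤ ∑ i, ∑ j, B i j * c i * c j * (x i / c i - x j / c j) ^ 2 :=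
    Finset.sum_nonneg fun i _ => Finset.sum_nonneg fun j _ => mul_sq_sub_div_nonneg hc hoff x i j
  linarith [sum_weight_sq_sub_dotProduct_mulVec hB hc hBc x]

theorem exists_eq_smul_of_sum_weight_sq_eq (hB : B.IsSymm) (hc : ∀ i, 0 < c i)
    (hoff : ∀ i j, i ≠ j → 0 ≤ B i j) (hconn : IsPosConnected B)
    (hBc : ∀ i, (B *ᵥ c) i = w i * c i) {x : ι → ℝ} (hx : x ⬝ᵥ B *ᵥ x = ∑ i, w i * x i ^ 2) :
    ∃ t : ℝ, x = t • c := by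
  rcases isEmpty_or_nonempty ι with _ | ⟨⟨i₀⟩⟩
  · exact ⟨0, Subsingleton.elim _ _⟩
  have hnonneg := mul_sq_sub_div_nonneg hc hoff x
  have hsum := sum_weight_sq_sub_dotProduct_mulVec hB hc hBc x
  rw [hx, sub_self, eq_comm, mul_eq_zero_iff_left (by norm_num), Finset.sum_eq_zero_iff_of_nonneg
    fun i _ => Finset.sum_nonneg fun j _ => hnonneg i j] at hsum
  have hterm : ∀ i j, B i j * c i * c j * (x i / c i - x j / c j) ^ 2 = 0 := fun i j =>
    (Finset.sum_eq_zero_iff_of_nonneg fun j _ => hnonneg i j).1 (hsum i (Finset.mem_univ i)) j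
      (Finset.mem_univ j)
  have hratio := hconn {i | x i / c i = x i₀ / c i₀} ⟨i₀, rfl⟩ fun i hi j _ hBij => by
    have hdiff : x i / c i - x j / c j = 0 := by
      simpa [hBij.ne', (hc i).ne', (hc j).ne'] using hterm i j
    exact (sub_eq_zero.1 hdiff).symm.trans hi
  exact ⟨x i₀ / c i₀, funext fun i => (div_eq_iff (hc i).ne').1 (hratio i)⟩

/-- Conjugating `B` by `√w` turns it into a symmetric operator `T` with `T ≤ 1` and `T ≤ T²`, whose
eigenvalues are nonpositive or equal to `1`. -/
theorem dotProduct_mulVec_nonpos_of_forall_fixed (hB : B.IsSymm) (hw : ∀ i, 0 < w i)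
    (hle : ∀ x : ι → ℝ, x ⬝ᵥ B *ᵥ x ≤ ∑ i, w i * x i ^ 2)
    (hsq : ∀ x : ι → ℝ, x ⬝ᵥ B *ᵥ x ≤ ∑ i, (B *ᵥ x) i ^ 2 / w i) {x : ι → ℝ}
    (hx : ∀ z : ι → ℝ, (∀ i, (B *ᵥ z) i = w i * z i) → z ⬝ᵥ B *ᵥ x = 0) :
    x ⬝ᵥ B *ᵥ x ≤ 0 := by
  classical
  let D : Matrix ι ι ℝ := diagonal fun i => (√(w i))⁻¹
  have hs : ∀ i, √(w i) ≠ 0 := fun i => (Real.sqrt_pos.2 (hw i)).ne'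
  have hs_sq : ∀ i, √(w i) ^ 2 = w i := fun i => Real.sq_sqrt (hw i).le
  let T := toEuclideanLin (D * B * D)
  let y : (ι → ℝ) → EuclideanSpace ℝ ι := fun z => WithLp.toLp 2 fun i => √(w i) * z i
  have hy : ∀ u, ∃ z, y z = u := fun u =>
    ⟨fun i => (√(w i))⁻¹ * u i, by ext i; simp [y, mul_inv_cancel_left₀ (hs i)]⟩
  have hTy : ∀ z i, T (y z) i = (√(w i))⁻¹ * (B *ᵥ z) i := fun z i => by
    have hDy : D *ᵥ (y z).ofLp = z := by
      funext i
      simp [D, y, mulVec_diagonal, inv_mul_cancel_left₀ (hs i)]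
    change ((D * B * D) *ᵥ (y z).ofLp) i = _
    rw [← mulVec_mulVec, ← mulVec_mulVec, hDy, mulVec_diagonal]
  have hT : T.IsSymmetric := by
    rw [isSymmetric_toEuclideanLin_iff, IsHermitian, conjTranspose_eq_transpose_of_trivial,
      transpose_mul, transpose_mul, diagonal_transpose, hB.eq, Matrix.mul_assoc]
  have hinner : ∀ z z', ⟪T (y z), y z'⟫_ℝ = z' ⬝ᵥ B *ᵥ z := fun z z' => by
    simp only [PiLp.inner_apply, hTy, dotProduct]
    refine Finset.sum_congr rfl fun i _ => ?_
    have := hs i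
    simp only [y, RCLike.inner_apply, conj_trivial]
    field_simp
  rw [← hinner]
  refine inner_map_self_nonpos_of_orthogonal_fixed hT (fun u => ?_) (fun u => ?_) fun u hu => ?_ <;>
    obtain ⟨z, rfl⟩ := hy u
  · rw [hinner]
    simpa [EuclideanSpace.norm_sq_eq, y, mul_pow, hs_sq] using hle z
  · rw [hinner]
    simpa [EuclideanSpace.norm_sq_eq, hTy, mul_pow, hs_sq, div_eq_inv_mul] using hsq z
  · have hz : ∀ i, (B *ᵥ z) i = w i * z i := fun i => by
      have := congrArg (fun v => √(w i) * v i) hu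
      simpa [hTy, y, mul_inv_cancel_left₀ (hs i), ← mul_assoc, ← sq, hs_sq] using this
    rw [← hu, hT, real_inner_comm, hinner, hx z hz]

theorem dotProduct_mulVec_nonpos_of_bochner (hB : B.IsSymm) (hw : ∀ i, 0 < w i)
    (hc : ∀ i, 0 < c i) (hoff : ∀ i j, i ≠ j → 0 ≤ B i j) (hconn : IsPosConnected B)
    (hBc : ∀ i, (B *ᵥ c) i = w i * c i)
    (hbochner : ∀ x : ι → ℝ, x ⬝ᵥ B *ᵥ x ≤ ∑ i, (B *ᵥ x) i ^ 2 / w i)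
    {x : ι → ℝ} (hx : c ⬝ᵥ B *ᵥ x = 0) : x ⬝ᵥ B *ᵥ x ≤ 0 := by
  refine dotProduct_mulVec_nonpos_of_forall_fixed hB hw
    (dotProduct_mulVec_le_sum_weight_sq hB hc hoff hBc) hbochner fun z hz => ?_
  have hsq : z ⬝ᵥ B *ᵥ z = ∑ i, w i * z i ^ 2 :=
    Finset.sum_congr rfl fun i _ => by rw [hz]; ring
  obtain ⟨t, rfl⟩ := exists_eq_smul_of_sum_weight_sq_eq hB hc hoff hconn hBc hsq
  rw [smul_dotProduct, hx, smul_zero]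

end QuadraticForms

section LinearAlgebra

variable {ι E : Type*} [NormedAddCommGroup E] [InnerProductSpace ℝ E] {p : ι → E} {S : Finset ι}

theorem exists_forall_inner_eq [FiniteDimensional ℝ E] (h : LinearIndepOn ℝ p S) (c : ι → ℝ) :
    ∃ v : E, ∀ i ∈ S, ⟪v, p i⟫_ℝ = c i := by
  obtain ⟨g, hg⟩ := LinearMap.exists_leftInverse_of_injective
    (Finsupp.linearCombination ℝ fun i : (S : Set ι) => p i) (LinearMap.ker_eq_bot.2 h)
  let f : E →ₗ[ℝ] ℝ := Finsupp.linearCombination ℝ (fun i : (S : Set ι) => c i) ∘ₗ g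
  refine ⟨(InnerProductSpace.toDual ℝ E).symm (LinearMap.toContinuousLinearMap f), fun i hi => ?_⟩
  have hgi : g (p i) = Finsupp.single ⟨i, hi⟩ 1 := by
    simpa using LinearMap.congr_fun hg (Finsupp.single ⟨i, hi⟩ 1)
  rw [InnerProductSpace.toDual_symm_apply]
  simp [f, hgi]

theorem inner_eq_zero_of_mem_span {u w : E} (hu : ∀ i ∈ S, ⟪u, p i⟫_ℝ = 0)
    (hw : w ∈ Submodule.span ℝ (p '' S)) : ⟪u, w⟫_ℝ = 0 := by
  obtain ⟨a, rfl⟩ := (Submodule.mem_span_image_finset_iff_exists_fun' ℝ).1 hw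
  rw [inner_sum]
  exact Finset.sum_eq_zero fun i hi => by rw [inner_smul_right, hu i hi, mul_zero]

theorem exists_ne_zero_forall_inner_eq_zero [FiniteDimensional ℝ E] (p : ι → E)
    (h : S.card < finrank ℝ E) : ∃ u : E, u ≠ 0 ∧ ∀ i ∈ S, ⟪u, p i⟫_ℝ = 0 := by
  classical
  have hspan : Submodule.span ℝ (p '' S) ≠ ⊤ := fun htop => by
    have hle := (finrank_span_finset_le_card (R := ℝ) (S.image p)).trans Finset.card_image_le
    rw [Set.finrank, Finset.coe_image, htop, finrank_top] at hle
    exact h.not_ge hle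
  obtain ⟨u, hu, hu0⟩ := Submodule.exists_mem_ne_zero_of_ne_bot
    (mt Submodule.orthogonal_eq_bot_iff.1 hspan)
  exact ⟨u, hu0, fun i hi =>
    (Submodule.mem_orthogonal' _ u).1 hu _ (Submodule.subset_span ⟨i, hi, rfl⟩)⟩

theorem span_image_eq_top_of_card_eq_finrank [FiniteDimensional ℝ E] (h : LinearIndepOn ℝ p S)
    (hc : S.card = finrank ℝ E) : Submodule.span ℝ (p '' S) = ⊤ := by
  rw [Set.image_eq_range]
  exact LinearIndependent.span_eq_top_of_card_eq_finrank' h (by simpa using hc)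

theorem eq_zero_of_forall_inner_eq_zero [FiniteDimensional ℝ E] (h : LinearIndepOn ℝ p S)
    (hc : S.card = finrank ℝ E) {u : E} (hu : ∀ i ∈ S, ⟪u, p i⟫_ℝ = 0) : u = 0 :=
  inner_self_eq_zero.1 <| inner_eq_zero_of_mem_span hu <| by
    rw [span_image_eq_top_of_card_eq_finrank h hc]
    exact Submodule.mem_top

theorem alternatingMap_update_smul_add {κ M : Type*} [DecidableEq κ] [AddCommGroup M] [Module ℝ M]
    (f : M [⋀^κ]→ₗ[ℝ] ℝ) (v : κ → M) (k : κ) (r : ℝ) (x : M) {w : M}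
    (hw : w ∈ Submodule.span ℝ (v '' {k}ᶜ)) :
    f (Function.update v k (r • x + w)) = r * f (Function.update v k x) := by
  have hdep : ¬ LinearIndependent ℝ (Function.update v k w) := fun hli => by
    have himage : Function.update v k w '' {k}ᶜ = v '' {k}ᶜ :=
      Set.image_congr fun i hi => Function.update_of_ne hi _ _
    refine hli.notMem_span_image (s := {k}ᶜ) (x := k) (by simp) ?_
    rwa [himage, Function.update_self]
  rw [f.map_update_add, f.map_update_smul, f.map_linearDependent _ hdep, add_zero, smul_eq_mul]

end LinearAlgebra

section Volume

variable {ι E : Type*} [DecidableEq ι] [NormedAddCommGroup E] [InnerProductSpace ℝ E]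

/-- The `k`-dimensional volume of the parallelepiped spanned by the vectors `p i`, `i ∈ S`, where
`k = S.card`, as the square root of a Gram determinant. -/
noncomputable def parallelepipedVolume (p : ι → E) (S : Finset ι) : ℝ :=
  √(Matrix.gram ℝ fun i : S => p i).det

theorem parallelepipedVolume_pos {p : ι → E} {S : Finset ι} (h : LinearIndepOn ℝ p S) :
    0 < parallelepipedVolume p S :=
  Real.sqrt_pos.2 (Matrix.posDef_gram_of_linearIndependent h).det_pos

theorem parallelepipedVolume_nonneg (p : ι → E) (S : Finset ι) : 0 ≤ parallelepipedVolume p S :=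
  Real.sqrt_nonneg _

theorem continuous_parallelepipedVolume (S : Finset ι) :
    Continuous fun p : ι → E => parallelepipedVolume p S := by
  unfold parallelepipedVolume Matrix.gram
  exact (Continuous.matrix_det (continuous_matrix fun i j => by
    simp only [Matrix.of_apply]; fun_prop)).sqrt

theorem det_gram_update_smul_add {κ : Type*} [Fintype κ] [DecidableEq κ] (v : κ → E) (k : κ) (r : ℝ)
    (x : E) {w : E} (hw : w ∈ Submodule.span ℝ (v '' {k}ᶜ)) :
    (Matrix.gram ℝ (Function.update v k (r • x + w))).det =
      r ^ 2 * (Matrix.gram ℝ (Function.update v k x)).det := by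
  let f (y : κ → E) : E [⋀^κ]→ₗ[ℝ] ℝ :=
    Matrix.detRowAlternating.compLinearMap (LinearMap.pi fun b => innerₗ E (y b))
  have hf_apply : ∀ y z, f y z = (Matrix.of fun a b => ⟪y b, z a⟫_ℝ).det := fun _ _ => rfl
  have hf : ∀ y z, f y z = f z y := fun y z => by
    rw [hf_apply, hf_apply, ← Matrix.det_transpose]
    simp only [Matrix.transpose, Matrix.of_apply, real_inner_comm]
  have hgram : ∀ y, (Matrix.gram ℝ y).det = f y y := fun y => by
    rw [hf_apply, ← Matrix.det_transpose]
    rfl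
  rw [hgram, hgram, alternatingMap_update_smul_add _ _ _ _ _ hw, hf,
    alternatingMap_update_smul_add _ _ _ _ _ hw]
  ring

theorem parallelepipedVolume_insert_of_eq_smul_add {p : ι → E} {S : Finset ι} {j k : ι} (hj : j ∉ S)
    (hk : k ∉ S) (r : ℝ) {w : E} (hw : w ∈ Submodule.span ℝ (p '' S)) (hpk : p k = r • p j + w) :
    parallelepipedVolume p (insert k S) = |r| * parallelepipedVolume p (insert j S) := by
  have hgram : ∀ i ∉ S, (Matrix.gram ℝ fun a : (insert i S : Finset ι) => p a).det =
      (Matrix.gram ℝ (Function.update (fun o : Option S => o.elim 0 (p ·)) none (p i))).det := by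
    intro i hi
    rw [← Matrix.det_submatrix_equiv_self (Finset.subtypeInsertEquivOption hi).symm]
    change (Matrix.gram ℝ _).det = _
    congr 2
    funext o
    cases o <;> simp [Finset.subtypeInsertEquivOption]
  have hw' : w ∈ Submodule.span ℝ ((fun o : Option S => o.elim 0 (p ·)) '' {none}ᶜ) := by
    refine Submodule.span_mono ?_ hw
    rintro _ ⟨i, hi, rfl⟩
    exact ⟨some ⟨i, hi⟩, by simp, rfl⟩
  rw [parallelepipedVolume, parallelepipedVolume, hgram k hk, hgram j hj, hpk,
    det_gram_update_smul_add _ _ _ _ hw', Real.sqrt_mul (sq_nonneg r), Real.sqrt_sq_eq_abs]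

end Volume

section Fan

variable {ι E : Type*} [NormedAddCommGroup E] [InnerProductSpace ℝ E]

/-- `𝒯` is the set of cones of a complete simplicial fan in `E` whose rays are spanned by the
vectors `p i`, a cone being encoded by the set of indices of its rays. The last two fields say that
the star of each cone `S`, taken modulo the span of `S`, covers the quotient space and that the
relative interiors of its cones are disjoint. -/
structure IsSimplicialFan (p : ι → E) (𝒯 : Set (Finset ι)) : Prop where
  empty_mem : ∅ ∈ 𝒯
  mem_of_subset : ∀ {S S'}, S ∈ 𝒯 → S' ⊆ S → S' ∈ 𝒯
  linearIndepOn : ∀ {S}, S ∈ 𝒯 → LinearIndepOn ℝ p (S : Set ι)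
  exists_eq_sum : ∀ {S}, S ∈ 𝒯 → ∀ w : E, ∃ U ∈ 𝒯, S ⊆ U ∧ ∃ l : ι → ℝ,
    (∀ i ∈ U, i ∉ S → 0 ≤ l i) ∧ w = ∑ i ∈ U, l i • p i
  mem_of_sum_eq : ∀ {S U U'} {l l' : ι → ℝ}, U ∈ 𝒯 → U' ∈ 𝒯 → S ⊆ U → S ⊆ U' →
    (∀ i ∈ U, i ∉ S → 0 ≤ l i) → (∀ i ∈ U', i ∉ S → 0 ≤ l' i) →
    ∑ i ∈ U, l i • p i = ∑ i ∈ U', l' i • p i → ∀ i ∈ U, i ∉ S → 0 < l i → i ∈ U'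

open Classical in
/-- A vector whose inner product with `p i` is `c i` for all `i ∈ S`; the zero vector if there is
no such vector. -/
noncomputable def interpolant (p : ι → E) (S : Finset ι) (c : ι → ℝ) : E :=
  if h : ∃ v : E, ∀ i ∈ S, ⟪v, p i⟫_ℝ = c i then h.choose else 0

theorem IsSimplicialFan.inner_interpolant [FiniteDimensional ℝ E] {p : ι → E}
    {𝒯 : Set (Finset ι)} {S : Finset ι} (hF : IsSimplicialFan p 𝒯) (hS : S ∈ 𝒯) (c : ι → ℝ) {i : ι}
    (hi : i ∈ S) : ⟪interpolant p S c, p i⟫_ℝ = c i := by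
  have h := exists_forall_inner_eq (hF.linearIndepOn hS) c
  rw [interpolant, dif_pos h]
  exact h.choose_spec i hi

variable [Fintype ι] [DecidableEq ι]

open Classical in
/-- The intersection number `D_{c₁} ⋯ D_{cₖ} · V(S)` on the toric variety of the fan `𝒯`, where
`D_c = ∑ i, c i • D_i` and `V(S)` is the orbit closure of the cone `S`; equivalently, up to
normalization, a mixed volume of `k`-dimensional faces with normal cone `S`. The recursion replaces
the first divisor by a linearly equivalent one which does not contain `V(S)`. -/
noncomputable def intersectionNumber (p : ι → E) (𝒯 : Set (Finset ι)) :
    List (ι → ℝ) → Finset ι → ℝ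
  | [], S => if S ∈ 𝒯 ∧ S.card = finrank ℝ E then (parallelepipedVolume p S)⁻¹ else 0
  | c :: L, S => if S ∈ 𝒯 then
      ∑ j, (c j - ⟪interpolant p S c, p j⟫_ℝ) * intersectionNumber p 𝒯 L (insert j S) else 0

variable {p : ι → E} {𝒯 : Set (Finset ι)} {L : List (ι → ℝ)} {S : Finset ι}

theorem intersectionNumber_of_notMem (p : ι → E) (L : List (ι → ℝ)) (hS : S ∉ 𝒯) :
    intersectionNumber p 𝒯 L S = 0 := by
  cases L <;> simp [intersectionNumber, hS]

/-- The balancing condition of tropical geometry for the weights `S ↦ D_{c₁} ⋯ D_{cₖ} · V(S)`. -/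
def IsBalanced (p : ι → E) (𝒯 : Set (Finset ι)) (L : List (ι → ℝ)) : Prop :=
  ∀ S ∈ 𝒯, ∀ u : E, (∀ i ∈ S, ⟪u, p i⟫_ℝ = 0) →
    ∑ j, ⟪u, p j⟫_ℝ * intersectionNumber p 𝒯 L (insert j S) = 0

namespace IsSimplicialFan

section

omit [Fintype ι]

theorem exists_inner_pos (hF : IsSimplicialFan p 𝒯) (hS : S ∈ 𝒯) {u : E} (hu0 : u ≠ 0)
    (hu : ∀ i ∈ S, ⟪u, p i⟫_ℝ = 0) : ∃ j ∉ S, insert j S ∈ 𝒯 ∧ 0 < ⟪u, p j⟫_ℝ := by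
  obtain ⟨U, hU, hSU, l, hl, hw⟩ := hF.exists_eq_sum hS u
  have hsum : 0 < ∑ i ∈ U, l i * ⟪u, p i⟫_ℝ := by
    have huu : 0 < ⟪u, ∑ i ∈ U, l i • p i⟫_ℝ := by
      rw [← hw]
      exact real_inner_self_pos.2 hu0
    simpa only [inner_sum, inner_smul_right] using huu
  obtain ⟨i, hi, hpos⟩ := Finset.exists_lt_of_sum_lt (f := fun _ => (0 : ℝ)) (by simpa using hsum)
  have hiS : i ∉ S := fun h => by simp [hu i h] at hpos
  exact ⟨i, hiS, hF.mem_of_subset hU (Finset.insert_subset hi hSU),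
    pos_of_mul_pos_right hpos (hl i hi hiS)⟩

variable [FiniteDimensional ℝ E]

theorem exists_insert_mem (hF : IsSimplicialFan p 𝒯) (hS : S ∈ 𝒯) (h : S.card < finrank ℝ E) :
    ∃ j ∉ S, insert j S ∈ 𝒯 := by
  obtain ⟨u, hu0, hu⟩ := exists_ne_zero_forall_inner_eq_zero p h
  obtain ⟨j, hj, hT, _⟩ := hF.exists_inner_pos hS hu0 hu
  exact ⟨j, hj, hT⟩

theorem exists_eq_smul_add (hF : IsSimplicialFan p 𝒯) (hc : S.card + 1 = finrank ℝ E) {u : E}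
    (hu : ∀ i ∈ S, ⟪u, p i⟫_ℝ = 0) {j : ι} (hj : j ∉ S) (hTj : insert j S ∈ 𝒯)
    (huj : ⟪u, p j⟫_ℝ ≠ 0) (w : E) :
    ∃ a : ι → ℝ, w = (⟪u, w⟫_ℝ / ⟪u, p j⟫_ℝ) • p j + ∑ i ∈ S, a i • p i := by
  have hspan := span_image_eq_top_of_card_eq_finrank (hF.linearIndepOn hTj)
    (by rw [Finset.card_insert_of_notMem hj, hc])
  obtain ⟨a, ha⟩ := (Submodule.mem_span_image_finset_iff_exists_fun' ℝ).1
    (hspan ▸ Submodule.mem_top : w ∈ _)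
  rw [Finset.sum_insert hj] at ha
  have huw : ⟪u, w⟫_ℝ = a j * ⟪u, p j⟫_ℝ := by
    rw [← ha, inner_add_right, inner_smul_right, inner_sum, add_eq_left]
    exact Finset.sum_eq_zero fun i hi => by rw [inner_smul_right, hu i hi, mul_zero]
  exact ⟨a, by rw [huw, mul_div_cancel_right₀ _ huj, ha]⟩

/-- A ridge has only one facet on each side. -/
theorem eq_of_inner_mul_inner_pos (hF : IsSimplicialFan p 𝒯) (hc : S.card + 1 = finrank ℝ E)
    {u : E} (hu : ∀ i ∈ S, ⟪u, p i⟫_ℝ = 0) {j k : ι} (hTj : insert j S ∈ 𝒯) (hTk : insert k S ∈ 𝒯)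
    (hjk : 0 < ⟪u, p j⟫_ℝ * ⟪u, p k⟫_ℝ) : j = k := by
  have huj : ⟪u, p j⟫_ℝ ≠ 0 := left_ne_zero_of_mul hjk.ne'
  have huk : ⟪u, p k⟫_ℝ ≠ 0 := right_ne_zero_of_mul hjk.ne'
  have hj : j ∉ S := fun h => huj (hu j h)
  have hk : k ∉ S := fun h => huk (hu k h)
  obtain ⟨a, ha⟩ := hF.exists_eq_smul_add hc hu hj hTj huj (p k)
  set r := ⟪u, p k⟫_ℝ / ⟪u, p j⟫_ℝ
  have hr : 0 < r := div_pos_iff.2 (by rcases mul_pos_iff.1 hjk with h | h <;> tauto)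
  have hsum : ∑ i ∈ insert j S, (Function.update a j r) i • p i =
      ∑ i ∈ insert k S, (Pi.single k 1 : ι → ℝ) i • p i := by
    have hupdate : ∀ i ∈ S, Function.update a j r i • p i = a i • p i := fun i hi => by
      rw [Function.update_of_ne (ne_of_mem_of_not_mem hi hj)]
    have hsingle : ∀ i ∈ S, (Pi.single k 1 : ι → ℝ) i • p i = 0 := fun i hi => by
      rw [Pi.single_eq_of_ne (ne_of_mem_of_not_mem hi hk), zero_smul]
    rw [Finset.sum_insert hj, Finset.sum_insert hk, Function.update_self, Pi.single_eq_same,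
      one_smul, Finset.sum_congr rfl hupdate, Finset.sum_eq_zero hsingle, add_zero, ha]
  have hmem := hF.mem_of_sum_eq hTj hTk (Finset.subset_insert _ _) (Finset.subset_insert _ _)
    (fun i hi hiS => by simp_all [hr.le])
    (fun i hi hiS => by simp_all) hsum j (Finset.mem_insert_self _ _) hj (by simpa using hr)
  simpa [hj] using hmem

end

variable [FiniteDimensional ℝ E]

theorem intersectionNumber_of_card_ne (hF : IsSimplicialFan p 𝒯)
    (h : S.card + L.length ≠ finrank ℝ E) : intersectionNumber p 𝒯 L S = 0 := by
  induction L generalizing S with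
  | nil => exact if_neg fun hS => h hS.2
  | cons c L ih =>
    by_cases hS : S ∈ 𝒯
    · rw [intersectionNumber, if_pos hS]
      refine Finset.sum_eq_zero fun j _ => ?_
      by_cases hj : j ∈ S
      · rw [hF.inner_interpolant hS c hj, sub_self, zero_mul]
      · rw [ih, mul_zero]
        rw [Finset.card_insert_of_notMem hj, add_assoc, add_comm 1]
        exact h
    · exact intersectionNumber_of_notMem _ _ hS

theorem intersectionNumber_nil_insert (hF : IsSimplicialFan p 𝒯) (hc : S.card + 1 = finrank ℝ E)
    {u : E} (hu : ∀ i ∈ S, ⟪u, p i⟫_ℝ = 0) {j k : ι} (hj : j ∉ S) (hk : k ∉ S)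
    (hTj : insert j S ∈ 𝒯) (hTk : insert k S ∈ 𝒯) (huj : ⟪u, p j⟫_ℝ ≠ 0) :
    |⟪u, p k⟫_ℝ| * intersectionNumber p 𝒯 [] (insert k S) =
      |⟪u, p j⟫_ℝ| * intersectionNumber p 𝒯 [] (insert j S) := by
  obtain ⟨a, ha⟩ := hF.exists_eq_smul_add hc hu hj hTj huj (p k)
  have hspan : ∑ i ∈ S, a i • p i ∈ Submodule.span ℝ (p '' S) := Submodule.sum_mem _ fun i hi =>
    Submodule.smul_mem _ _ (Submodule.subset_span (Set.mem_image_of_mem p hi))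
  have hvol := parallelepipedVolume_insert_of_eq_smul_add hj hk _ hspan ha
  have hvolk := parallelepipedVolume_pos (hF.linearIndepOn hTk)
  have hvolj := parallelepipedVolume_pos (hF.linearIndepOn hTj)
  simp only [intersectionNumber, hTj, hTk, Finset.card_insert_of_notMem hj,
    Finset.card_insert_of_notMem hk, hc, and_self, if_true]
  rw [abs_div] at hvol
  have habs : |⟪u, p j⟫_ℝ| ≠ 0 := abs_ne_zero.2 huj
  field_simp [habs] at hvol ⊢
  linarith

theorem isBalanced_nil (hF : IsSimplicialFan p 𝒯) : IsBalanced p 𝒯 [] := by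
  intro S hS u hu
  rcases eq_or_ne u 0 with rfl | hu0
  · simp
  by_cases hc : S.card + 1 = finrank ℝ E
  swap
  · refine Finset.sum_eq_zero fun j _ => ?_
    by_cases hj : j ∈ S
    · rw [hu j hj, zero_mul]
    · rw [hF.intersectionNumber_of_card_ne, mul_zero]
      rwa [Finset.card_insert_of_notMem hj]
  obtain ⟨j, hj, hTj, huj⟩ := hF.exists_inner_pos hS hu0 hu
  obtain ⟨k, hk, hTk, huk⟩ := hF.exists_inner_pos hS (neg_ne_zero.2 hu0) fun i hi => by
    rw [inner_neg_left, hu i hi, neg_zero]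
  rw [inner_neg_left, neg_pos] at huk
  have hjk : j ≠ k := by rintro rfl; exact huj.not_gt huk
  rw [Finset.sum_eq_add_of_mem j k (Finset.mem_univ _) (Finset.mem_univ _) hjk]
  · have hfacets := hF.intersectionNumber_nil_insert hc hu hj hk hTj hTk huj.ne'
    rw [abs_of_neg huk, abs_of_pos huj] at hfacets
    linarith
  · rintro i - ⟨hij, hik⟩
    by_contra hne
    have hTi : insert i S ∈ 𝒯 := by
      by_contra hTi
      exact hne (by rw [intersectionNumber_of_notMem _ _ hTi, mul_zero])
    rcases lt_or_gt_of_ne (left_ne_zero_of_mul hne) with hi | hi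
    · exact hik (hF.eq_of_inner_mul_inner_pos hc hu hTi hTk (mul_pos_of_neg_of_neg hi huk))
    · exact hij (hF.eq_of_inner_mul_inner_pos hc hu hTi hTj (mul_pos hi huj))

theorem intersectionNumber_cons_of_isBalanced (hF : IsSimplicialFan p 𝒯) (hL : IsBalanced p 𝒯 L)
    (hS : S ∈ 𝒯) (c : ι → ℝ) {v : E} (hv : ∀ i ∈ S, ⟪v, p i⟫_ℝ = c i) :
    intersectionNumber p 𝒯 (c :: L) S =
      ∑ j, (c j - ⟪v, p j⟫_ℝ) * intersectionNumber p 𝒯 L (insert j S) := by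
  have hbal := hL S hS (interpolant p S c - v) fun i hi => by
    rw [inner_sub_left, hF.inner_interpolant hS c hi, hv i hi, sub_self]
  rw [intersectionNumber, if_pos hS, ← sub_eq_zero, ← Finset.sum_sub_distrib, ← neg_eq_zero,
    ← Finset.sum_neg_distrib, ← hbal]
  refine Finset.sum_congr rfl fun j _ => ?_
  rw [inner_sub_left]
  ring

end IsSimplicialFan

/-- The vector of the dual basis of the cone spanned by `S` and `j` which belongs to `j`. -/
noncomputable def dualVector (p : ι → E) (S : Finset ι) (j : ι) : E :=
  interpolant p (insert j S) (Pi.single j 1)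

namespace IsSimplicialFan

variable [FiniteDimensional ℝ E]

omit [Fintype ι] in
theorem inner_dualVector_self (hF : IsSimplicialFan p 𝒯) {j : ι} (hT : insert j S ∈ 𝒯) :
    ⟪dualVector p S j, p j⟫_ℝ = 1 := by
  rw [dualVector, hF.inner_interpolant hT _ (Finset.mem_insert_self _ _), Pi.single_eq_same]

omit [Fintype ι] in
theorem inner_dualVector_of_mem (hF : IsSimplicialFan p 𝒯) {j : ι} (hT : insert j S ∈ 𝒯)
    (hj : j ∉ S) {i : ι} (hi : i ∈ S) : ⟪dualVector p S j, p i⟫_ℝ = 0 := by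
  rw [dualVector, hF.inner_interpolant hT _ (Finset.mem_insert_of_mem hi),
    Pi.single_eq_of_ne (ne_of_mem_of_not_mem hi hj)]

omit [Fintype ι] in
theorem inner_add_smul_dualVector (hF : IsSimplicialFan p 𝒯) {j : ι} (hT : insert j S ∈ 𝒯)
    (hj : j ∉ S) {c : ι → ℝ} {v : E} (hv : ∀ i ∈ S, ⟪v, p i⟫_ℝ = c i) :
    ∀ i ∈ insert j S, ⟪v + (c j - ⟪v, p j⟫_ℝ) • dualVector p S j, p i⟫_ℝ = c i := by
  intro i hi
  rw [inner_add_left, real_inner_smul_left]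
  rcases Finset.mem_insert.1 hi with rfl | hi
  · rw [hF.inner_dualVector_self hT]
    ring
  · rw [hF.inner_dualVector_of_mem hT hj hi, hv i hi, mul_zero, add_zero]

theorem intersectionNumber_cons_insert (hF : IsSimplicialFan p 𝒯) (hL : IsBalanced p 𝒯 L)
    (c : ι → ℝ) {v : E} (hv : ∀ i ∈ S, ⟪v, p i⟫_ℝ = c i) {j : ι} (hj : j ∉ S) :
    intersectionNumber p 𝒯 (c :: L) (insert j S) =
      ∑ k, ((c k - ⟪v, p k⟫_ℝ) - (c j - ⟪v, p j⟫_ℝ) * ⟪dualVector p S j, p k⟫_ℝ) *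
        intersectionNumber p 𝒯 L (insert j (insert k S)) := by
  by_cases hT : insert j S ∈ 𝒯
  · rw [hF.intersectionNumber_cons_of_isBalanced hL hT c (hF.inner_add_smul_dualVector hT hj hv)]
    refine Finset.sum_congr rfl fun k _ => ?_
    rw [inner_add_left, real_inner_smul_left, Finset.insert_comm]
    ring
  · rw [intersectionNumber_of_notMem _ _ hT, Finset.sum_eq_zero fun k _ => ?_]
    rw [intersectionNumber_of_notMem, mul_zero]
    exact fun h => hT (hF.mem_of_subset h
      (Finset.insert_subset_insert _ (Finset.subset_insert _ _)))

theorem isBalanced (hF : IsSimplicialFan p 𝒯) (L : List (ι → ℝ)) : IsBalanced p 𝒯 L := by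
  induction L with
  | nil => exact hF.isBalanced_nil
  | cons c L ih =>
    intro S hS u hu
    obtain ⟨v, hv⟩ := exists_forall_inner_eq (hF.linearIndepOn hS) c
    let N : ι → ι → ℝ := fun j k => intersectionNumber p 𝒯 L (insert j (insert k S))
    have hNcomm : ∀ j k, N j k = N k j := fun j k => by
      simp only [N]
      rw [Finset.insert_comm]
    have hN : ∀ k, insert k S ∉ 𝒯 → ∀ j, N j k = 0 := fun k hk j =>
      intersectionNumber_of_notMem p L fun h => hk (hF.mem_of_subset h (Finset.subset_insert _ _))
    have hexpand : ∀ j, ⟪u, p j⟫_ℝ * intersectionNumber p 𝒯 (c :: L) (insert j S) =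
        ∑ k, ⟪u, p j⟫_ℝ * (c k - ⟪v, p k⟫_ℝ) * N j k -
          ∑ k, ⟪u, p j⟫_ℝ * (c j - ⟪v, p j⟫_ℝ) * ⟪dualVector p S j, p k⟫_ℝ * N j k := fun j => by
      by_cases hj : j ∈ S
      · simp only [hu j hj, zero_mul, Finset.sum_const_zero, sub_zero]
      · rw [hF.intersectionNumber_cons_insert ih c hv hj, Finset.mul_sum, ← Finset.sum_sub_distrib]
        exact Finset.sum_congr rfl fun k _ => by ring
    rw [Finset.sum_congr rfl fun j _ => hexpand j, Finset.sum_sub_distrib, Finset.sum_comm,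
      ← Finset.sum_sub_distrib]
    refine Finset.sum_eq_zero fun k _ => ?_
    by_cases hk : k ∈ S
    · simp only [hv k hk, sub_self, mul_zero, zero_mul, Finset.sum_const_zero]
    by_cases hT : insert k S ∈ 𝒯
    · have hbal := ih _ hT _ (hF.inner_add_smul_dualVector hT hk (c := 0) hu)
      rw [← Finset.sum_sub_distrib, ← mul_zero (c k - ⟪v, p k⟫_ℝ), ← hbal, Finset.mul_sum]
      refine Finset.sum_congr rfl fun j _ => ?_
      rw [hNcomm k j, inner_add_left, real_inner_smul_left, Pi.zero_apply]
      ring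
    · simp only [hNcomm k, hN k hT, mul_zero, Finset.sum_const_zero, sub_self]

theorem intersectionNumber_cons (hF : IsSimplicialFan p 𝒯) (L : List (ι → ℝ)) (hS : S ∈ 𝒯)
    (c : ι → ℝ) {v : E} (hv : ∀ i ∈ S, ⟪v, p i⟫_ℝ = c i) :
    intersectionNumber p 𝒯 (c :: L) S =
      ∑ j, (c j - ⟪v, p j⟫_ℝ) * intersectionNumber p 𝒯 L (insert j S) :=
  hF.intersectionNumber_cons_of_isBalanced (hF.isBalanced L) hS c hv

theorem intersectionNumber_add_cons (hF : IsSimplicialFan p 𝒯) (L : List (ι → ℝ)) (S : Finset ι)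
    (a b : ι → ℝ) : intersectionNumber p 𝒯 ((a + b) :: L) S =
      intersectionNumber p 𝒯 (a :: L) S + intersectionNumber p 𝒯 (b :: L) S := by
  by_cases hS : S ∈ 𝒯
  swap
  · simp [intersectionNumber_of_notMem _ _ hS]
  have ha := fun i => hF.inner_interpolant hS a (i := i)
  have hb := fun i => hF.inner_interpolant hS b (i := i)
  rw [hF.intersectionNumber_cons L hS a ha, hF.intersectionNumber_cons L hS b hb,
    ← Finset.sum_add_distrib, hF.intersectionNumber_cons L hS (a + b)
      (v := interpolant p S a + interpolant p S b)
      fun i hi => by rw [inner_add_left, ha i hi, hb i hi, Pi.add_apply]]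
  refine Finset.sum_congr rfl fun j _ => ?_
  rw [inner_add_left, Pi.add_apply]
  ring

theorem intersectionNumber_smul_cons (hF : IsSimplicialFan p 𝒯) (L : List (ι → ℝ)) (S : Finset ι)
    (t : ℝ) (a : ι → ℝ) : intersectionNumber p 𝒯 ((t • a) :: L) S =
      t * intersectionNumber p 𝒯 (a :: L) S := by
  by_cases hS : S ∈ 𝒯
  swap
  · simp [intersectionNumber_of_notMem _ _ hS]
  have ha := fun i => hF.inner_interpolant hS a (i := i)
  rw [hF.intersectionNumber_cons L hS a ha, Finset.mul_sum, hF.intersectionNumber_cons L hS (t • a)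
    (v := t • interpolant p S a) fun i hi => by
      rw [real_inner_smul_left, ha i hi, Pi.smul_apply, smul_eq_mul]]
  refine Finset.sum_congr rfl fun j _ => ?_
  rw [real_inner_smul_left, Pi.smul_apply, smul_eq_mul]
  ring

theorem intersectionNumber_inner_cons (hF : IsSimplicialFan p 𝒯) (L : List (ι → ℝ)) (S : Finset ι)
    (v : E) : intersectionNumber p 𝒯 ((fun i => ⟪v, p i⟫_ℝ) :: L) S = 0 := by
  by_cases hS : S ∈ 𝒯
  · rw [hF.intersectionNumber_cons L hS _ fun _ _ => rfl]
    simp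
  · exact intersectionNumber_of_notMem _ _ hS

theorem intersectionNumber_single_cons (hF : IsSimplicialFan p 𝒯) (L : List (ι → ℝ)) {j : ι}
    (hj : j ∉ S) :
    intersectionNumber p 𝒯 (Pi.single j 1 :: L) S = intersectionNumber p 𝒯 L (insert j S) := by
  by_cases hS : S ∈ 𝒯
  · rw [hF.intersectionNumber_cons L hS (v := 0) _ fun i hi => by
      rw [inner_zero_left, Pi.single_eq_of_ne (ne_of_mem_of_not_mem hi hj)]]
    simp [Pi.single_apply]
  · rw [intersectionNumber_of_notMem _ _ hS, intersectionNumber_of_notMem _ _ fun h => hS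
      (hF.mem_of_subset h (Finset.subset_insert _ _))]

theorem intersectionNumber_cons_cons (hF : IsSimplicialFan p 𝒯) (L : List (ι → ℝ)) (hS : S ∈ 𝒯)
    {a b : ι → ℝ} {v w : E} (hv : ∀ i ∈ S, ⟪v, p i⟫_ℝ = a i) (hw : ∀ i ∈ S, ⟪w, p i⟫_ℝ = b i) :
    intersectionNumber p 𝒯 (a :: b :: L) S =
      ∑ j, ∑ k, (a j - ⟪v, p j⟫_ℝ) * (b k - ⟪w, p k⟫_ℝ) *
          intersectionNumber p 𝒯 L (insert j (insert k S)) -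
        ∑ j, ∑ k, (a j - ⟪v, p j⟫_ℝ) * (b j - ⟪w, p j⟫_ℝ) * ⟪dualVector p S j, p k⟫_ℝ *
          intersectionNumber p 𝒯 L (insert j (insert k S)) := by
  rw [hF.intersectionNumber_cons _ hS a hv, ← Finset.sum_sub_distrib]
  refine Finset.sum_congr rfl fun j _ => ?_
  by_cases hj : j ∈ S
  · simp [hv j hj]
  · rw [hF.intersectionNumber_cons_insert (hF.isBalanced L) b hw hj, Finset.mul_sum,
      ← Finset.sum_sub_distrib]
    exact Finset.sum_congr rfl fun k _ => by ring

theorem intersectionNumber_swap (hF : IsSimplicialFan p 𝒯) (L : List (ι → ℝ)) (S : Finset ι)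
    (a b : ι → ℝ) :
    intersectionNumber p 𝒯 (a :: b :: L) S = intersectionNumber p 𝒯 (b :: a :: L) S := by
  by_cases hS : S ∈ 𝒯
  swap
  · simp [intersectionNumber_of_notMem _ _ hS]
  have ha := fun i => hF.inner_interpolant hS a (i := i)
  have hb := fun i => hF.inner_interpolant hS b (i := i)
  rw [hF.intersectionNumber_cons_cons L hS ha hb, hF.intersectionNumber_cons_cons L hS hb ha,
    Finset.sum_comm]
  congr 1 <;> refine Finset.sum_congr rfl fun j _ => Finset.sum_congr rfl fun k _ => ?_
  · rw [Finset.insert_comm, mul_comm (a k - _)]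
  · rw [mul_comm (a j - _)]

theorem intersectionNumber_perm (hF : IsSimplicialFan p 𝒯) {L L' : List (ι → ℝ)} (h : L.Perm L')
    (S : Finset ι) : intersectionNumber p 𝒯 L S = intersectionNumber p 𝒯 L' S := by
  induction h generalizing S with
  | nil => rfl
  | cons c _ ih => simp only [intersectionNumber, ih]
  | swap a b L => exact hF.intersectionNumber_swap _ _ _ _
  | trans _ _ ih ih' => rw [ih, ih']

/-- The symmetric bilinear form `(a, b) ↦ D_a · D_b · D_{c₁} ⋯ D_{cₖ} · V(S)`. -/
noncomputable def intersectionForm (hF : IsSimplicialFan p 𝒯) (L : List (ι → ℝ)) (S : Finset ι) :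
    LinearMap.BilinForm ℝ (ι → ℝ) :=
  LinearMap.mk₂ ℝ (fun a b => intersectionNumber p 𝒯 (a :: b :: L) S)
    (fun _ _ _ => hF.intersectionNumber_add_cons _ _ _ _)
    (fun _ _ _ => hF.intersectionNumber_smul_cons _ _ _ _)
    (fun a b b' => by
      rw [hF.intersectionNumber_swap, hF.intersectionNumber_add_cons,
        hF.intersectionNumber_swap _ _ b, hF.intersectionNumber_swap _ _ b'])
    (fun t a b => by
      rw [hF.intersectionNumber_swap, hF.intersectionNumber_smul_cons,
        hF.intersectionNumber_swap _ _ b, smul_eq_mul])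

theorem intersectionForm_apply (hF : IsSimplicialFan p 𝒯) (L : List (ι → ℝ)) (S : Finset ι)
    (a b : ι → ℝ) : hF.intersectionForm L S a b = intersectionNumber p 𝒯 (a :: b :: L) S := rfl

theorem intersectionForm_isSymm (hF : IsSimplicialFan p 𝒯) (L : List (ι → ℝ)) (S : Finset ι) :
    (hF.intersectionForm L S).IsSymm :=
  ⟨fun _ _ => hF.intersectionNumber_swap _ _ _ _⟩

end IsSimplicialFan

end Fan

section NormalFan

theorem exists_pos_forall_pos_add_mul {ι : Type*} [Finite ι] (f g : ι → ℝ) :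
    ∃ δ : ℝ, 0 < δ ∧ ∀ i, 0 < f i → 0 < f i + δ * g i := by
  have hsmall : ∀ᶠ δ : ℝ in 𝓝[>] 0, ∀ i, 0 < f i → 0 < f i + δ * g i := by
    refine eventually_all.2 fun i => ?_
    by_cases hi : 0 < f i
    · have hlim : Tendsto (fun δ : ℝ => f i + δ * g i) (𝓝[>] 0) (𝓝 (f i + 0 * g i)) :=
        Continuous.tendsto' (by fun_prop) _ _ rfl |>.mono_left nhdsWithin_le_nhds
      rw [zero_mul, add_zero] at hlim
      exact (hlim.eventually (lt_mem_nhds hi)).mono fun δ h _ => h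
    · exact Eventually.of_forall fun δ h => absurd h hi
  obtain ⟨δ, h, hδ⟩ := (hsmall.and self_mem_nhdsWithin).exists
  exact ⟨δ, hδ, h⟩

variable {ι E : Type*} [NormedAddCommGroup E] [InnerProductSpace ℝ E] {p : ι → E} {c : ι → ℝ}
  {S U : Finset ι}

/-- The normal fan of the polyhedron `{v | ∀ i, ⟪v, p i⟫ ≤ c i}`, a cone being encoded by the set
of inequalities which are tight on the relative interior of the corresponding face. -/
def normalFan (p : ι → E) (c : ι → ℝ) : Set (Finset ι) :=
  {S | ∃ v : E, ∀ i, ⟪v, p i⟫_ℝ ≤ c i ∧ (⟪v, p i⟫_ℝ = c i ↔ i ∈ S)}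

theorem exists_pos_mul_norm_le_sum_max [Fintype ι] [FiniteDimensional ℝ E]
    (hp : ∀ u : E, u ≠ 0 → ∃ i, 0 < ⟪u, p i⟫_ℝ) :
    ∃ m : ℝ, 0 < m ∧ ∀ v : E, m * ‖v‖ ≤ ∑ i, max ⟪v, p i⟫_ℝ 0 := by
  rcases subsingleton_or_nontrivial E with hE | hE
  · refine ⟨1, one_pos, fun v => ?_⟩
    rw [Subsingleton.elim v 0, norm_zero, mul_zero]
    exact Finset.sum_nonneg fun i _ => le_max_right _ _
  have hcont : Continuous fun v : E => ∑ i, max ⟪v, p i⟫_ℝ 0 := by fun_prop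
  obtain ⟨u, hu, hmin⟩ := (isCompact_sphere (0 : E) 1).exists_isMinOn
    (NormedSpace.sphere_nonempty.2 zero_le_one) hcont.continuousOn
  have hu0 : u ≠ 0 := ne_zero_of_mem_unit_sphere (⟨u, hu⟩ : Metric.sphere (0 : E) 1)
  obtain ⟨i, hi⟩ := hp u hu0
  refine ⟨∑ i, max ⟪u, p i⟫_ℝ 0, Finset.sum_pos' (fun i _ => le_max_right _ _)
    ⟨i, Finset.mem_univ _, lt_max_of_lt_left hi⟩, fun v => ?_⟩
  rcases eq_or_ne v 0 with rfl | hv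
  · simp
  have hnorm : 0 < ‖v‖ := norm_pos_iff.2 hv
  have hmem : ‖v‖⁻¹ • v ∈ Metric.sphere (0 : E) 1 := by simp [norm_smul, hnorm.ne']
  calc (∑ i, max ⟪u, p i⟫_ℝ 0) * ‖v‖ ≤ (∑ i, max ⟪‖v‖⁻¹ • v, p i⟫_ℝ 0) * ‖v‖ := by
        refine mul_le_mul_of_nonneg_right ?_ hnorm.le
        exact isMinOn_iff.1 hmin _ hmem
    _ = ∑ i, max ⟪v, p i⟫_ℝ 0 := by
        rw [Finset.sum_mul]
        refine Finset.sum_congr rfl fun i _ => ?_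
        rw [real_inner_smul_left, max_mul_of_nonneg _ _ hnorm.le, zero_mul, mul_comm, ← mul_assoc,
          mul_inv_cancel₀ hnorm.ne', one_mul]

theorem isCompact_setOf_forall_inner_le [Finite ι] [FiniteDimensional ℝ E]
    (hp : ∀ u : E, u ≠ 0 → ∃ i, 0 < ⟪u, p i⟫_ℝ) (c : ι → ℝ) :
    IsCompact {v : E | ∀ i, ⟪v, p i⟫_ℝ ≤ c i} := by
  cases nonempty_fintype ι
  obtain ⟨m, hm, hbound⟩ := exists_pos_mul_norm_le_sum_max hp
  refine (isCompact_closedBall 0 ((∑ i, max (c i) 0) / m)).of_isClosed_subset ?_ fun v hv => ?_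
  · rw [Set.ofPred_forall]
    exact isClosed_iInter fun i => isClosed_le (by fun_prop) continuous_const
  · rw [mem_closedBall_zero_iff, le_div_iff₀ hm, mul_comm]
    exact (hbound v).trans (Finset.sum_le_sum fun i _ => max_le_max_right 0 (hv i))

theorem exists_isMaxOn_face [Finite ι] [FiniteDimensional ℝ E]
    (hp : ∀ u : E, u ≠ 0 → ∃ i, 0 < ⟪u, p i⟫_ℝ) (hS : S ∈ normalFan p c) (w : E) :
    ∃ v ∈ {v : E | (∀ i, ⟪v, p i⟫_ℝ ≤ c i) ∧ ∀ i ∈ S, ⟪v, p i⟫_ℝ = c i},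
      IsMaxOn (fun v => ⟪w, v⟫_ℝ)
        {v : E | (∀ i, ⟪v, p i⟫_ℝ ≤ c i) ∧ ∀ i ∈ S, ⟪v, p i⟫_ℝ = c i} v := by
  have hclosed : IsClosed {v : E | ∀ i ∈ S, ⟪v, p i⟫_ℝ = c i} := by
    simp only [Set.ofPred_forall]
    exact isClosed_biInter fun i _ => isClosed_eq (by fun_prop) continuous_const
  obtain ⟨v, hv⟩ := hS
  exact ((isCompact_setOf_forall_inner_le hp c).inter_right hclosed).exists_isMaxOn
    ⟨v, fun i => (hv i).1, fun i hi => (hv i).2.2 hi⟩ (by fun_prop)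

theorem exists_mem_normalFan_forall_inner_nonpos [Finite ι] [FiniteDimensional ℝ E]
    (hp : ∀ u : E, u ≠ 0 → ∃ i, 0 < ⟪u, p i⟫_ℝ) (hS : S ∈ normalFan p c) (w : E) :
    ∃ U ∈ normalFan p c, S ⊆ U ∧ ∀ z : E, (∀ i ∈ S, ⟪z, p i⟫_ℝ = 0) →
      (∀ i ∈ U, ⟪z, p i⟫_ℝ ≤ 0) → ⟪w, z⟫_ℝ ≤ 0 := by
  classical
  cases nonempty_fintype ι
  obtain ⟨v, ⟨hvle, hvS⟩, hmax⟩ := exists_isMaxOn_face hp hS w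
  refine ⟨Finset.univ.filter fun i => ⟪v, p i⟫_ℝ = c i, ⟨v, fun i => ⟨hvle i, by simp⟩⟩,
    fun i hi => by simp [hvS i hi], fun z hzS hzU => ?_⟩
  obtain ⟨δ, hδ, hpos⟩ := exists_pos_forall_pos_add_mul (fun i => c i - ⟪v, p i⟫_ℝ)
    (fun i => -⟪z, p i⟫_ℝ)
  have hmem : v + δ • z ∈ {v : E | (∀ i, ⟪v, p i⟫_ℝ ≤ c i) ∧ ∀ i ∈ S, ⟪v, p i⟫_ℝ = c i} := by
    refine ⟨fun i => ?_, fun i hi => ?_⟩ <;> rw [inner_add_left, real_inner_smul_left]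
    · rcases (hvle i).eq_or_lt with hi | hi
      · have hzi := mul_nonpos_of_nonneg_of_nonpos hδ.le (hzU i (by simpa using hi))
        linarith
      · have hlt := hpos i (sub_pos.2 hi)
        linarith
    · rw [hvS i hi, hzS i hi, mul_zero, add_zero]
  have hle : ⟪w, v + δ • z⟫_ℝ ≤ ⟪w, v⟫_ℝ := hmax hmem
  rw [inner_add_right, inner_smul_right, add_le_iff_nonpos_right] at hle
  exact nonpos_of_mul_nonpos_right hle hδ

theorem exists_eq_sum_of_forall_inner_nonpos [FiniteDimensional ℝ E] (hSU : S ⊆ U)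
    (hU : LinearIndepOn ℝ p (U : Set ι)) {w : E}
    (hw : ∀ z : E, (∀ i ∈ S, ⟪z, p i⟫_ℝ = 0) → (∀ i ∈ U, ⟪z, p i⟫_ℝ ≤ 0) → ⟪w, z⟫_ℝ ≤ 0) :
    ∃ l : ι → ℝ, (∀ i ∈ U, i ∉ S → 0 ≤ l i) ∧ w = ∑ i ∈ U, l i • p i := by
  classical
  have hspan : w ∈ Submodule.span ℝ (p '' U) := by
    obtain ⟨a, ha, u, hu, rfl⟩ := Submodule.exists_add_mem_mem_orthogonal
      (K := Submodule.span ℝ (p '' U)) w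
    have hup : ∀ i ∈ U, ⟪u, p i⟫_ℝ = 0 := fun i hi =>
      (Submodule.mem_orthogonal' _ u).1 hu _ (Submodule.subset_span ⟨i, hi, rfl⟩)
    have hle := hw u (fun i hi => hup i (hSU hi)) fun i hi => (hup i hi).le
    rw [inner_add_left, Submodule.inner_right_of_mem_orthogonal ha hu, zero_add] at hle
    rwa [real_inner_self_nonpos.1 hle, add_zero]
  obtain ⟨l, rfl⟩ := (Submodule.mem_span_image_finset_iff_exists_fun' ℝ).1 hspan
  refine ⟨l, fun i hi hiS => ?_, rfl⟩
  obtain ⟨e, he⟩ := exists_forall_inner_eq hU (Pi.single i (-1))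
  have hle := hw e
    (fun k hk => by rw [he k (hSU hk), Pi.single_eq_of_ne (ne_of_mem_of_not_mem hk hiS)])
    (fun k hk => by
      rw [he k hk]
      exact Pi.single_nonpos.2 (by norm_num) k)
  have hterm : ∀ k ∈ U, ⟪l k • p k, e⟫_ℝ = l k * (Pi.single i (-1) : ι → ℝ) k := fun k hk => by
    rw [real_inner_smul_left, real_inner_comm, he k hk]
  rw [sum_inner, Finset.sum_congr rfl hterm] at hle
  simpa [Pi.single_apply, hi] using hle

theorem mem_normalFan_of_subset [Finite ι] [FiniteDimensional ℝ E] {S' : Finset ι}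
    (hS : S ∈ normalFan p c) (hind : LinearIndepOn ℝ p (S : Set ι)) (hS' : S' ⊆ S) :
    S' ∈ normalFan p c := by
  classical
  obtain ⟨w, hw⟩ := exists_forall_inner_eq hind fun i => if i ∈ S' then 0 else 1
  obtain ⟨v, hv⟩ := hS
  obtain ⟨δ, hδ, hpos⟩ := exists_pos_forall_pos_add_mul (fun i => c i - ⟪v, p i⟫_ℝ)
    (fun i => ⟪w, p i⟫_ℝ)
  refine ⟨v - δ • w, fun i => ?_⟩
  rw [inner_sub_left, real_inner_smul_left]
  by_cases hi : i ∈ S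
  · rw [(hv i).2.2 hi, hw i hi]
    by_cases hi' : i ∈ S' <;> simp [hi', hδ.le, hδ.ne']
  · have hlt := hpos i (sub_pos.2 ((hv i).1.lt_of_ne fun h => hi ((hv i).2.1 h)))
    have hi' : i ∉ S' := fun h => hi (hS' h)
    simp only [hi', iff_false]
    exact ⟨by linarith, by linarith⟩

theorem mem_of_mem_normalFan_of_sum_eq {U' : Finset ι} {l l' : ι → ℝ} (hU : U ∈ normalFan p c)
    (hU' : U' ∈ normalFan p c) (hSU : S ⊆ U) (hSU' : S ⊆ U') (hl : ∀ i ∈ U, i ∉ S → 0 ≤ l i)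
    (hl' : ∀ i ∈ U', i ∉ S → 0 ≤ l' i) (heq : ∑ i ∈ U, l i • p i = ∑ i ∈ U', l' i • p i) {i : ι}
    (hi : i ∈ U) (hli : 0 < l i) : i ∈ U' := by
  obtain ⟨v, hv⟩ := hU
  obtain ⟨v', hv'⟩ := hU'
  have hsum : ∑ k ∈ U, l k * (⟪v, p k⟫_ℝ - ⟪v', p k⟫_ℝ) =
      ∑ k ∈ U', l' k * (⟪v, p k⟫_ℝ - ⟪v', p k⟫_ℝ) := by
    simpa only [inner_sum, inner_smul_right, inner_sub_left] using congrArg (⟪v - v', ·⟫_ℝ) heq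
  have hnonneg : ∀ k ∈ U, 0 ≤ l k * (⟪v, p k⟫_ℝ - ⟪v', p k⟫_ℝ) := fun k hk => by
    rw [(hv k).2.2 hk]
    by_cases hkS : k ∈ S
    · rw [(hv' k).2.2 (hSU' hkS), sub_self, mul_zero]
    · exact mul_nonneg (hl k hk hkS) (sub_nonneg.2 (hv' k).1)
  have hnonpos : ∑ k ∈ U', l' k * (⟪v, p k⟫_ℝ - ⟪v', p k⟫_ℝ) ≤ 0 := by
    refine Finset.sum_nonpos fun k hk => ?_
    rw [(hv' k).2.2 hk]
    by_cases hkS : k ∈ S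
    · rw [(hv k).2.2 (hSU hkS), sub_self, mul_zero]
    · exact mul_nonpos_of_nonneg_of_nonpos (hl' k hk hkS) (sub_nonpos.2 (hv k).1)
  have hzero := (Finset.sum_eq_zero_iff_of_nonneg hnonneg).1
    (le_antisymm (hsum.trans_le hnonpos) (Finset.sum_nonneg hnonneg)) i hi
  rw [mul_eq_zero, sub_eq_zero, (hv i).2.2 hi] at hzero
  exact (hv' i).2.1 (hzero.resolve_left hli.ne').symm

theorem isSimplicialFan_normalFan [Finite ι] [FiniteDimensional ℝ E]
    (hp : ∀ u : E, u ≠ 0 → ∃ i, 0 < ⟪u, p i⟫_ℝ) (h0 : ∅ ∈ normalFan p c)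
    (hind : ∀ S ∈ normalFan p c, LinearIndepOn ℝ p (S : Set ι)) :
    IsSimplicialFan p (normalFan p c) where
  empty_mem := h0
  mem_of_subset hS hS' := mem_normalFan_of_subset hS (hind _ hS) hS'
  linearIndepOn := hind _
  exists_eq_sum hS w := by
    obtain ⟨U, hU, hSU, hopt⟩ := exists_mem_normalFan_forall_inner_nonpos hp hS w
    exact ⟨U, hU, hSU, exists_eq_sum_of_forall_inner_nonpos hSU (hind U hU) hopt⟩
  mem_of_sum_eq hU hU' hSU hSU' hl hl' heq _ hi _ :=
    mem_of_mem_normalFan_of_sum_eq hU hU' hSU hSU' hl hl' heq hi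

end NormalFan

section LinkConnected

variable {ι E : Type*} [NormedAddCommGroup E] [InnerProductSpace ℝ E] {p : ι → E}
  {𝒯 : Set (Finset ι)} {S U : Finset ι}

theorem isPreconnected_diff_zero_of_one_lt_finrank {V : Submodule ℝ E} (hV : 1 < finrank ℝ V) :
    IsPreconnected ((V : Set E) \ {0}) := by
  have hpre := (isConnected_compl_singleton_of_one_lt_rank (one_lt_rank_of_one_lt_finrank hV)
    (0 : V)).isPreconnected.image Subtype.val continuous_subtype_val.continuousOn
  convert hpre using 1
  ext u
  simp [and_comm]

/-- The sum of the cone spanned by the vectors `p i`, `i ∈ U`, and of the linear span of the vectors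
`p i`, `i ∈ U ∩ S`. -/
def coneModulo (p : ι → E) (S U : Finset ι) : Set E :=
  {u | ∃ l : ι → ℝ, (∀ i ∈ U, i ∉ S → 0 ≤ l i) ∧ u = ∑ i ∈ U, l i • p i}

theorem isClosed_coneModulo (S : Finset ι) (hU : LinearIndepOn ℝ p (U : Set ι)) :
    IsClosed (coneModulo p S U) := by
  classical
  have hclosed : IsClosed {l : U → ℝ | ∀ i : U, (i : ι) ∉ S → 0 ≤ l i} := by
    simp only [Set.ofPred_forall]
    exact isClosed_iInter fun i => isClosed_iInter fun _ =>
      isClosed_le continuous_const (continuous_apply i)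
  convert (LinearMap.isClosedEmbedding_of_injective (LinearMap.ker_eq_bot.2
    hU.fintypeLinearCombination_injective)).isClosedMap _ hclosed using 1
  ext u
  constructor
  · rintro ⟨l, hl, rfl⟩
    exact ⟨fun i => l i, fun i hi => hl i i.2 hi,
      (Fintype.linearCombination_apply ..).trans (Finset.sum_coe_sort U fun i => l i • p i)⟩
  · rintro ⟨l, hl, rfl⟩
    refine ⟨fun i => if h : i ∈ U then l ⟨i, h⟩ else 0, fun i hi hiS => ?_, ?_⟩
    · simpa [hi] using hl ⟨i, hi⟩ hiS
    · rw [← Finset.sum_coe_sort U, Fintype.linearCombination_apply]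
      simp

variable [DecidableEq ι]

theorem exists_mem_coneModulo_insert {j : ι} (hj : j ∉ S)
    (hT : LinearIndepOn ℝ p (insert j S : Finset ι)) [FiniteDimensional ℝ E] :
    ∃ u ∈ coneModulo p S (insert j S), u ∈ (Submodule.span ℝ (p '' S))ᗮ ∧ u ≠ 0 := by
  rw [Finset.coe_insert, linearIndepOn_insert (by simpa using hj)] at hT
  obtain ⟨a, ha, u, hu, hsum⟩ := Submodule.exists_add_mem_mem_orthogonal
    (K := Submodule.span ℝ (p '' S)) (p j)
  refine ⟨u, ?_, hu, ?_⟩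
  · obtain ⟨b, rfl⟩ := (Submodule.mem_span_image_finset_iff_exists_fun' ℝ).1 ha
    refine ⟨Function.update (-b) j 1, fun i hi hiS => ?_, ?_⟩
    · have hij : i = j := by simpa [hiS] using hi
      simp [hij]
    · have hupdate : ∀ i ∈ S, Function.update (-b) j 1 i • p i = -(b i • p i) := fun i hi => by
        rw [Function.update_of_ne (ne_of_mem_of_not_mem hi hj), Pi.neg_apply, neg_smul]
      rw [Finset.sum_insert hj, Finset.sum_congr rfl hupdate, Finset.sum_neg_distrib,
        Function.update_self, one_smul, hsum]
      abel
  · rintro rfl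
    rw [add_zero] at hsum
    exact hT.2 (hsum ▸ ha)

omit [DecidableEq ι] in
theorem exists_pos_of_mem_orthogonal (S : Finset ι) {l : ι → ℝ} (hl : ∀ i ∈ U, i ∉ S → 0 ≤ l i)
    {u : E} (hu : u = ∑ i ∈ U, l i • p i) (hu' : u ∈ (Submodule.span ℝ (p '' S))ᗮ) (hu0 : u ≠ 0) :
    ∃ i ∈ U, i ∉ S ∧ 0 < l i := by
  by_contra! hcon
  refine hu0 (Submodule.disjoint_def.1 (Submodule.orthogonal_disjoint _) u ?_ hu')
  rw [hu]
  refine Submodule.sum_mem _ fun i hi => ?_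
  by_cases hiS : i ∈ S
  · exact Submodule.smul_mem _ _ (Submodule.subset_span (Set.mem_image_of_mem p hiS))
  · rw [le_antisymm (hcon i hi hiS) (hl i hi hiS), zero_smul]
    exact zero_mem _

variable [Finite ι] [FiniteDimensional ℝ E]

omit [DecidableEq ι] [Finite ι] in
theorem one_lt_finrank_orthogonal_span_image (hc : S.card + 2 ≤ finrank ℝ E) :
    1 < finrank ℝ (Submodule.span ℝ (p '' S))ᗮ := by
  classical
  have hle := finrank_span_finset_le_card (R := ℝ) (S.image p)
  rw [Finset.coe_image, Set.finrank] at hle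
  have hcard := Finset.card_image_le (s := S) (f := p)
  have hadd := Submodule.finrank_add_finrank_orthogonal (Submodule.span ℝ (p '' (S : Set ι)))
  lia

namespace IsSimplicialFan

theorem exists_mem_coneModulo_inter (hF : IsSimplicialFan p 𝒯) (hS : S ∈ 𝒯)
    (hc : S.card + 2 ≤ finrank ℝ E) (𝒜 : Set (Finset ι)) {i j : ι} (hi : i ∉ S)
    (hTi : insert i S ∈ 𝒯) (h𝒜i : insert i S ∈ 𝒜) (hj : j ∉ S) (hTj : insert j S ∈ 𝒯)
    (h𝒜j : insert j S ∉ 𝒜) :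
    ∃ U ∈ 𝒯, ∃ U' ∈ 𝒯, S ⊆ U ∧ S ⊆ U' ∧ U ∈ 𝒜 ∧ U' ∉ 𝒜 ∧
      ∃ u ∈ (Submodule.span ℝ (p '' S))ᗮ, u ≠ 0 ∧ u ∈ coneModulo p S U ∧ u ∈ coneModulo p S U' := by
  let ℬ (𝒰 : Set (Finset ι)) : Set (Finset ι) := {U | U ∈ 𝒯 ∧ S ⊆ U ∧ U ∈ 𝒰}
  have hclosed : ∀ 𝒰, IsClosed (⋃ U ∈ ℬ 𝒰, coneModulo p S U) := fun 𝒰 =>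
    (Set.toFinite _).isClosed_biUnion fun U hU => isClosed_coneModulo S (hF.linearIndepOn hU.1)
  have hcover : ((Submodule.span ℝ (p '' S))ᗮ : Set E) \ {0} ⊆
      (⋃ U ∈ ℬ 𝒜, coneModulo p S U) ∪ ⋃ U ∈ ℬ 𝒜ᶜ, coneModulo p S U := by
    intro u _
    obtain ⟨U, hU, hSU, hu⟩ := hF.exists_eq_sum hS u
    by_cases h : U ∈ 𝒜
    · exact Or.inl (Set.mem_biUnion (show U ∈ ℬ 𝒜 from ⟨hU, hSU, h⟩) hu)
    · exact Or.inr (Set.mem_biUnion (show U ∈ ℬ 𝒜ᶜ from ⟨hU, hSU, h⟩) hu)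
  have hne : ∀ {k 𝒰}, k ∉ S → insert k S ∈ 𝒯 → insert k S ∈ 𝒰 →
      (((Submodule.span ℝ (p '' S))ᗮ : Set E) \ {0} ∩ ⋃ U ∈ ℬ 𝒰, coneModulo p S U).Nonempty := by
    intro k 𝒰 hk hT h𝒰
    obtain ⟨u, hu, hu'⟩ := exists_mem_coneModulo_insert hk (hF.linearIndepOn hT)
    exact ⟨u, hu', Set.mem_biUnion
      (show insert k S ∈ ℬ 𝒰 from ⟨hT, Finset.subset_insert _ _, h𝒰⟩) hu⟩
  obtain ⟨u, ⟨hu, hu0⟩, hu𝒜, hu𝒜'⟩ := isPreconnected_closed_iff.1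
    (isPreconnected_diff_zero_of_one_lt_finrank (one_lt_finrank_orthogonal_span_image hc)) _ _
    (hclosed 𝒜) (hclosed 𝒜ᶜ) hcover (hne hi hTi h𝒜i) (hne hj hTj h𝒜j)
  obtain ⟨U, ⟨hU, hSU, hU𝒜⟩, huU⟩ := Set.mem_iUnion₂.1 hu𝒜
  obtain ⟨U', ⟨hU', hSU', hU𝒜'⟩, huU'⟩ := Set.mem_iUnion₂.1 hu𝒜'
  exact ⟨U, hU, U', hU', hSU, hSU', hU𝒜, hU𝒜', u, hu, hu0, huU, huU'⟩

/-- The link of a cone of codimension at least two is connected, because the punctured orthogonal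
complement of the cone is. -/
theorem mem_of_forall_insert_insert_mem (hF : IsSimplicialFan p 𝒯) (hS : S ∈ 𝒯)
    (hc : S.card + 2 ≤ finrank ℝ E) {I : Set ι} {i : ι} (hi : i ∉ S) (hTi : insert i S ∈ 𝒯)
    (hiI : i ∈ I)
    (hI : ∀ j ∈ I, ∀ k, j ∉ S → k ∉ S → j ≠ k → insert k (insert j S) ∈ 𝒯 → k ∈ I) {j : ι}
    (hj : j ∉ S) (hTj : insert j S ∈ 𝒯) : j ∈ I := by
  by_contra hjI
  obtain ⟨U, hU, U', hU', hSU, hSU', ⟨k, hkU, hkS, hkI⟩, hU'I, u, hu, hu0, ⟨l, hl, hul⟩,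
    l', hl', hul'⟩ := hF.exists_mem_coneModulo_inter hS hc {U | ∃ i ∈ U, i ∉ S ∧ i ∈ I} hi hTi
      ⟨i, Finset.mem_insert_self _ _, hi, hiI⟩ hj hTj (by
        rintro ⟨k, hk, hkS, hkI⟩
        exact hjI ((Finset.mem_insert.1 hk).resolve_right hkS ▸ hkI))
  obtain ⟨m, hm, hmS, hlm⟩ := exists_pos_of_mem_orthogonal S hl hul hu hu0
  have hmU' := hF.mem_of_sum_eq hU hU' hSU hSU' hl hl' (hul.symm.trans hul') m hm hmS hlm
  refine hU'I ⟨m, hmU', hmS, ?_⟩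
  rcases eq_or_ne k m with rfl | hkm
  · exact hkI
  · exact hI k hkI m hkS hmS hkm (hF.mem_of_subset hU
      (Finset.insert_subset hm (Finset.insert_subset hkU hSU)))

end IsSimplicialFan

end LinkConnected

section Ample

variable {ι E : Type*} [NormedAddCommGroup E] [InnerProductSpace ℝ E] {p : ι → E}
  {𝒯 : Set (Finset ι)} {a b c : ι → ℝ} {L : List (ι → ℝ)} {S : Finset ι}

/-- The divisor `∑ i, c i • D_i` is ample on the toric variety of the fan `𝒯`: its piecewise linear
support function is strictly convex. -/
def IsAmple (p : ι → E) (𝒯 : Set (Finset ι)) (c : ι → ℝ) : Prop :=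
  𝒯 ⊆ normalFan p c

/-- The divisor `∑ i, c i • D_i` is nef on the toric variety of the fan `𝒯`: its piecewise linear
support function is convex. -/
def IsNef (p : ι → E) (𝒯 : Set (Finset ι)) (c : ι → ℝ) : Prop :=
  ∀ S ∈ 𝒯, ∃ v : E, (∀ i, ⟪v, p i⟫_ℝ ≤ c i) ∧ ∀ i ∈ S, ⟪v, p i⟫_ℝ = c i

theorem IsAmple.isNef (hc : IsAmple p 𝒯 c) : IsNef p 𝒯 c := fun _ hS =>
  let ⟨v, hv⟩ := hc hS
  ⟨v, fun i => (hv i).1, fun i hi => (hv i).2.2 hi⟩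

theorem IsNef.add_smul_isAmple (hc : IsNef p 𝒯 c) (hb : IsAmple p 𝒯 b) {t : ℝ} (ht : 0 < t) :
    IsAmple p 𝒯 (c + t • b) := by
  intro S hS
  obtain ⟨v, hv⟩ := hb hS
  obtain ⟨w, hw, hwS⟩ := hc S hS
  refine ⟨w + t • v, fun i => ?_⟩
  rw [inner_add_left, real_inner_smul_left, Pi.add_apply, Pi.smul_apply, smul_eq_mul]
  by_cases hi : i ∈ S
  · rw [hwS i hi, (hv i).2.2 hi]
    simp [hi]
  · have hlt := mul_lt_mul_of_pos_left ((hv i).1.lt_of_ne fun h => hi ((hv i).2.1 h)) ht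
    have hsum := add_lt_add_of_le_of_lt (hw i) hlt
    exact ⟨hsum.le, fun h => absurd h hsum.ne, fun h => absurd h hi⟩

namespace IsSimplicialFan

variable [FiniteDimensional ℝ E] [Fintype ι] [DecidableEq ι]

theorem intersectionNumber_nonneg (hF : IsSimplicialFan p 𝒯) (hL : ∀ c ∈ L, IsNef p 𝒯 c)
    (S : Finset ι) : 0 ≤ intersectionNumber p 𝒯 L S := by
  induction L generalizing S with
  | nil =>
    rw [intersectionNumber]
    split_ifs
    exacts [inv_nonneg.2 (parallelepipedVolume_nonneg p S), le_rfl]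
  | cons c L ih =>
    by_cases hS : S ∈ 𝒯
    · obtain ⟨v, hv, hvS⟩ := hL c List.mem_cons_self S hS
      rw [hF.intersectionNumber_cons L hS c hvS]
      exact Finset.sum_nonneg fun j _ => mul_nonneg (sub_nonneg.2 (hv j))
        (ih (fun c hc => hL c (List.mem_cons_of_mem _ hc)) _)
    · rw [intersectionNumber_of_notMem _ _ hS]

theorem intersectionNumber_pos (hF : IsSimplicialFan p 𝒯) (hL : ∀ c ∈ L, IsAmple p 𝒯 c)
    (hS : S ∈ 𝒯) (hc : S.card + L.length = finrank ℝ E) : 0 < intersectionNumber p 𝒯 L S := by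
  induction L generalizing S with
  | nil =>
    rw [intersectionNumber, if_pos ⟨hS, hc⟩]
    exact inv_pos.2 (parallelepipedVolume_pos (hF.linearIndepOn hS))
  | cons c L ih =>
    obtain ⟨v, hv⟩ := hL c List.mem_cons_self hS
    have hL' : ∀ c ∈ L, IsAmple p 𝒯 c := fun c hc => hL c (List.mem_cons_of_mem _ hc)
    rw [List.length_cons] at hc
    obtain ⟨j, hj, hTj⟩ := hF.exists_insert_mem hS (by lia)
    rw [hF.intersectionNumber_cons L hS c fun i hi => (hv i).2.2 hi]
    refine Finset.sum_pos' (fun k _ => mul_nonneg (sub_nonneg.2 (hv k).1)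
      (hF.intersectionNumber_nonneg (fun c hc => (hL' c hc).isNef) _)) ⟨j, Finset.mem_univ _, ?_⟩
    refine mul_pos (sub_pos.2 ((hv j).1.lt_of_ne fun h => hj ((hv j).2.1 h))) (ih hL' hTj ?_)
    rw [Finset.card_insert_of_notMem hj]
    lia

theorem intersectionNumber_cons_eq_sum (hF : IsSimplicialFan p 𝒯) (L : List (ι → ℝ)) (S : Finset ι)
    (a : ι → ℝ) : intersectionNumber p 𝒯 (a :: L) S =
      ∑ k, a k * intersectionNumber p 𝒯 (Pi.single k 1 :: L) S := by
  let φ : Dual ℝ (ι → ℝ) :=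
    { toFun := fun a => intersectionNumber p 𝒯 (a :: L) S
      map_add' := hF.intersectionNumber_add_cons L S
      map_smul' := hF.intersectionNumber_smul_cons L S }
  calc φ a = ∑ k, a k • φ (fun i => if k = i then 1 else 0) := φ.pi_apply_eq_sum_univ a
    _ = ∑ k, a k * φ (Pi.single k 1) := by
      refine Finset.sum_congr rfl fun k _ => congrArg (a k * φ ·) (funext fun i => ?_)
      simp only [Pi.single_apply, eq_comm]

theorem intersectionNumber_sub_inner_cons (hF : IsSimplicialFan p 𝒯) (L : List (ι → ℝ))
    (S : Finset ι) (a : ι → ℝ) (v : E) :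
    intersectionNumber p 𝒯 ((fun i => a i - ⟪v, p i⟫_ℝ) :: L) S =
      intersectionNumber p 𝒯 (a :: L) S := by
  have hadd := hF.intersectionNumber_add_cons L S (fun i => a i - ⟪v, p i⟫_ℝ) fun i => ⟪v, p i⟫_ℝ
  rw [hF.intersectionNumber_inner_cons, add_zero] at hadd
  rw [← hadd]
  congr 2
  ext i
  simp

theorem intersectionNumber_cons_congr (hF : IsSimplicialFan p 𝒯) (L : List (ι → ℝ))
    (hab : ∀ j, insert j S ∈ 𝒯 → a j = b j) :
    intersectionNumber p 𝒯 (a :: L) S = intersectionNumber p 𝒯 (b :: L) S := by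
  by_cases hS : S ∈ 𝒯
  swap
  · rw [intersectionNumber_of_notMem _ _ hS, intersectionNumber_of_notMem _ _ hS]
  have hmem : ∀ i ∈ S, a i = b i := fun i hi => hab i (by rwa [Finset.insert_eq_of_mem hi])
  have ha := fun i => hF.inner_interpolant hS a (i := i)
  rw [hF.intersectionNumber_cons L hS a ha,
    hF.intersectionNumber_cons L hS b fun i hi => (ha i hi).trans (hmem i hi)]
  refine Finset.sum_congr rfl fun j _ => ?_
  by_cases hj : insert j S ∈ 𝒯
  · rw [hab j hj]
  · rw [intersectionNumber_of_notMem _ _ hj, mul_zero, mul_zero]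

end IsSimplicialFan

end Ample

section Surface

variable {ι E : Type*} [NormedAddCommGroup E] [InnerProductSpace ℝ E] [FiniteDimensional ℝ E]
  [DecidableEq ι] {p : ι → E} {𝒯 : Set (Finset ι)} {S U : Finset ι}

omit [FiniteDimensional ℝ E] in
theorem exists_sum_mul_inner_eq_zero_of_mul_neg {m : E} (hm : ∀ i ∈ S, ⟪m, p i⟫_ℝ = 0) {j k : ι}
    (hneg : ⟪m, p j⟫_ℝ * ⟪m, p k⟫_ℝ < 0) :
    ∃ μ : ι → ℝ, (∀ i, 0 ≤ μ i) ∧ 0 < μ j ∧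
      ∑ i ∈ insert j (insert k S), μ i * ⟪m, p i⟫_ℝ = 0 := by
  have hjk : j ≠ k := by
    rintro rfl
    exact hneg.not_ge (mul_self_nonneg _)
  have hk0 : ⟪m, p k⟫_ℝ ≠ 0 := right_ne_zero_of_mul hneg.ne
  have hkS : k ∉ S := fun h => hk0 (hm k h)
  have hjS : j ∉ S := fun h => left_ne_zero_of_mul hneg.ne (hm j h)
  refine ⟨Pi.single j |⟪m, p k⟫_ℝ| + Pi.single k |⟪m, p j⟫_ℝ|, fun i => add_nonneg ?_ ?_, ?_, ?_⟩
  · rcases eq_or_ne i j with rfl | h <;> simp [*]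
  · rcases eq_or_ne i k with rfl | h <;> simp [*]
  · simpa [hjk] using hk0
  · rw [Finset.sum_insert (by simp [hjk, hjS]), Finset.sum_insert hkS,
      Finset.sum_eq_zero fun i hi => by rw [hm i hi, mul_zero]]
    rcases mul_neg_iff.1 hneg with ⟨hj, hk⟩ | ⟨hj, hk⟩
    · simp [hjk, hjk.symm, abs_of_pos hj, abs_of_neg hk, mul_comm]
    · simp [hjk, hjk.symm, abs_of_neg hj, abs_of_pos hk, mul_comm]

namespace IsSimplicialFan

omit [FiniteDimensional ℝ E] in
theorem mem_or_eq_of_sum_mem_span_insert (hF : IsSimplicialFan p 𝒯) {i : ι} (hi : i ∉ S)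
    (hT : insert i S ∈ 𝒯) (hU : U ∈ 𝒯) (hSU : S ⊆ U) {l : ι → ℝ}
    (hl : ∀ k ∈ U, k ∉ S → 0 ≤ l k) (hsum : -p i = ∑ k ∈ U, l k • p k) {U' : Finset ι}
    (hU' : U' ∈ 𝒯) (hSU' : S ⊆ U') {μ : ι → ℝ} (hμ : ∀ k ∈ U', k ∉ S → 0 ≤ μ k)
    (hspan : ∑ k ∈ U', μ k • p k ∈ Submodule.span ℝ (p '' (insert i S : Finset ι))) {k : ι}
    (hk : k ∈ U') (hkS : k ∉ S) (hμk : 0 < μ k) : k ∈ U ∨ k = i := by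
  obtain ⟨a, ha⟩ := (Submodule.mem_span_image_finset_iff_exists_fun' ℝ).1 hspan
  rcases le_or_gt 0 (a i) with hai | hai
  · right
    have hmem := hF.mem_of_sum_eq hU' hT hSU' (Finset.subset_insert _ _) hμ (fun k hk hkS => by
      rwa [(Finset.mem_insert.1 hk).resolve_right hkS]) ha.symm k hk hkS hμk
    exact (Finset.mem_insert.1 hmem).resolve_right hkS
  · left
    refine hF.mem_of_sum_eq (l' := fun k => -a i * l k + if k ∈ S then a k else 0) hU' hU hSU' hSU
      hμ (fun k hk hkS => ?_) ?_ k hk hkS hμk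
    · rw [if_neg hkS, add_zero]
      exact mul_nonneg (neg_nonneg.2 hai.le) (hl k hk hkS)
    · have hS : ∑ k ∈ U, (if k ∈ S then a k else 0) • p k = ∑ k ∈ S, a k • p k := by
        simp only [ite_smul, zero_smul]
        rw [← Finset.sum_filter, Finset.filter_mem_eq_inter, Finset.inter_eq_right.2 hSU]
      simp only [add_smul, mul_smul, Finset.sum_add_distrib, hS]
      rw [← Finset.smul_sum, ← hsum, ← ha, Finset.sum_insert hi, neg_smul_neg]

omit [DecidableEq ι] in
theorem mem_span_of_inner_eq_zero (hF : IsSimplicialFan p 𝒯) (hS : S ∈ 𝒯)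
    (hc : S.card + 1 = finrank ℝ E) {m : E} (hm0 : m ≠ 0) (hm : ∀ i ∈ S, ⟪m, p i⟫_ℝ = 0) {w : E}
    (hw : ⟪m, w⟫_ℝ = 0) : w ∈ Submodule.span ℝ (p '' S) := by
  classical
  obtain ⟨j, hj, hTj, hmj⟩ := hF.exists_inner_pos hS hm0 hm
  obtain ⟨a, ha⟩ := hF.exists_eq_smul_add hc hm hj hTj hmj.ne' w
  rw [hw, zero_div, zero_smul, zero_add] at ha
  exact (Submodule.mem_span_image_finset_iff_exists_fun' ℝ).2 ⟨a, ha.symm⟩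

theorem mul_intersectionNumber_cons_insert [Fintype ι] (hF : IsSimplicialFan p 𝒯)
    (L : List (ι → ℝ)) {m : E} (hm : ∀ i ∈ S, ⟪m, p i⟫_ℝ = 0) {x : ι → ℝ}
    (hx : ∀ j, insert j S ∈ 𝒯 → ⟪m, p j⟫_ℝ = 0 → x j = 0) (j : ι) :
    x j * intersectionNumber p 𝒯 (x :: L) (insert j S) =
      ∑ k, ⟪m, p j⟫_ℝ * ⟪m, p k⟫_ℝ * (x j / ⟪m, p j⟫_ℝ *
        (x k / ⟪m, p k⟫_ℝ - x j / ⟪m, p j⟫_ℝ)) *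
          intersectionNumber p 𝒯 L (insert j (insert k S)) := by
  have hdiv : ∀ k, insert k S ∈ 𝒯 → x k = x k / ⟪m, p k⟫_ℝ * ⟪m, p k⟫_ℝ := fun k hk =>
    (div_mul_cancel_of_imp fun h => hx k hk h).symm
  have hvanish : ∀ k, insert j S ∉ 𝒯 ∨ insert k S ∉ 𝒯 → insert j (insert k S) ∉ 𝒯 := fun k h hT =>
    h.elim
      (· (hF.mem_of_subset hT (Finset.insert_subset_insert _ (Finset.subset_insert _ _))))
      (· (hF.mem_of_subset hT (Finset.subset_insert _ _)))
  by_cases hTj : insert j S ∈ 𝒯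
  swap
  · simp only [intersectionNumber_of_notMem _ _ hTj,
      intersectionNumber_of_notMem _ _ (hvanish _ (Or.inl hTj)), mul_zero, Finset.sum_const_zero]
  rw [hF.intersectionNumber_cons (v := (x j / ⟪m, p j⟫_ℝ) • m) L hTj x fun i hi => ?_,
    Finset.mul_sum]
  · refine Finset.sum_congr rfl fun k _ => ?_
    rw [Finset.insert_comm]
    by_cases hTk : insert k S ∈ 𝒯
    · rw [real_inner_smul_left]
      nth_rewrite 1 [hdiv j hTj]
      nth_rewrite 1 [hdiv k hTk]
      ring
    · rw [intersectionNumber_of_notMem _ _ (hvanish k (Or.inr hTk)), mul_zero, mul_zero, mul_zero]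
  · rw [real_inner_smul_left]
    rcases Finset.mem_insert.1 hi with rfl | hi
    · exact (hdiv i hTj).symm
    · rw [hm i hi, mul_zero, hx i ?_ (hm i hi)]
      rw [Finset.insert_eq_of_mem hi]
      exact hF.mem_of_subset hTj (Finset.subset_insert _ _)

/-- The formula behind the Hodge index theorem on a toric surface. -/
theorem two_mul_intersectionNumber_self [Fintype ι] (hF : IsSimplicialFan p 𝒯)
    (L : List (ι → ℝ)) (hS : S ∈ 𝒯) {m : E} (hm : ∀ i ∈ S, ⟪m, p i⟫_ℝ = 0) {x : ι → ℝ}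
    (hx : ∀ j, insert j S ∈ 𝒯 → ⟪m, p j⟫_ℝ = 0 → x j = 0) :
    2 * intersectionNumber p 𝒯 (x :: x :: L) S =
      -∑ j, ∑ k, ⟪m, p j⟫_ℝ * ⟪m, p k⟫_ℝ * (x j / ⟪m, p j⟫_ℝ - x k / ⟪m, p k⟫_ℝ) ^ 2 *
        intersectionNumber p 𝒯 L (insert j (insert k S)) := by
  have hxS : ∀ i ∈ S, x i = 0 := fun i hi => hx i (by rwa [Finset.insert_eq_of_mem hi]) (hm i hi)
  rw [hF.intersectionNumber_cons (v := 0) (x :: L) hS x fun i hi => by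
    rw [inner_zero_left, hxS i hi]]
  simp only [inner_zero_left, sub_zero, hF.mul_intersectionNumber_cons_insert L hm hx]
  rw [two_mul]
  nth_rewrite 2 [Finset.sum_comm]
  simp only [← Finset.sum_add_distrib, ← Finset.sum_neg_distrib]
  refine Finset.sum_congr rfl fun j _ => Finset.sum_congr rfl fun k _ => ?_
  rw [Finset.insert_comm k j S]
  ring

theorem intersectionNumber_self_nonpos_of_forall_sum_eq_zero [Fintype ι]
    (hF : IsSimplicialFan p 𝒯) (hS : S ∈ 𝒯) {m : E} (hm : ∀ i ∈ S, ⟪m, p i⟫_ℝ = 0) {x : ι → ℝ}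
    (hx : ∀ U ∈ 𝒯, S ⊆ U → ∀ μ : ι → ℝ, (∀ k, 0 ≤ μ k) → ∑ k ∈ U, μ k * ⟪m, p k⟫_ℝ = 0 →
      ∀ k ∈ U, 0 < μ k → x k = 0) :
    intersectionNumber p 𝒯 [x, x] S ≤ 0 := by
  have hray : ∀ j, insert j S ∈ 𝒯 → ⟪m, p j⟫_ℝ = 0 → x j = 0 := fun j hj hmj => by
    refine hx _ hj (Finset.subset_insert _ _) (Pi.single j 1) (fun k => ?_)
      (Finset.sum_eq_zero fun k _ => ?_) j (Finset.mem_insert_self _ _) ?_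
    · rcases eq_or_ne k j with rfl | h <;> simp [*]
    · rcases eq_or_ne k j with rfl | h <;> simp [*]
    · simp
  have hpair : ∀ j k, insert j (insert k S) ∈ 𝒯 → ⟪m, p j⟫_ℝ * ⟪m, p k⟫_ℝ < 0 → x j = 0 := by
    intro j k hT hneg
    obtain ⟨μ, hμ, hμj, hsum⟩ := exists_sum_mul_inner_eq_zero_of_mul_neg hm hneg
    exact hx _ hT ((Finset.subset_insert _ _).trans (Finset.subset_insert _ _)) μ hμ hsum j
      (Finset.mem_insert_self _ _) hμj
  have hsum := hF.two_mul_intersectionNumber_self [] hS hm hray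
  have hnonneg : 0 ≤ ∑ j, ∑ k, ⟪m, p j⟫_ℝ * ⟪m, p k⟫_ℝ *
      (x j / ⟪m, p j⟫_ℝ - x k / ⟪m, p k⟫_ℝ) ^ 2 *
        intersectionNumber p 𝒯 [] (insert j (insert k S)) := by
    refine Finset.sum_nonneg fun j _ => Finset.sum_nonneg fun k _ => ?_
    by_cases hT : insert j (insert k S) ∈ 𝒯
    swap
    · rw [intersectionNumber_of_notMem _ _ hT, mul_zero]
    rcases le_or_gt 0 (⟪m, p j⟫_ℝ * ⟪m, p k⟫_ℝ) with hN | hN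
    · exact mul_nonneg (mul_nonneg hN (sq_nonneg _)) (hF.intersectionNumber_nonneg (by simp) _)
    · rw [hpair j k hT hN, hpair k j (by rwa [Finset.insert_comm]) (by rwa [mul_comm])]
      simp
  linarith

theorem intersectionNumber_self_nonpos_of_forall_mem_eq_zero [Fintype ι]
    (hF : IsSimplicialFan p 𝒯) (hc : S.card + 2 = finrank ℝ E) {i : ι} (hi : i ∉ S)
    (hT : insert i S ∈ 𝒯) (hU : U ∈ 𝒯) (hSU : S ⊆ U) {l : ι → ℝ}
    (hl : ∀ k ∈ U, k ∉ S → 0 ≤ l k) (hsum : -p i = ∑ k ∈ U, l k • p k) {x : ι → ℝ}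
    (hxU : ∀ k ∈ U, x k = 0) (hxi : x i = 0) : intersectionNumber p 𝒯 [x, x] S ≤ 0 := by
  have hcard : (insert i S).card + 1 = finrank ℝ E := by rw [Finset.card_insert_of_notMem hi, ← hc]
  obtain ⟨m, hm0, hm⟩ := exists_ne_zero_forall_inner_eq_zero (S := insert i S) p (by omega)
  refine hF.intersectionNumber_self_nonpos_of_forall_sum_eq_zero
    (hF.mem_of_subset hT (Finset.subset_insert _ _)) (m := m)
    (fun k hk => hm k (Finset.mem_insert_of_mem hk)) fun U' hU' hSU' μ hμ hμm k hk hμk => ?_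
  by_cases hkS : k ∈ S
  · exact hxU k (hSU hkS)
  have hspan := hF.mem_span_of_inner_eq_zero hT hcard hm0 hm (w := ∑ k ∈ U', μ k • p k) <| by
    simpa only [inner_sum, real_inner_smul_right] using hμm
  rcases hF.mem_or_eq_of_sum_mem_span_insert hi hT hU hSU hl hsum hU' hSU' (fun k _ _ => hμ k)
    hspan hk hkS hμk with h | rfl
  exacts [hxU k h, hxi]

theorem exists_dual_forall_intersectionNumber_self_nonpos [Fintype ι] (hF : IsSimplicialFan p 𝒯)
    (hS : S ∈ 𝒯) (hc : S.card + 2 = finrank ℝ E) :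
    ∃ l : Dual ℝ (ι → ℝ), ∀ x, l x = 0 → intersectionNumber p 𝒯 [x, x] S ≤ 0 := by
  obtain ⟨i, hi, hT⟩ := hF.exists_insert_mem hS (by omega)
  obtain ⟨U, hU, hSU, l, hl, hsum⟩ := hF.exists_eq_sum hS (-p i)
  let π : ι → Dual ℝ (ι → ℝ) := LinearMap.proj
  refine ⟨π i + ∑ k ∈ U, l k • π k, fun x hx => ?_⟩
  obtain ⟨v, hv⟩ := exists_forall_inner_eq (hF.linearIndepOn hU) x
  have hx' : x i + ∑ k ∈ U, l k * x k = 0 := by simpa [π] using hx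
  have hvi : -⟪v, p i⟫_ℝ = ∑ k ∈ U, l k * x k := by
    rw [← inner_neg_right, hsum, inner_sum]
    exact Finset.sum_congr rfl fun k hk => by rw [real_inner_smul_right, hv k hk]
  have hneg := hF.intersectionNumber_self_nonpos_of_forall_mem_eq_zero hc hi hT hU hSU hl hsum
    (x := fun j => x j - ⟪v, p j⟫_ℝ) (fun k hk => by rw [hv k hk, sub_self]) (by linarith)
  rwa [hF.intersectionNumber_sub_inner_cons, hF.intersectionNumber_swap,
    hF.intersectionNumber_sub_inner_cons] at hneg

end IsSimplicialFan

end Surface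

section Link

open Matrix

variable {ι E : Type*} [NormedAddCommGroup E] [InnerProductSpace ℝ E] {p : ι → E}
  {𝒯 : Set (Finset ι)} {S U : Finset ι} [DecidableEq ι]

/-- The vertices of the link of `S` in `𝒯`. -/
abbrev LinkVertex (𝒯 : Set (Finset ι)) (S : Finset ι) : Type _ :=
  {j : ι // j ∉ S ∧ insert j S ∈ 𝒯}

noncomputable instance [Finite ι] : Fintype (LinkVertex 𝒯 S) := Fintype.ofFinite _

/-- The extension by zero of a function on the vertices of a link. -/
noncomputable def extendLink (y : LinkVertex 𝒯 S → ℝ) : ι → ℝ := Function.extend Subtype.val y 0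

theorem sum_extendLink_mul [Fintype ι] (y : LinkVertex 𝒯 S → ℝ) (g : ι → ℝ) :
    ∑ k, extendLink y k * g k = ∑ j, y j * g j :=
  (Fintype.sum_of_injective Subtype.val Subtype.val_injective _ _
    (fun k hk => by rw [extendLink, Function.extend_apply' _ _ _ hk, Pi.zero_apply, zero_mul])
    fun j => by rw [extendLink, Subtype.val_injective.extend_apply]).symm

/-- The matrix of the intersection form on functions on the vertices of the link of `S`. -/
noncomputable def linkMatrix [FiniteDimensional ℝ E] [Fintype ι] (p : ι → E) (𝒯 : Set (Finset ι))
    (L : List (ι → ℝ)) (S : Finset ι) : Matrix (LinkVertex 𝒯 S) (LinkVertex 𝒯 S) ℝ :=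
  fun j k => intersectionNumber p 𝒯 (Pi.single ↑j 1 :: Pi.single ↑k 1 :: L) S

namespace IsSimplicialFan

variable [FiniteDimensional ℝ E] [Fintype ι] {L : List (ι → ℝ)}

theorem intersectionNumber_extendLink_cons (hF : IsSimplicialFan p 𝒯) (L : List (ι → ℝ))
    (hSU : S ⊆ U) {a : ι → ℝ} (ha : ∀ i ∈ S, a i = 0) :
    intersectionNumber p 𝒯 (extendLink (fun j : LinkVertex 𝒯 S => a j) :: L) U =
      intersectionNumber p 𝒯 (a :: L) U := by
  refine hF.intersectionNumber_cons_congr L fun j hj => ?_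
  by_cases hjS : j ∈ S
  · rw [extendLink, Function.extend_apply' _ _ _ (by rintro ⟨k, rfl⟩; exact k.2.1 hjS), ha j hjS,
      Pi.zero_apply]
  · exact Subtype.val_injective.extend_apply _ _
      (⟨j, hjS, hF.mem_of_subset hj (Finset.insert_subset_insert _ hSU)⟩ : LinkVertex 𝒯 S)

theorem linkMatrix_mulVec (hF : IsSimplicialFan p 𝒯) (L : List (ι → ℝ)) (y : LinkVertex 𝒯 S → ℝ)
    (j : LinkVertex 𝒯 S) : (linkMatrix p 𝒯 L S *ᵥ y) j =
      intersectionNumber p 𝒯 (extendLink y :: L) (insert ↑j S) := by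
  rw [hF.intersectionNumber_cons_eq_sum, sum_extendLink_mul]
  refine Finset.sum_congr rfl fun k _ => ?_
  change intersectionNumber p 𝒯 (Pi.single ↑j 1 :: Pi.single ↑k 1 :: L) S * y k = _
  rw [hF.intersectionNumber_single_cons _ j.2.1, mul_comm]

theorem dotProduct_linkMatrix_mulVec (hF : IsSimplicialFan p 𝒯) (L : List (ι → ℝ))
    (x y : LinkVertex 𝒯 S → ℝ) : x ⬝ᵥ linkMatrix p 𝒯 L S *ᵥ y =
      intersectionNumber p 𝒯 (extendLink x :: extendLink y :: L) S := by
  rw [hF.intersectionNumber_cons_eq_sum, sum_extendLink_mul]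
  exact Finset.sum_congr rfl fun j _ => by
    rw [hF.linkMatrix_mulVec, hF.intersectionNumber_single_cons _ j.2.1]

theorem linkMatrix_isSymm (hF : IsSimplicialFan p 𝒯) (L : List (ι → ℝ)) (S : Finset ι) :
    (linkMatrix p 𝒯 L S).IsSymm :=
  Matrix.IsSymm.ext fun _ _ => hF.intersectionNumber_swap _ _ _ _

theorem linkMatrix_apply_of_ne (hF : IsSimplicialFan p 𝒯) (L : List (ι → ℝ)) {j k : LinkVertex 𝒯 S}
    (hjk : j ≠ k) :
    linkMatrix p 𝒯 L S j k = intersectionNumber p 𝒯 L (insert ↑k (insert ↑j S)) := by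
  rw [linkMatrix, hF.intersectionNumber_single_cons _ j.2.1, hF.intersectionNumber_single_cons]
  rw [Finset.mem_insert, not_or]
  exact ⟨fun h => hjk (Subtype.ext h.symm), k.2.1⟩

theorem isPosConnected_linkMatrix (hF : IsSimplicialFan p 𝒯) (hS : S ∈ 𝒯)
    (hL : ∀ c ∈ L, IsAmple p 𝒯 c) (hc : S.card + 2 + L.length = finrank ℝ E) :
    IsPosConnected (linkMatrix p 𝒯 L S) := by
  rintro I ⟨i, hi⟩ hI j
  suffices h : ∀ j ∈ Subtype.val '' I, ∀ k, j ∉ S → k ∉ S → j ≠ k → insert k (insert j S) ∈ 𝒯 →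
      k ∈ Subtype.val '' I by
    obtain ⟨j', hj', hjj⟩ := hF.mem_of_forall_insert_insert_mem hS (by omega) i.2.1 i.2.2
      (Set.mem_image_of_mem _ hi) h j.2.1 j.2.2
    rwa [← Subtype.ext hjj]
  rintro _ ⟨j, hj, rfl⟩ k hjS hkS hjk hT
  have hTk := hF.mem_of_subset hT (Finset.insert_subset_insert _ (Finset.subset_insert _ _))
  have hne : j ≠ ⟨k, hkS, hTk⟩ := fun h => hjk (congrArg Subtype.val h)
  refine ⟨⟨k, hkS, hTk⟩, hI j hj _ hne ?_, rfl⟩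
  rw [hF.linkMatrix_apply_of_ne L hne]
  refine hF.intersectionNumber_pos hL hT ?_
  rw [Finset.card_insert_of_notMem (by simp [hkS, hjk.symm]),
    Finset.card_insert_of_notMem hjS, ← hc]

theorem intersectionNumber_cons_eq_sum_linkVertex (hF : IsSimplicialFan p 𝒯)
    (L : List (ι → ℝ)) (hS : S ∈ 𝒯) {c : ι → ℝ} {v : E} (hv : ∀ i ∈ S, ⟪v, p i⟫_ℝ = c i) :
    intersectionNumber p 𝒯 (c :: L) S = ∑ j : LinkVertex 𝒯 S,
      (c j - ⟪v, p j⟫_ℝ) * intersectionNumber p 𝒯 L (insert ↑j S) := by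
  rw [hF.intersectionNumber_cons L hS c hv]
  refine (Fintype.sum_of_injective Subtype.val Subtype.val_injective _ _ (fun k hk => ?_)
    fun j => rfl).symm
  by_cases hkS : k ∈ S
  · rw [hv k hkS, sub_self, zero_mul]
  · rw [intersectionNumber_of_notMem _ _ fun h => hk ⟨⟨k, hkS, h⟩, rfl⟩, mul_zero]

theorem intersectionNumber_self_le_sum_sq_div (hF : IsSimplicialFan p 𝒯) (hS : S ∈ 𝒯) {c : ι → ℝ}
    {v : E} (hv : ∀ i ∈ S, ⟪v, p i⟫_ℝ = c i) (hvc : ∀ j : LinkVertex 𝒯 S, ⟪v, p j⟫_ℝ < c j)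
    (hpos : ∀ j : LinkVertex 𝒯 S, 0 < intersectionNumber p 𝒯 (c :: c :: L) (insert ↑j S))
    {x : ι → ℝ} (hAF : ∀ j : LinkVertex 𝒯 S,
      intersectionNumber p 𝒯 (x :: x :: L) (insert ↑j S) *
        intersectionNumber p 𝒯 (c :: c :: L) (insert ↑j S) ≤
          intersectionNumber p 𝒯 (c :: x :: L) (insert ↑j S) ^ 2) :
    intersectionNumber p 𝒯 (x :: x :: c :: L) S ≤ ∑ j : LinkVertex 𝒯 S,
      intersectionNumber p 𝒯 (x :: c :: L) (insert ↑j S) ^ 2 /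
        (intersectionNumber p 𝒯 (c :: c :: L) (insert ↑j S) / (c j - ⟪v, p j⟫_ℝ)) := by
  have hperm : (x :: x :: c :: L).Perm (c :: x :: x :: L) := List.perm_middle (l₁ := [x, x])
  rw [hF.intersectionNumber_perm hperm, hF.intersectionNumber_cons_eq_sum_linkVertex _ hS hv]
  refine Finset.sum_le_sum fun j _ => ?_
  rw [div_div_eq_mul_div, le_div_iff₀ (hpos j), hF.intersectionNumber_swap _ _ x c]
  linarith [mul_le_mul_of_nonneg_right (hAF j) (sub_pos.2 (hvc j)).le]

/-- The Bochner argument of Shenfeld and van Handel: the Alexandrov–Fenchel inequality in the links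
of the vertices of the link of `S` implies that of `S`. -/
theorem intersectionNumber_self_nonpos_of_orthogonal_isAmple (hF : IsSimplicialFan p 𝒯)
    (hS : S ∈ 𝒯) {c : ι → ℝ} (hc : IsAmple p 𝒯 c) (hL : ∀ a ∈ L, IsAmple p 𝒯 a)
    (hcard : S.card + 3 + L.length = finrank ℝ E)
    (hAF : ∀ j : LinkVertex 𝒯 S, ∀ x : ι → ℝ,
      intersectionNumber p 𝒯 (x :: x :: L) (insert ↑j S) *
        intersectionNumber p 𝒯 (c :: c :: L) (insert ↑j S) ≤
          intersectionNumber p 𝒯 (c :: x :: L) (insert ↑j S) ^ 2)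
    {x : ι → ℝ} (hx : intersectionNumber p 𝒯 (c :: x :: c :: L) S = 0) :
    intersectionNumber p 𝒯 (x :: x :: c :: L) S ≤ 0 := by
  have hcL : ∀ a ∈ c :: L, IsAmple p 𝒯 a := List.forall_mem_cons.2 ⟨hc, hL⟩
  obtain ⟨v, hv⟩ := hc hS
  obtain ⟨u, hu⟩ := exists_forall_inner_eq (hF.linearIndepOn hS) x
  let e : ι → ℝ := fun i => c i - ⟪v, p i⟫_ℝ
  let y : ι → ℝ := fun i => x i - ⟪u, p i⟫_ℝ
  have heS : ∀ i ∈ S, e i = 0 := fun i hi => sub_eq_zero.2 ((hv i).2.2 hi).symm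
  have hyS : ∀ i ∈ S, y i = 0 := fun i hi => sub_eq_zero.2 (hu i hi).symm
  have he : ∀ j : LinkVertex 𝒯 S, 0 < e j := fun j =>
    sub_pos.2 ((hv j).1.lt_of_ne fun h => j.2.1 ((hv j).2.1 h))
  have hpos : ∀ j : LinkVertex 𝒯 S, 0 < intersectionNumber p 𝒯 (c :: c :: L) (insert ↑j S) :=
    fun j => hF.intersectionNumber_pos (List.forall_mem_cons.2 ⟨hc, hcL⟩) j.2.2 (by
      rw [Finset.card_insert_of_notMem j.2.1, ← hcard, List.length_cons, List.length_cons]; ring)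
  have hext : ∀ M U, S ⊆ U → intersectionNumber p 𝒯
      (extendLink (fun j : LinkVertex 𝒯 S => e j) :: M) U = intersectionNumber p 𝒯 (c :: M) U :=
    fun M U hU => by
      rw [hF.intersectionNumber_extendLink_cons M hU heS, hF.intersectionNumber_sub_inner_cons]
  have hexty : ∀ M, intersectionNumber p 𝒯 (extendLink (fun j : LinkVertex 𝒯 S => y j) :: M) S =
      intersectionNumber p 𝒯 (x :: M) S := fun M => by
    rw [hF.intersectionNumber_extendLink_cons M subset_rfl hyS,
      hF.intersectionNumber_sub_inner_cons]
  rw [← hexty, hF.intersectionNumber_swap, ← hexty, ← hF.dotProduct_linkMatrix_mulVec]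
  refine dotProduct_mulVec_nonpos_of_bochner (hF.linkMatrix_isSymm _ _)
    (c := fun j : LinkVertex 𝒯 S => e j)
    (w := fun j : LinkVertex 𝒯 S => intersectionNumber p 𝒯 (c :: c :: L) (insert ↑j S) / e j)
    (fun j => div_pos (hpos j) (he j)) he (fun j k hjk => ?_)
    (hF.isPosConnected_linkMatrix hS hcL (by rw [← hcard, List.length_cons]; ring))
    (fun j => ?_) (fun z => ?_) ?_
  · rw [hF.linkMatrix_apply_of_ne _ hjk]
    exact hF.intersectionNumber_nonneg (fun a ha => (hcL a ha).isNef) _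
  · rw [hF.linkMatrix_mulVec, hext _ _ (Finset.subset_insert _ _), div_mul_cancel₀ _ (he j).ne']
  · simp only [hF.dotProduct_linkMatrix_mulVec, hF.linkMatrix_mulVec]
    exact hF.intersectionNumber_self_le_sum_sq_div hS (fun i hi => (hv i).2.2 hi)
      (fun j => sub_pos.1 (he j)) hpos fun j => hAF j _
  · rwa [hF.dotProduct_linkMatrix_mulVec, hext _ _ subset_rfl, hF.intersectionNumber_swap, hexty,
      hF.intersectionNumber_swap]

theorem intersectionNumber_mul_le_sq_of_nonpos_on_ker (hF : IsSimplicialFan p 𝒯)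
    (l : Dual ℝ (ι → ℝ)) (hl : ∀ x, l x = 0 → intersectionNumber p 𝒯 (x :: x :: L) S ≤ 0)
    {c : ι → ℝ} (hc : 0 < intersectionNumber p 𝒯 (c :: c :: L) S) (x : ι → ℝ) :
    intersectionNumber p 𝒯 (x :: x :: L) S * intersectionNumber p 𝒯 (c :: c :: L) S ≤
      intersectionNumber p 𝒯 (c :: x :: L) S ^ 2 :=
  apply_self_mul_apply_self_le_sq_of_nonpos_on_ker (hF.intersectionForm_isSymm L S) l hl hc x

theorem alexandrov_fenchel (hF : IsSimplicialFan p 𝒯) (hL : ∀ a ∈ L, IsAmple p 𝒯 a) (hS : S ∈ 𝒯)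
    (hcard : S.card + 2 + L.length = finrank ℝ E) {c : ι → ℝ} (hc : IsAmple p 𝒯 c) (x : ι → ℝ) :
    intersectionNumber p 𝒯 (x :: x :: L) S * intersectionNumber p 𝒯 (c :: c :: L) S ≤
      intersectionNumber p 𝒯 (c :: x :: L) S ^ 2 := by
  have hpos : 0 < intersectionNumber p 𝒯 (c :: c :: L) S :=
    hF.intersectionNumber_pos (List.forall_mem_cons.2 ⟨hc, List.forall_mem_cons.2 ⟨hc, hL⟩⟩) hS
      (by rw [← hcard, List.length_cons, List.length_cons]; ring)
  induction L generalizing S c x with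
  | nil =>
    obtain ⟨l, hl⟩ := hF.exists_dual_forall_intersectionNumber_self_nonpos hS (by simpa using hcard)
    exact hF.intersectionNumber_mul_le_sq_of_nonpos_on_ker l hl hpos x
  | cons b L ih =>
    obtain ⟨hb, hL⟩ := List.forall_mem_cons.1 hL
    rw [List.length_cons] at hcard
    refine hF.intersectionNumber_mul_le_sq_of_nonpos_on_ker (hF.intersectionForm (b :: L) S b)
      (fun y hy => hF.intersectionNumber_self_nonpos_of_orthogonal_isAmple hS hb hL (by omega)
        (fun j z => ?_) hy) hpos x
    have hj : (insert (j : ι) S).card + 2 + L.length = finrank ℝ E := by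
      rw [Finset.card_insert_of_notMem j.2.1]
      omega
    exact ih hL j.2.2 hj hb z (hF.intersectionNumber_pos
      (List.forall_mem_cons.2 ⟨hb, List.forall_mem_cons.2 ⟨hb, hL⟩⟩) j.2.2
      (by rw [← hj, List.length_cons, List.length_cons]; ring))

end IsSimplicialFan

end Link

/-- An isotropic vector orthogonal to `c` is a zero of the positive semidefinite form
`B c x ^ 2 - B x x * B c c`, hence lies in its kernel. -/
theorem apply_eq_zero_of_apply_self_eq_zero {V : Type*} [AddCommGroup V] [Module ℝ V]
    {B : LinearMap.BilinForm ℝ V} (hB : B.IsSymm) {c : V} (hc : 0 < B c c)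
    (hhyp : ∀ x, B x x * B c c ≤ B c x ^ 2) {x : V} (hcx : B c x = 0) (hxx : B x x = 0) (y : V) :
    B x y = 0 := by
  by_contra hxy
  have h := hhyp (y + ((B c y ^ 2 + 1) / (2 * (B x y * B c c)) - B y y / (2 * B x y)) • x)
  simp only [map_add, map_smul, LinearMap.add_apply, LinearMap.smul_apply, smul_eq_mul, hcx, hxx,
    hB.eq y x, mul_zero, add_zero] at h
  have hc0 := hc.ne'
  field_simp at h
  linarith

section Kernel

variable {ι E : Type*} [NormedAddCommGroup E] [InnerProductSpace ℝ E] [FiniteDimensional ℝ E]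
  [Fintype ι] [DecidableEq ι] {p : ι → E} {𝒯 : Set (Finset ι)} {S : Finset ι} {L : List (ι → ℝ)}

namespace IsSimplicialFan

theorem continuous_intersectionNumber_map (hF : IsSimplicialFan p 𝒯) {X : Type*}
    [TopologicalSpace X] (L : List (X → ι → ℝ)) (hL : ∀ f ∈ L, Continuous f) (S : Finset ι) :
    Continuous fun t => intersectionNumber p 𝒯 (L.map (· t)) S := by
  induction L generalizing S with
  | nil => exact continuous_const
  | cons f L ih =>
    obtain ⟨hf, hL⟩ := List.forall_mem_cons.1 hL
    by_cases hS : S ∈ 𝒯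
    swap
    · simp only [intersectionNumber_of_notMem _ _ hS, continuous_const]
    choose w hw using fun i => exists_forall_inner_eq (hF.linearIndepOn hS) (Pi.single i 1)
    have hint : ∀ a : ι → ℝ, ∀ k ∈ S, ⟪∑ i ∈ S, a i • w i, p k⟫_ℝ = a k := fun a k hk => by
      rw [sum_inner, Finset.sum_eq_single_of_mem k hk fun i _ hik => by
        rw [real_inner_smul_left, hw i k hk, Pi.single_eq_of_ne hik.symm, mul_zero],
        real_inner_smul_left, hw k k hk, Pi.single_eq_same, mul_one]
    have hfi : ∀ i, Continuous fun t => f t i := fun i => (continuous_apply i).comp hf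
    simp only [List.map_cons, hF.intersectionNumber_cons _ hS _ (hint _)]
    have := fun k => ih hL (insert k S)
    fun_prop

/-- The Alexandrov–Fenchel inequality, extended to nef functions by approximation with ample
ones. -/
theorem alexandrov_fenchel_of_isNef (hF : IsSimplicialFan p 𝒯) {b : ι → ℝ} (hb : IsAmple p 𝒯 b)
    (hL : ∀ a ∈ L, IsNef p 𝒯 a) (hS : S ∈ 𝒯) (hcard : S.card + 2 + L.length = finrank ℝ E)
    {c : ι → ℝ} (hc : IsNef p 𝒯 c) (x : ι → ℝ) :
    intersectionNumber p 𝒯 (x :: x :: L) S * intersectionNumber p 𝒯 (c :: c :: L) S ≤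
      intersectionNumber p 𝒯 (c :: x :: L) S ^ 2 := by
  let f : (ι → ℝ) → ℝ → ι → ℝ := fun a t => a + t • b
  have hf : ∀ a, Continuous (f a) := fun a => by
    simp only [f]
    fun_prop
  have hcont : ∀ g h : ℝ → ι → ℝ, Continuous g → Continuous h → Tendsto (fun t =>
      intersectionNumber p 𝒯 (g t :: h t :: L.map (f · t)) S) (𝓝[>] 0)
        (𝓝 (intersectionNumber p 𝒯 (g 0 :: h 0 :: L) S)) := fun g h hg hh => by
    have hlim := ((hF.continuous_intersectionNumber_map (g :: h :: L.map f) (by simp [hg, hh, hf])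
      S).tendsto 0).mono_left (nhdsWithin_le_nhds (s := Set.Ioi 0))
    simpa [f, Function.comp_def] using hlim
  have hlim := le_of_tendsto_of_tendsto
    ((hcont (fun _ => x) (fun _ => x) continuous_const continuous_const).mul
      (hcont (f c) (f c) (hf c) (hf c)))
    ((hcont (f c) (fun _ => x) (hf c) continuous_const).pow 2) <| by
      filter_upwards [self_mem_nhdsWithin] with t ht
      refine hF.alexandrov_fenchel (fun a ha => ?_) hS (by simpa using hcard)
        (hc.add_smul_isAmple hb ht) x
      obtain ⟨a, haL, rfl⟩ := List.mem_map.1 ha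
      exact (hL a haL).add_smul_isAmple hb ht
  simpa [f] using hlim

theorem intersectionNumber_pos_of_forall_mem_normalFan (hF : IsSimplicialFan p 𝒯) {b : ι → ℝ}
    (hb : IsAmple p 𝒯 b) (hS : S ∈ 𝒯) (hL : ∀ c ∈ L, IsNef p 𝒯 c ∧ S ∈ normalFan p c)
    (hcard : S.card + L.length = finrank ℝ E) : 0 < intersectionNumber p 𝒯 L S := by
  suffices h : ∀ M : List (ι → ℝ), (∀ c ∈ M, IsAmple p 𝒯 c) →
      S.card + (L ++ M).length = finrank ℝ E → 0 < intersectionNumber p 𝒯 (L ++ M) S by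
    simpa using h [] (by simp) (by simpa using hcard)
  clear hcard
  induction L with
  | nil => exact fun M hM hcard => hF.intersectionNumber_pos hM hS hcard
  | cons c L ih =>
    intro M hM hcard
    obtain ⟨⟨-, v, hv⟩, hL'⟩ := List.forall_mem_cons.1 hL
    obtain ⟨w, hw⟩ := hb hS
    have hpos : 0 < intersectionNumber p 𝒯 (b :: (L ++ M)) S := by
      rw [← hF.intersectionNumber_perm List.perm_middle]
      refine ih hL' (b :: M) (List.forall_mem_cons.2 ⟨hb, hM⟩) ?_
      simp only [List.length_append, List.length_cons] at hcard ⊢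
      omega
    obtain ⟨δ, hδ, hδc⟩ := exists_pos_forall_pos_add_mul (fun j => c j - ⟪v, p j⟫_ℝ)
      fun j => -(b j - ⟪w, p j⟫_ℝ)
    rw [hF.intersectionNumber_cons _ hS b fun i hi => (hw i).2.2 hi] at hpos
    rw [List.cons_append, hF.intersectionNumber_cons _ hS c fun i hi => (hv i).2.2 hi]
    refine (mul_pos hδ hpos).trans_le ?_
    rw [Finset.mul_sum]
    refine Finset.sum_le_sum fun j _ => ?_
    rw [← mul_assoc]
    refine mul_le_mul_of_nonneg_right ?_ (hF.intersectionNumber_nonneg (fun a ha => ?_) _)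
    · by_cases hj : j ∈ S
      · rw [(hv j).2.2 hj, (hw j).2.2 hj, sub_self, sub_self, mul_zero]
      · have := hδc j (sub_pos.2 ((hv j).1.lt_of_ne fun h => hj ((hv j).2.1 h)))
        linarith
    · exact (List.mem_append.1 ha).elim (fun h => (hL' a h).1) fun h => (hM a h).isNef

/-- The kernel of the intersection form passes to the links: by the Hodge index inequality in the
link of each vertex, the terms of `0 = intersectionNumber p 𝒯 (c :: x :: x :: L) S` all have the
same sign. -/
theorem intersectionNumber_insert_eq_zero_of_forall_eq_zero (hF : IsSimplicialFan p 𝒯) {b : ι → ℝ}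
    (hb : IsAmple p 𝒯 b) (hS : S ∈ 𝒯) (hL : ∀ a ∈ L, IsNef p 𝒯 a) {c : ι → ℝ}
    (hc : IsNef p 𝒯 c) (hSc : S ∈ normalFan p c) (hcard : S.card + 3 + L.length = finrank ℝ E)
    (hpos : ∀ j : LinkVertex 𝒯 S, 0 < intersectionNumber p 𝒯 (c :: c :: L) (insert ↑j S))
    {x : ι → ℝ} (hx : ∀ y, intersectionNumber p 𝒯 (x :: y :: c :: L) S = 0)
    (j : LinkVertex 𝒯 S) (y : ι → ℝ) : intersectionNumber p 𝒯 (x :: y :: L) (insert ↑j S) = 0 := by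
  obtain ⟨v, hv⟩ := hSc
  have hcx : ∀ j : LinkVertex 𝒯 S, intersectionNumber p 𝒯 (c :: x :: L) (insert ↑j S) = 0 :=
    fun j => by
      rw [← hF.intersectionNumber_single_cons _ j.2.1, ← hx (Pi.single ↑j 1)]
      exact hF.intersectionNumber_perm (List.perm_middle (l₁ := [Pi.single ↑j 1, c])) S
  have hAF : ∀ (j : LinkVertex 𝒯 S) y, intersectionNumber p 𝒯 (y :: y :: L) (insert ↑j S) *
      intersectionNumber p 𝒯 (c :: c :: L) (insert ↑j S) ≤
        intersectionNumber p 𝒯 (c :: y :: L) (insert ↑j S) ^ 2 := fun j y =>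
    hF.alexandrov_fenchel_of_isNef hb hL j.2.2
      (by rw [Finset.card_insert_of_notMem j.2.1, ← hcard]) hc y
  have hxx : ∀ j : LinkVertex 𝒯 S, intersectionNumber p 𝒯 (x :: x :: L) (insert ↑j S) ≤ 0 :=
    fun j => nonpos_of_mul_nonpos_left (by simpa [hcx j] using hAF j x) (hpos j)
  have hsum : ∑ j : LinkVertex 𝒯 S, (c j - ⟪v, p j⟫_ℝ) *
      intersectionNumber p 𝒯 (x :: x :: L) (insert ↑j S) = 0 := by
    rw [← hF.intersectionNumber_cons_eq_sum_linkVertex _ hS fun i hi => (hv i).2.2 hi, ← hx x]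
    exact hF.intersectionNumber_perm (List.perm_middle (l₁ := [x, x])).symm S
  have hcv : ∀ j : LinkVertex 𝒯 S, 0 < c j - ⟪v, p j⟫_ℝ := fun j =>
    sub_pos.2 ((hv j).1.lt_of_ne fun h => j.2.1 ((hv j).2.1 h))
  have hxx0 := (Finset.sum_eq_zero_iff_of_nonpos fun j _ =>
    mul_nonpos_of_nonneg_of_nonpos (hcv j).le (hxx j)).1 hsum j (Finset.mem_univ j)
  exact apply_eq_zero_of_apply_self_eq_zero (hF.intersectionForm_isSymm L _) (hpos j) (hAF j)
    (hcx j) ((mul_eq_zero.1 hxx0).resolve_left (hcv j).ne') y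

theorem intersectionNumber_replicate_eq_zero (hF : IsSimplicialFan p 𝒯) {b : ι → ℝ}
    (hb : IsAmple p 𝒯 b) {c : ι → ℝ} (hc : IsNef p 𝒯 c) (hc0 : ∅ ∈ normalFan p c)
    (hc1 : ∀ i, {i} ∈ normalFan p c) {x : ι → ℝ} {k m : ℕ}
    (hcard : k + m + 2 = finrank ℝ E)
    (hx : ∀ y, intersectionNumber p 𝒯
      (x :: y :: (List.replicate k c ++ List.replicate m b)) ∅ = 0) (y : ι → ℝ) :
    intersectionNumber p 𝒯 (x :: y :: List.replicate (k + m) b) ∅ = 0 := by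
  induction k generalizing m with
  | zero => simpa using hx y
  | succ k ih =>
    let L := List.replicate k c ++ List.replicate m b
    have hmem : ∀ a ∈ L, a = c ∨ a = b := fun a ha => (List.mem_append.1 ha).imp
      List.eq_of_mem_replicate List.eq_of_mem_replicate
    have hL : ∀ a ∈ L, IsNef p 𝒯 a := fun a ha => by
      rcases hmem a ha with rfl | rfl
      exacts [hc, hb.isNef]
    have hlen : L.length = k + m := by simp [L]
    have hpos : ∀ j : LinkVertex 𝒯 ∅, 0 < intersectionNumber p 𝒯 (c :: c :: L) (insert ↑j ∅) := by
      intro j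
      have hcj : IsNef p 𝒯 c ∧ insert ↑j ∅ ∈ normalFan p c := ⟨hc, hc1 j⟩
      refine hF.intersectionNumber_pos_of_forall_mem_normalFan hb j.2.2 (List.forall_mem_cons.2
        ⟨hcj, List.forall_mem_cons.2 ⟨hcj, fun a ha => ?_⟩⟩) ?_
      · rcases hmem a ha with rfl | rfl
        exacts [hcj, ⟨hb.isNef, hb j.2.2⟩]
      · rw [List.length_cons, List.length_cons, hlen, Finset.card_insert_of_notMem j.2.1,
          Finset.card_empty]
        omega
    have hlink := hF.intersectionNumber_insert_eq_zero_of_forall_eq_zero hb hF.empty_mem hL hc hc0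
      (by rw [hlen, Finset.card_empty]; omega) hpos hx
    rw [show k + 1 + m = k + (m + 1) by ring]
    refine ih (by omega) fun y => ?_
    have hperm : (x :: y :: (List.replicate k c ++ List.replicate (m + 1) b)).Perm
        (b :: x :: y :: L) := List.perm_middle (l₁ := x :: y :: List.replicate k c)
    rw [hF.intersectionNumber_perm hperm,
      hF.intersectionNumber_cons_eq_sum_linkVertex (v := 0) _ hF.empty_mem
        (by simp)]
    exact Finset.sum_eq_zero fun j _ => by rw [hlink, mul_zero]

theorem intersectionNumber_replicate_eq_zero_of_isAmple (hF : IsSimplicialFan p 𝒯) {b : ι → ℝ}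
    (hb : IsAmple p 𝒯 b) {x : ι → ℝ} {m : ℕ} (hcard : S.card + m + 2 = finrank ℝ E)
    (hx : ∀ y, intersectionNumber p 𝒯 (x :: y :: List.replicate (S.card + m) b) ∅ = 0)
    (hS : S ∈ 𝒯) (y : ι → ℝ) :
    intersectionNumber p 𝒯 (x :: y :: List.replicate m b) S = 0 := by
  induction S using Finset.induction_on generalizing m y with
  | empty => simpa using hx y
  | insert j S hj ih =>
    rw [Finset.card_insert_of_notMem hj] at hcard hx
    have hS' := hF.mem_of_subset hS (Finset.subset_insert _ _)
    have hL : ∀ {k}, ∀ a ∈ List.replicate k b, IsAmple p 𝒯 a := fun a ha => by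
      rwa [List.eq_of_mem_replicate ha]
    refine hF.intersectionNumber_insert_eq_zero_of_forall_eq_zero hb hS'
      (fun a ha => (hL a ha).isNef) hb.isNef (hb hS')
      (by rw [List.length_replicate]; omega) (fun k => ?_)
      (ih (m := m + 1) (by omega) (by rwa [← add_assoc, add_right_comm]) hS') ⟨j, hj, hS⟩ y
    refine hF.intersectionNumber_pos (L := List.replicate (m + 2) b) hL k.2.2 ?_
    rw [Finset.card_insert_of_notMem k.2.1, List.length_replicate]
    omega

theorem exists_forall_inner_eq_of_codim_one (hF : IsSimplicialFan p 𝒯) (hS : S ∈ 𝒯)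
    (hc : S.card + 1 = finrank ℝ E) {x : ι → ℝ} (hx : intersectionNumber p 𝒯 [x] S = 0) :
    ∃ v : E, ∀ i, insert i S ∈ 𝒯 → ⟪v, p i⟫_ℝ = x i := by
  obtain ⟨u, hu0, hu⟩ := exists_ne_zero_forall_inner_eq_zero p (S := S) (by omega)
  obtain ⟨j, -, hTj, huj⟩ := hF.exists_inner_pos hS hu0 hu
  let v := interpolant p (insert j S) x
  have hv : ∀ i ∈ insert j S, ⟪v, p i⟫_ℝ = x i := fun i => hF.inner_interpolant hTj x
  have hneg : ∀ k : LinkVertex 𝒯 S, (k : ι) ≠ j → ⟪u, p k⟫_ℝ < 0 := by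
    intro k hkj
    refine lt_of_le_of_ne (not_lt.1 fun h => ?_) fun h => hu0 ?_
    · exact hkj (hF.eq_of_inner_mul_inner_pos hc hu k.2.2 hTj (mul_pos h huj))
    · exact eq_zero_of_forall_inner_eq_zero (hF.linearIndepOn k.2.2)
        (by rw [Finset.card_insert_of_notMem k.2.1, hc])
        ((Finset.forall_mem_insert _ _ _).2 ⟨h, hu⟩)
  refine ⟨v, fun i hTi => ?_⟩
  by_cases hi : i ∈ insert j S
  · exact hv i hi
  obtain ⟨hij, hiS⟩ : i ≠ j ∧ i ∉ S := by simpa using hi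
  let i' : LinkVertex 𝒯 S := ⟨i, hiS, hTi⟩
  rw [hF.intersectionNumber_cons_eq_sum_linkVertex [] hS fun k hk =>
      hv k (Finset.mem_insert_of_mem hk), Fintype.sum_eq_single i', mul_eq_zero] at hx
  · refine (sub_eq_zero.1 (hx.resolve_right ?_)).symm
    exact (hF.intersectionNumber_pos (by simp) hTi
      (by rw [Finset.card_insert_of_notMem hiS, List.length_nil, add_zero, hc])).ne'
  · intro k hki
    by_cases hkj : (k : ι) = j
    · rw [hkj, hv j (Finset.mem_insert_self _ _), sub_self, zero_mul]
    · exact absurd (Subtype.ext (hF.eq_of_inner_mul_inner_pos hc hu k.2.2 hTi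
        (mul_pos_of_neg_of_neg (hneg k hkj) (hneg i' hij)))) hki

theorem exists_forall_inner_eq_of_forall_codim_one (hF : IsSimplicialFan p 𝒯) {x : ι → ℝ}
    (hx : ∀ S ∈ 𝒯, S.card + 1 = finrank ℝ E → intersectionNumber p 𝒯 [x] S = 0) {k : ℕ}
    (hS : S ∈ 𝒯) (hc : S.card + k + 1 = finrank ℝ E) :
    ∃ v : E, ∀ i, insert i S ∈ 𝒯 → ⟪v, p i⟫_ℝ = x i := by
  induction k generalizing S with
  | zero => exact hF.exists_forall_inner_eq_of_codim_one hS hc (hx S hS hc)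
  | succ k ih =>
    have hlink : ∀ j : LinkVertex 𝒯 S, ∃ v : E, ∀ i, insert i (insert ↑j S) ∈ 𝒯 →
        ⟪v, p i⟫_ℝ = x i := fun j =>
      ih j.2.2 (by rw [Finset.card_insert_of_notMem j.2.1]; omega)
    choose v hv using hlink
    have hadj : ∀ j k : LinkVertex 𝒯 S, insert ↑k (insert ↑j S) ∈ 𝒯 → v k = v j := by
      intro j k hT
      by_contra hne
      have hzero : ∀ i, insert i (insert ↑k (insert ↑j S)) ∈ 𝒯 → ⟪v k - v j, p i⟫_ℝ = 0 := by
        intro i hTi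
        rw [inner_sub_left, hv k i (hF.mem_of_subset hTi (by grind)),
          hv j i (hF.mem_of_subset hTi (by grind)), sub_self]
      obtain ⟨i, -, hTi, hpos⟩ := hF.exists_inner_pos hT (sub_ne_zero.2 hne) fun i hi =>
        hzero i (by rwa [Finset.insert_eq_of_mem hi])
      exact hpos.ne' (hzero i hTi)
    obtain ⟨j₀, hj₀, hTj₀⟩ := hF.exists_insert_mem hS (by omega)
    let w := v ⟨j₀, hj₀, hTj₀⟩
    have hconst : ∀ j : LinkVertex 𝒯 S, v j = w := by
      intro j
      obtain ⟨k, hk, hkj⟩ := hF.mem_of_forall_insert_insert_mem hS (by omega)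
        (I := Subtype.val '' {k : LinkVertex 𝒯 S | v k = w}) hj₀ hTj₀
        ⟨⟨j₀, hj₀, hTj₀⟩, rfl, rfl⟩ (by
          rintro _ ⟨i, hi, rfl⟩ k - hk - hT
          exact ⟨⟨k, hk, hF.mem_of_subset hT (by grind)⟩, (hadj i _ hT).trans hi, rfl⟩) j.2.1 j.2.2
      exact Subtype.ext hkj ▸ hk
    refine ⟨w, fun i hTi => ?_⟩
    by_cases hi : i ∈ S
    · exact hv _ i (by rwa [Finset.insert_eq_of_mem (Finset.mem_insert_of_mem hi)])
    · rw [← hconst ⟨i, hi, hTi⟩]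
      exact hv ⟨i, hi, hTi⟩ i (by rwa [Finset.insert_eq_of_mem (Finset.mem_insert_self _ _)])

/-- For `c` only nef, the kernel of the intersection form consists of the linear functions of the
rays: an element of the kernel stays in the kernel if `c` is replaced by an ample `b`, and then
descends to all links. -/
theorem exists_forall_inner_eq_of_forall_intersectionNumber_eq_zero (hF : IsSimplicialFan p 𝒯)
    {b : ι → ℝ} (hb : IsAmple p 𝒯 b) {c : ι → ℝ} (hc : IsNef p 𝒯 c) (hc0 : ∅ ∈ normalFan p c)
    (hc1 : ∀ i, {i} ∈ normalFan p c) {m : ℕ} (hm : m + 2 = finrank ℝ E) (h1 : ∀ i, {i} ∈ 𝒯)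
    {x : ι → ℝ} (hx : ∀ y, intersectionNumber p 𝒯 (x :: y :: List.replicate m c) ∅ = 0) :
    ∃ v : E, ∀ i, ⟪v, p i⟫_ℝ = x i := by
  have hample := hF.intersectionNumber_replicate_eq_zero hb hc hc0 hc1 (m := 0) hm
    (by simpa using hx)
  suffices hcodim : ∀ S ∈ 𝒯, S.card + 1 = finrank ℝ E → intersectionNumber p 𝒯 [x] S = 0 by
    obtain ⟨v, hv⟩ := hF.exists_forall_inner_eq_of_forall_codim_one hcodim (k := m + 1)
      hF.empty_mem (by rw [Finset.card_empty]; omega)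
    exact ⟨v, fun i => hv i (h1 i)⟩
  intro S hS hcard
  obtain ⟨j, S, hjS, rfl, hSm⟩ := Finset.card_eq_succ.1 (show S.card = m + 1 by omega)
  rw [← hF.intersectionNumber_single_cons _ hjS, hF.intersectionNumber_swap]
  refine hF.intersectionNumber_replicate_eq_zero_of_isAmple hb (m := 0) (by omega) (fun y => ?_)
    (hF.mem_of_subset hS (Finset.subset_insert _ _)) _
  rw [hSm, add_zero]
  exact hample y

end IsSimplicialFan

end Kernel

section BoundarySubdivision

variable {ι E : Type*} [NormedAddCommGroup E] [InnerProductSpace ℝ E]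

/-- `S` lies in `boundarySubdivision p a` if the points `p i`, `i ∈ S`, are the vertices of a cell
of the regular subdivision of `convexHull ℝ (Set.range p)` with heights `a` and if this cell is
contained in the boundary of the polytope. -/
def boundarySubdivision (p : ι → E) (a : ι → ℝ) : Set (Finset ι) :=
  {S | (∃ (v : E) (s : ℝ), (∀ i, ⟪v, p i⟫_ℝ ≤ s) ∧ (∀ i ∈ S, ⟪v, p i⟫_ℝ = s) ∧
      ∃ i, ⟪v, p i⟫_ℝ < s) ∧
    ∃ s : ℝ, S ∈ normalFan p fun i => a i + s}

/-- Heights `a` are generic if the points over which they agree with an affine function are always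
affinely independent, so that all regular subdivisions with heights `a` are triangulations. -/
def IsGeneric (p : ι → E) (a : ι → ℝ) : Prop :=
  ∀ (S : Finset ι) (v : E) (s : ℝ), (∀ i ∈ S, ⟪v, p i⟫_ℝ = a i + s) →
    ∀ l : ι → ℝ, ∑ i ∈ S, l i = 0 → ∑ i ∈ S, l i • p i = 0 → ∀ i ∈ S, l i = 0

theorem exists_isGeneric [Finite ι] (p : ι → E) : ∃ a, IsGeneric p a := by
  classical
  let Dep : Finset ι × (ι → ℝ) → Prop := fun D =>
    ∑ i ∈ D.1, D.2 i = 0 ∧ ∑ i ∈ D.1, D.2 i • p i = 0 ∧ ∃ i ∈ D.1, D.2 i ≠ 0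
  have hex : ∀ S : {S : Finset ι // ∃ l, Dep (S, l)}, ∃ l, Dep (S, l) := Subtype.prop
  choose l hl using hex
  obtain ⟨a, ha⟩ := Module.Dual.exists_forall_ne_zero_of_forall_exists
    (fun S => ∑ i ∈ S.1, l S i • LinearMap.proj (R := ℝ) (φ := fun _ : ι => ℝ) i) fun S => by
      obtain ⟨i, hi, hne⟩ := (hl S).2.2
      exact ⟨Pi.single i 1, by simpa [Pi.single_apply, hi] using hne⟩
  refine ⟨a, fun S v s hv l' hl1 hl2 => ?_⟩
  by_contra! hne
  obtain ⟨h1, h2, -⟩ := hl ⟨S, l', hl1, hl2, hne⟩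
  refine ha ⟨S, l', hl1, hl2, hne⟩ ?_
  have hinner := congrArg (fun y => ⟪v, y⟫_ℝ) h2
  simp only [inner_sum, inner_smul_right, inner_zero_right] at hinner
  rw [Finset.sum_congr rfl fun i hi => by rw [hv i hi, mul_add], Finset.sum_add_distrib,
    ← Finset.sum_mul, h1, zero_mul, add_zero] at hinner
  simpa using hinner

variable {p : ι → E} {a : ι → ℝ} {S : Finset ι}

theorem boundarySubdivision_sub_const (p : ι → E) (a : ι → ℝ) (x : E) :
    boundarySubdivision (fun i => p i - x) a = boundarySubdivision p a := by
  ext S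
  refine and_congr (exists_congr fun v => (Equiv.addRight ⟪v, x⟫_ℝ).exists_congr fun s => ?_) ?_
  · simp only [Equiv.coe_addRight, inner_sub_right, sub_le_iff_le_add, sub_eq_iff_eq_add,
      sub_lt_iff_lt_add]
  · simp only [normalFan, Set.mem_ofPred_eq]
    rw [exists_comm, @exists_comm ℝ E]
    refine exists_congr fun v => (Equiv.addRight ⟪v, x⟫_ℝ).exists_congr fun s => ?_
    simp only [Equiv.coe_addRight, inner_sub_right, sub_le_iff_le_add, sub_eq_iff_eq_add,
      add_assoc]

theorem empty_mem_normalFan_one (p : ι → E) : ∅ ∈ normalFan p fun _ => 1 :=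
  ⟨0, fun i => by simp⟩

theorem empty_mem_boundarySubdivision [Finite ι] [Nonempty ι] (p : ι → E) (a : ι → ℝ) :
    ∅ ∈ boundarySubdivision p a := by
  obtain ⟨s, hs⟩ := (Set.finite_range fun i => -a i).bddAbove
  refine ⟨⟨0, 1, by simp⟩, s + 1, 0, fun i => ?_⟩
  have := hs ⟨i, rfl⟩
  simp only [inner_zero_left, Finset.notMem_empty, iff_false]
  constructor <;> linarith

theorem pos_of_forall_inner_le_of_exists_inner_lt
    (hp : ∀ u : E, u ≠ 0 → ∃ i, 0 < ⟪u, p i⟫_ℝ) {v : E} {s : ℝ} (hv : ∀ i, ⟪v, p i⟫_ℝ ≤ s)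
    (hlt : ∃ i, ⟪v, p i⟫_ℝ < s) : 0 < s := by
  rcases eq_or_ne v 0 with rfl | h0
  · obtain ⟨i, hi⟩ := hlt
    rwa [inner_zero_left] at hi
  · obtain ⟨i, hi⟩ := hp v h0
    exact hi.trans_le (hv i)

section

variable (hp : ∀ u : E, u ≠ 0 → ∃ i, 0 < ⟪u, p i⟫_ℝ)
include hp

theorem mem_boundarySubdivision_iff [Nonempty ι] : S ∈ boundarySubdivision p a ↔
    (∃ v : E, (∀ i, ⟪v, p i⟫_ℝ ≤ 1) ∧ ∀ i ∈ S, ⟪v, p i⟫_ℝ = 1) ∧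
      ∃ s : ℝ, S ∈ normalFan p fun i => a i + s := by
  refine and_congr_left' ⟨fun ⟨v, s, hv, hvS, hlt⟩ => ?_, fun ⟨v, hv, hvS⟩ => ⟨v, 1, hv, hvS, ?_⟩⟩
  · have hs := pos_of_forall_inner_le_of_exists_inner_lt hp hv hlt
    refine ⟨s⁻¹ • v, fun i => ?_, fun i hi => ?_⟩
    · rw [real_inner_smul_left, inv_mul_le_one₀ hs]
      exact hv i
    · rw [real_inner_smul_left, hvS i hi, inv_mul_cancel₀ hs.ne']
  · rcases eq_or_ne v 0 with rfl | h0
    · simp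
    · obtain ⟨i, hi⟩ := hp (-v) (neg_ne_zero.2 h0)
      rw [inner_neg_left] at hi
      exact ⟨i, by linarith⟩

/-- A limit argument: supporting vectors for a sequence of heights tending to `c` accumulate at a
supporting vector for `c`. -/
theorem eventually_notMem_normalFan_add_mul [Finite ι] [FiniteDimensional ℝ E] {c : ι → ℝ}
    (hS : ¬∃ v : E, (∀ i, ⟪v, p i⟫_ℝ ≤ c i) ∧ ∀ i ∈ S, ⟪v, p i⟫_ℝ = c i) (a : ι → ℝ) :
    ∀ᶠ ε in 𝓝[>] (0 : ℝ), S ∉ normalFan p fun i => c i + ε * a i := by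
  have hK := isCompact_setOf_forall_inner_le hp fun i => c i + |a i|
  have hclosed : IsClosed {z : ℝ × E | (∀ i, ⟪z.2, p i⟫_ℝ ≤ c i + z.1 * a i) ∧
      ∀ i ∈ S, ⟪z.2, p i⟫_ℝ = c i + z.1 * a i} := by
    simp only [Set.ofPred_and, Set.ofPred_forall]
    exact (isClosed_iInter fun i => isClosed_le (by fun_prop) (by fun_prop)).inter
      (isClosed_iInter fun i => isClosed_iInter fun _ => isClosed_eq (by fun_prop) (by fun_prop))
  have hnot := hK.eventually_forall_of_forall_eventually (x₀ := (0 : ℝ))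
    (P := fun ε v => ¬((∀ i, ⟪v, p i⟫_ℝ ≤ c i + ε * a i) ∧ ∀ i ∈ S, ⟪v, p i⟫_ℝ = c i + ε * a i))
    fun v _ => hclosed.isOpen_compl.mem_nhds (x := (0, v)) fun hv => hS ⟨v, by simpa using hv⟩
  filter_upwards [nhdsWithin_le_nhds hnot, self_mem_nhdsWithin,
    nhdsWithin_le_nhds (Iic_mem_nhds one_pos)] with ε hε hε0 hε1 ⟨v, hv⟩
  refine hε v (fun i => (hv i).1.trans ?_) ⟨fun i => (hv i).1, fun i hi => (hv i).2.2 hi⟩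
  have h1 : ε * a i ≤ ε * |a i| := mul_le_mul_of_nonneg_left (le_abs_self _) (le_of_lt hε0)
  have h2 := mul_le_of_le_one_left (abs_nonneg (a i)) hε1
  linarith

/-- Tilting a supporting vector `v` of a face to `ε • w + (1 - ε * s) • v` lifts the cells of the
subdivision contained in this face to cones of a normal fan. -/
theorem eventually_mem_normalFan_of_mem_boundarySubdivision [Nonempty ι]
    (hS : S ∈ boundarySubdivision p a) :
    ∀ᶠ ε in 𝓝[>] (0 : ℝ), S ∈ normalFan p fun i => 1 + ε * a i := by
  obtain ⟨⟨v, hv, hvS⟩, s, w, hw⟩ := (mem_boundarySubdivision_iff hp).1 hS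
  have hsmall : ∀ᶠ ε in 𝓝[>] (0 : ℝ), ε * s < 1 := nhdsWithin_le_nhds <|
    (continuous_mul_const s).tendsto 0 |>.eventually_lt_const (by simp)
  filter_upwards [hsmall, self_mem_nhdsWithin] with ε hεs hε
  have hinner : ∀ i, ⟪ε • w + (1 - ε * s) • v, p i⟫_ℝ =
      ε * ⟪w, p i⟫_ℝ + (1 - ε * s) * ⟪v, p i⟫_ℝ := fun i => by
    rw [inner_add_left, real_inner_smul_left, real_inner_smul_left]
  refine ⟨ε • w + (1 - ε * s) • v, fun i => ?_⟩
  rw [hinner]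
  by_cases hi : i ∈ S
  · have heq : ε * ⟪w, p i⟫_ℝ + (1 - ε * s) * ⟪v, p i⟫_ℝ = 1 + ε * a i := by
      rw [(hw i).2.2 hi, hvS i hi]
      ring
    exact ⟨heq.le, iff_of_true heq hi⟩
  · have h1 := mul_lt_mul_of_pos_left ((hw i).1.lt_of_ne fun h => hi ((hw i).2.1 h)) hε
    have h2 := mul_le_mul_of_nonneg_left (hv i) (sub_nonneg.2 hεs.le)
    have hlt : ε * ⟪w, p i⟫_ℝ + (1 - ε * s) * ⟪v, p i⟫_ℝ < 1 + ε * a i := by linarith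
    exact ⟨hlt.le, iff_of_false hlt.ne hi⟩

theorem exists_normalFan_eq_boundarySubdivision [Finite ι] [FiniteDimensional ℝ E] [Nonempty ι]
    (a : ι → ℝ) : ∃ c, normalFan p c = boundarySubdivision p a := by
  have hiff : ∀ S, ∀ᶠ ε in 𝓝[>] (0 : ℝ),
      S ∈ normalFan p (fun i => 1 + ε * a i) ↔ S ∈ boundarySubdivision p a := by
    intro S
    by_cases hS : S ∈ boundarySubdivision p a
    · filter_upwards [eventually_mem_normalFan_of_mem_boundarySubdivision hp hS] with ε hε
      exact iff_of_true hε hS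
    rw [mem_boundarySubdivision_iff hp, not_and_or] at hS
    simp only [mem_boundarySubdivision_iff hp]
    rcases hS with hS | hS
    · filter_upwards [eventually_notMem_normalFan_add_mul hp hS a] with ε hε
      exact iff_of_false hε fun h => hS h.1
    · filter_upwards [self_mem_nhdsWithin] with ε (hε : 0 < ε)
      refine iff_of_false (fun ⟨w, hw⟩ => hS ⟨ε⁻¹, ε⁻¹ • w, fun i => ?_⟩) fun h => hS h.2
      have hscale : a i + ε⁻¹ = ε⁻¹ * (1 + ε * a i) := by
        field_simp
        ring
      simpa only [hscale, real_inner_smul_left, mul_le_mul_iff_right₀ (inv_pos.2 hε),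
        mul_right_inj' (inv_ne_zero hε.ne')] using hw i
  obtain ⟨ε, hε⟩ := (eventually_all.2 hiff).exists
  exact ⟨_, Set.ext hε⟩

theorem linearIndepOn_of_mem_boundarySubdivision [Nonempty ι] (ha : IsGeneric p a)
    (hS : S ∈ boundarySubdivision p a) : LinearIndepOn ℝ p (S : Set ι) := by
  obtain ⟨⟨v, -, hv⟩, s, w, hw⟩ := (mem_boundarySubdivision_iff hp).1 hS
  refine linearIndepOn_finset_iff.2 fun l hl => ha S w s (fun i => (hw i).2.2) l ?_ hl
  have hinner := congrArg (fun y => ⟪v, y⟫_ℝ) hl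
  simp only [inner_sum, inner_smul_right, inner_zero_right] at hinner
  rwa [Finset.sum_congr rfl fun i hi => by rw [hv i hi, mul_one]] at hinner

theorem isNef_boundarySubdivision [Nonempty ι] (a : ι → ℝ) :
    IsNef p (boundarySubdivision p a) fun _ => 1 :=
  fun _ hS => ((mem_boundarySubdivision_iff hp).1 hS).1

theorem isSimplicialFan_boundarySubdivision [Finite ι] [FiniteDimensional ℝ E] [Nonempty ι]
    (ha : IsGeneric p a) : IsSimplicialFan p (boundarySubdivision p a) := by
  obtain ⟨c, hc⟩ := exists_normalFan_eq_boundarySubdivision hp a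
  rw [← hc]
  refine isSimplicialFan_normalFan hp ?_ fun S hS => ?_
  · exact hc ▸ empty_mem_boundarySubdivision p a
  · exact linearIndepOn_of_mem_boundarySubdivision hp ha (hc ▸ hS)

theorem nontrivial_of_forall_exists_inner_pos [Nontrivial E] : Nontrivial ι := by
  obtain ⟨u, hu⟩ := exists_ne (0 : E)
  obtain ⟨i, hi⟩ := hp u hu
  obtain ⟨j, hj⟩ := hp (-u) (neg_ne_zero.2 hu)
  rw [inner_neg_left, neg_pos] at hj
  exact ⟨i, j, fun hij => (hij ▸ hj).not_gt hi⟩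

theorem singleton_mem_normalFan_one [Nontrivial ι] {i : ι} {v : E}
    (hv : ∀ j ≠ i, ⟪v, p j⟫_ℝ < ⟪v, p i⟫_ℝ) : {i} ∈ normalFan p fun _ => 1 := by
  obtain ⟨j, hj⟩ := exists_ne i
  have hle : ∀ j, ⟪v, p j⟫_ℝ ≤ ⟪v, p i⟫_ℝ := fun j => by
    rcases eq_or_ne j i with rfl | hji
    exacts [le_rfl, (hv j hji).le]
  have hpos := pos_of_forall_inner_le_of_exists_inner_lt hp hle ⟨j, hv j hj⟩
  refine ⟨(⟪v, p i⟫_ℝ)⁻¹ • v, fun j => ?_⟩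
  simp only [real_inner_smul_left, inv_mul_le_one₀ hpos, Finset.mem_singleton,
    inv_mul_eq_one₀ hpos.ne']
  exact ⟨hle j, fun h => by_contra fun hji => (hv j hji).ne' h, fun h => by rw [h]⟩

end

theorem singleton_mem_boundarySubdivision [Finite ι] [Nontrivial ι] (a : ι → ℝ) {i : ι} {v : E}
    (hv : ∀ j ≠ i, ⟪v, p j⟫_ℝ < ⟪v, p i⟫_ℝ) : {i} ∈ boundarySubdivision p a := by
  obtain ⟨j, hj⟩ := exists_ne i
  obtain ⟨δ, hδ, hpos⟩ := exists_pos_forall_pos_add_mul (fun j => ⟪v, p i⟫_ℝ - ⟪v, p j⟫_ℝ)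
    fun j => a j - a i
  refine ⟨⟨v, ⟪v, p i⟫_ℝ, fun j => ?_, by simp, j, hv j hj⟩,
    δ⁻¹ * ⟪v, p i⟫_ℝ - a i, δ⁻¹ • v, fun j => ?_⟩
  · rcases eq_or_ne j i with rfl | hji
    exacts [le_rfl, (hv j hji).le]
  · rw [real_inner_smul_left, Finset.mem_singleton]
    rcases eq_or_ne j i with rfl | hji
    · simp
    · have h := mul_pos (inv_pos.2 hδ) (hpos j (sub_pos.2 (hv j hji)))
      rw [mul_add, inv_mul_cancel_left₀ hδ.ne'] at h
      have hlt : δ⁻¹ * ⟪v, p j⟫_ℝ < a j + (δ⁻¹ * ⟪v, p i⟫_ℝ - a i) := by linarith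
      exact ⟨hlt.le, iff_of_false hlt.ne hji⟩

theorem exists_forall_inner_lt_of_mem_extremePoints [Finite ι] [FiniteDimensional ℝ E]
    (hinj : Function.Injective p) {i : ι}
    (hi : p i ∈ Set.extremePoints ℝ (convexHull ℝ (Set.range p))) :
    ∃ v : E, ∀ j ≠ i, ⟪v, p j⟫_ℝ < ⟪v, p i⟫_ℝ := by
  have hnot : p i ∉ convexHull ℝ (p '' {i}ᶜ) := fun h => by
    obtain ⟨j, hj, hij⟩ := extremePoints_convexHull_subset
      (inter_extremePoints_subset_extremePoints_of_subset
        (convexHull_mono (Set.image_subset_range _ _)) ⟨h, hi⟩)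
    exact hj (hinj hij)
  have hclosed : IsClosed (convexHull ℝ (p '' {i}ᶜ)) :=
    ((Set.toFinite _).isCompact_convexHull ℝ).isClosed
  obtain ⟨f, s, hf, hs⟩ := geometric_hahn_banach_closed_point (convex_convexHull ℝ _) hclosed hnot
  refine ⟨(InnerProductSpace.toDual ℝ E).symm f, fun j hj => ?_⟩
  simp only [InnerProductSpace.toDual_symm_apply]
  exact (hf _ (subset_convexHull ℝ _ ⟨j, hj, rfl⟩)).trans hs

end BoundarySubdivision

section ExtremeFaces

variable {ι E : Type*} [NormedAddCommGroup E] [InnerProductSpace ℝ E] {p : ι → E}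

theorem inner_le_of_mem_convexHull {v y : E} {s : ℝ} (hv : ∀ i, ⟪v, p i⟫_ℝ ≤ s)
    (hy : y ∈ convexHull ℝ (Set.range p)) : ⟪v, y⟫_ℝ ≤ s :=
  convexHull_min (Set.range_subset_iff.2 hv)
    (convex_halfSpace_le (innerₗ E v).isLinear s) hy

theorem exists_inner_sub_pos_of_mem_interior {x : E}
    (hx : x ∈ interior (convexHull ℝ (Set.range p))) (u : E) (hu : u ≠ 0) :
    ∃ i, 0 < ⟪u, p i - x⟫_ℝ := by
  by_contra! hle
  simp only [inner_sub_right, sub_nonpos] at hle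
  have hcont : Tendsto (fun t : ℝ => x + t • u) (𝓝[>] 0) (𝓝 x) :=
    tendsto_nhdsWithin_of_tendsto_nhds (Continuous.tendsto' (by fun_prop) 0 x (by simp))
  obtain ⟨t, hmem, ht⟩ := ((hcont.eventually_mem (mem_interior_iff_mem_nhds.1 hx)).and
    self_mem_nhdsWithin).exists
  have := inner_le_of_mem_convexHull hle hmem
  rw [inner_add_right, inner_smul_right] at this
  have := mul_pos (Set.mem_Ioi.1 ht) (real_inner_self_pos.2 hu)
  linarith

theorem inner_lt_of_mem_interior {x v : E} {s : ℝ}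
    (hx : x ∈ interior (convexHull ℝ (Set.range p))) (hv : ∀ i, ⟪v, p i⟫_ℝ ≤ s)
    (hlt : ∃ i, ⟪v, p i⟫_ℝ < s) : ⟪v, x⟫_ℝ < s := by
  refine sub_pos.1 (pos_of_forall_inner_le_of_exists_inner_lt (v := v) (s := s - ⟪v, x⟫_ℝ)
    (exists_inner_sub_pos_of_mem_interior hx) (fun i => ?_) (hlt.imp fun i hi => ?_))
  · rw [inner_sub_right]; linarith [hv i]
  · rw [inner_sub_right]; linarith

theorem mem_of_mem_affineSpan_of_isExtreme [FiniteDimensional ℝ E] {A F : Set E}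
    (hF : IsExtreme ℝ A F) (hconv : Convex ℝ F) {y : E} (hyA : y ∈ A)
    (hy : y ∈ affineSpan ℝ F) : y ∈ F := by
  have hne : F.Nonempty := (affineSpan_nonempty ℝ).1 ⟨y, hy⟩
  obtain ⟨_, z, hz, rfl⟩ := hne.intrinsicInterior hconv
  -- Moving from the relative interior point `z` slightly away from `y` stays inside `F`.
  let γ : ℝ → affineSpan ℝ F := fun t =>
    ⟨AffineMap.lineMap (z : E) y t, AffineMap.lineMap_mem t z.2 hy⟩
  have hγ : Tendsto γ (𝓝[<] 0) (𝓝 z) := by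
    refine tendsto_nhdsWithin_of_tendsto_nhds (Continuous.tendsto' ?_ 0 z (by simp [γ]))
    exact AffineMap.lineMap_continuous.subtype_mk _
  obtain ⟨t, htF, (ht : t < 0)⟩ := ((hγ.eventually_mem (mem_interior_iff_mem_nhds.1 hz)).and
    self_mem_nhdsWithin).exists
  have hpos : 0 < 1 - t := by linarith
  refine hF.left_mem_of_mem_openSegment hyA (hF.subset htF)
    (Set.mem_preimage.1 (interior_subset hz))
    ⟨-t / (1 - t), 1 / (1 - t), by apply div_pos <;> linarith, by positivity,
      by field_simp; ring, ?_⟩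
  change (-t / (1 - t)) • y + (1 / (1 - t)) • AffineMap.lineMap (z : E) y t = z
  rw [AffineMap.lineMap_apply_module]
  match_scalars <;> field_simp
  ring

theorem mem_of_mem_convexHull_image (hinj : Function.Injective p) {m : ι}
    (hm : p m ∈ (convexHull ℝ (Set.range p)).extremePoints ℝ) {I : Set ι}
    (h : p m ∈ convexHull ℝ (p '' I)) : m ∈ I :=
  hinj.mem_set_image.1 <| extremePoints_convexHull_subset <|
    inter_extremePoints_subset_extremePoints_of_subset
      (convexHull_mono (Set.image_subset_range p I)) ⟨h, hm⟩

theorem notMem_affineSpan_of_isExtreme [FiniteDimensional ℝ E] (hinj : Function.Injective p)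
    {m : ι} (hm : p m ∈ (convexHull ℝ (Set.range p)).extremePoints ℝ) {I : Set ι}
    (hI : IsExtreme ℝ (convexHull ℝ (Set.range p)) (convexHull ℝ (p '' I))) (hmI : m ∉ I) :
    p m ∉ affineSpan ℝ (p '' I) := by
  intro hmem
  rw [← affineSpan_convexHull] at hmem
  exact hmI <| mem_of_mem_convexHull_image hinj hm <|
    mem_of_mem_affineSpan_of_isExtreme hI (convex_convexHull ℝ _) hm.1 hmem

theorem not_collinear_of_mem_extremePoints (hinj : Function.Injective p)
    (hext : ∀ i, p i ∈ (convexHull ℝ (Set.range p)).extremePoints ℝ) {i j k : ι} (hij : i ≠ j)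
    (hjk : j ≠ k) (hki : k ≠ i) : ¬ Collinear ℝ {p i, p j, p k} := by
  have key : ∀ i j k, i ≠ j → j ≠ k → ¬ Wbtw ℝ (p i) (p j) (p k) := fun i j k hij hjk h =>
    ((mem_extremePoints_iff_forall_segment.1 (hext j)).2 _ (hext i).1 _ (hext k).1
      (mem_segment_iff_wbtw.2 h)).elim (hinj.ne hij) (hinj.ne hjk.symm)
  intro h
  rcases h.wbtw_or_wbtw_or_wbtw with h | h | h
  exacts [key i j k hij hjk h, key j k i hjk hki h, key k i j hki hij h]

theorem eq_convexHull_inter_of_isExtreme {A F : Set E} (hA : A.Finite)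
    (hF : IsExtreme ℝ (convexHull ℝ A) F) (hconv : Convex ℝ F) (hclosed : IsClosed F) :
    F = convexHull ℝ (A ∩ F) := by
  have hcomp : IsCompact F := (hA.isCompact_convexHull ℝ).of_isClosed_subset hclosed hF.subset
  refine subset_antisymm ?_ (convexHull_min Set.inter_subset_right hconv)
  calc F = closure (convexHull ℝ (F.extremePoints ℝ)) :=
        (closure_convexHull_extremePoints hcomp hconv).symm
    _ ⊆ closure (convexHull ℝ (A ∩ F)) := closure_mono <| convexHull_mono fun y hy =>
        ⟨extremePoints_convexHull_subset (hF.extremePoints_subset_extremePoints hy), hy.1⟩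
    _ = convexHull ℝ (A ∩ F) := ((hA.inter_of_left F).isClosed_convexHull ℝ).closure_eq

/-- The labels of the points which lie on the smallest exposed face of
`convexHull ℝ (Set.range p)` containing all `p i`, `i ∈ S`. -/
def faceClosure (p : ι → E) (S : Set ι) : Set ι :=
  {m | ∀ (v : E) (s : ℝ), (∀ i, ⟪v, p i⟫_ℝ ≤ s) → (∀ i ∈ S, ⟪v, p i⟫_ℝ = s) → ⟪v, p m⟫_ℝ = s}

theorem subset_faceClosure (p : ι → E) (S : Set ι) : S ⊆ faceClosure p S :=
  fun _ hi _ _ _ h => h _ hi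

theorem faceClosure_mono {S T : Set ι} (h : S ⊆ T) : faceClosure p S ⊆ faceClosure p T :=
  fun _ hm v s hv hT => hm v s hv fun i hi => hT i (h hi)

theorem isExtreme_convexHull_image_faceClosure [Finite ι] (p : ι → E) (S : Set ι) :
    IsExtreme ℝ (convexHull ℝ (Set.range p)) (convexHull ℝ (p '' faceClosure p S)) := by
  let H : Set E := {y | ∀ (v : E) (s : ℝ), (∀ i, ⟪v, p i⟫_ℝ ≤ s) → (∀ i ∈ S, ⟪v, p i⟫_ℝ = s) →
    ⟪v, y⟫_ℝ = s}
  have hHconv : Convex ℝ H := fun y hy z hz b c _ _ hbc v s hv hS => by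
    rw [inner_add_right, inner_smul_right, inner_smul_right, hy v s hv hS, hz v s hv hS,
      ← add_mul, hbc, one_mul]
  have hHclosed : IsClosed H := by
    simp only [H, Set.ofPred_forall]
    exact isClosed_iInter fun v => isClosed_iInter fun s => isClosed_iInter fun _ =>
      isClosed_iInter fun _ => isClosed_eq (by fun_prop) continuous_const
  have hext : IsExtreme ℝ (convexHull ℝ (Set.range p)) (convexHull ℝ (Set.range p) ∩ H) := by
    refine ⟨Set.inter_subset_left, fun y hy z hz w hw hwyz => ⟨hy, fun v s hv hS => ?_⟩⟩
    obtain ⟨b, c, hb, hc, hbc, rfl⟩ := hwyz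
    have hw := hw.2 v s hv hS
    rw [inner_add_right, inner_smul_right, inner_smul_right] at hw
    have hyle := inner_le_of_mem_convexHull hv hy
    have hzle := inner_le_of_mem_convexHull hv hz
    have hcs : b * s = s - c * s := by linear_combination s * hbc
    refine hyle.antisymm (le_of_mul_le_mul_left ?_ hb)
    linarith [mul_le_mul_of_nonneg_left hzle hc.le]
  have hface := eq_convexHull_inter_of_isExtreme (Set.finite_range p) hext
    ((convex_convexHull ℝ _).inter hHconv)
    (((Set.finite_range p).isClosed_convexHull ℝ).inter hHclosed)
  have himage : Set.range p ∩ (convexHull ℝ (Set.range p) ∩ H) = p '' faceClosure p S := by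
    rw [← Set.inter_assoc, Set.inter_eq_left.2 (subset_convexHull ℝ _), Set.inter_comm,
      ← Set.image_preimage_eq_inter_range]
    rfl
  rwa [hface, himage] at hext

theorem isExtreme_segment_of_forall_collinear [Finite ι] (hinj : Function.Injective p)
    (hext : ∀ i, p i ∈ (convexHull ℝ (Set.range p)).extremePoints ℝ) {i j : ι} (hij : i ≠ j)
    (h : ∀ m ∈ faceClosure p {i, j}, Collinear ℝ {p m, p i, p j}) :
    IsExtreme ℝ (convexHull ℝ (Set.range p)) (segment ℝ (p i) (p j)) := by
  have hcl : faceClosure p {i, j} = {i, j} := by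
    refine subset_antisymm (fun m hm => ?_) (subset_faceClosure p _)
    by_contra! hne
    simp only [Set.mem_insert_iff, Set.mem_singleton_iff, not_or] at hne
    exact not_collinear_of_mem_extremePoints hinj hext hne.1 hij (Ne.symm hne.2) (h m hm)
  have := isExtreme_convexHull_image_faceClosure p {i, j}
  rwa [hcl, Set.image_pair, convexHull_pair] at this

theorem isExtreme_segment_of_finrank_eq_one [Finite ι] (hinj : Function.Injective p)
    (hext : ∀ i, p i ∈ (convexHull ℝ (Set.range p)).extremePoints ℝ) {i j : ι} (hij : i ≠ j)
    (h1 : finrank ℝ E = 1) :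
    IsExtreme ℝ (convexHull ℝ (Set.range p)) (segment ℝ (p i) (p j)) := by
  have : FiniteDimensional ℝ E := .of_finrank_pos (by omega)
  exact isExtreme_segment_of_forall_collinear hinj hext hij fun m _ =>
    collinear_iff_finrank_le_one.2 (h1 ▸ Submodule.finrank_le _)

end ExtremeFaces

section FaceWeight

variable {ι E : Type*} [NormedAddCommGroup E] [InnerProductSpace ℝ E] {p : ι → E} {a : ι → ℝ}
  {x : E} {k : ℕ} {S : Finset ι}

theorem IsGeneric.sub_const (ha : IsGeneric p a) (x : E) : IsGeneric (fun i => p i - x) a := by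
  intro S v s hv l hl hlp
  refine ha S v (s + ⟪v, x⟫_ℝ) (fun i hi => ?_) l hl ?_
  · rw [← add_assoc, ← hv i hi, inner_sub_right, sub_add_cancel]
  · simpa only [smul_sub, Finset.sum_sub_distrib, ← Finset.sum_smul, hl, zero_smul, sub_zero]
      using hlp

theorem inner_eq_of_mem_affineSpan {v y : E} {s : ℝ} {I : Set ι} (h : ∀ i ∈ I, ⟪v, p i⟫_ℝ = s)
    (hy : y ∈ affineSpan ℝ (p '' I)) : ⟪v, y⟫_ℝ = s := by
  refine affineSpan_induction hy (by rintro _ ⟨i, hi, rfl⟩; exact h i hi) fun c u w z hu hw hz => ?_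
  rw [vsub_eq_sub, vadd_eq_add, inner_add_right, inner_smul_right, inner_sub_right, hu, hw, hz,
    sub_self, mul_zero, zero_add]

theorem nonempty_of_mem_interior_convexHull (hx : x ∈ interior (convexHull ℝ (Set.range p))) :
    Nonempty ι :=
  Set.range_nonempty_iff_nonempty.1 (convexHull_nonempty_iff.1 ⟨x, interior_subset hx⟩)

variable [FiniteDimensional ℝ E]

theorem isSimplicialFan_sub_of_mem_interior [Finite ι] (ha : IsGeneric p a)
    (hx : x ∈ interior (convexHull ℝ (Set.range p))) :
    IsSimplicialFan (fun i => p i - x) (boundarySubdivision p a) := by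
  have := nonempty_of_mem_interior_convexHull hx
  rw [← boundarySubdivision_sub_const p a x]
  exact isSimplicialFan_boundarySubdivision (exists_inner_sub_pos_of_mem_interior hx)
    (ha.sub_const x)

omit [FiniteDimensional ℝ E] in
theorem isNef_one_of_mem_interior (a : ι → ℝ) (hx : x ∈ interior (convexHull ℝ (Set.range p))) :
    IsNef (fun i => p i - x) (boundarySubdivision p a) 1 := by
  have := nonempty_of_mem_interior_convexHull hx
  rw [← boundarySubdivision_sub_const p a x]
  exact isNef_boundarySubdivision (exists_inner_sub_pos_of_mem_interior hx) a

theorem exists_isAmple_of_mem_interior [Finite ι] (a : ι → ℝ)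
    (hx : x ∈ interior (convexHull ℝ (Set.range p))) :
    ∃ b, IsAmple (fun i => p i - x) (boundarySubdivision p a) b := by
  have := nonempty_of_mem_interior_convexHull hx
  obtain ⟨b, hb⟩ :=
    exists_normalFan_eq_boundarySubdivision (exists_inner_sub_pos_of_mem_interior hx) a
  rw [boundarySubdivision_sub_const] at hb
  exact ⟨b, hb.ge⟩

section Vertex

variable [Nontrivial E] [Finite ι] (hinj : Function.Injective p) {i : ι}
  (hi : p i ∈ (convexHull ℝ (Set.range p)).extremePoints ℝ)
  (hx : x ∈ interior (convexHull ℝ (Set.range p)))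
include hinj hi hx

theorem singleton_mem_boundarySubdivision_of_mem_extremePoints (a : ι → ℝ) :
    {i} ∈ boundarySubdivision p a := by
  have := nontrivial_of_forall_exists_inner_pos (exists_inner_sub_pos_of_mem_interior hx)
  obtain ⟨v, hv⟩ := exists_forall_inner_lt_of_mem_extremePoints hinj hi
  exact singleton_mem_boundarySubdivision a hv

theorem singleton_mem_normalFan_one_of_mem_extremePoints :
    {i} ∈ normalFan (fun i => p i - x) 1 := by
  have hpos := exists_inner_sub_pos_of_mem_interior hx
  have := nontrivial_of_forall_exists_inner_pos hpos
  obtain ⟨v, hv⟩ := exists_forall_inner_lt_of_mem_extremePoints hinj hi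
  exact singleton_mem_normalFan_one hpos fun j hj => by
    simpa only [inner_sub_right, sub_lt_sub_iff_right] using hv j hj

end Vertex

variable [Fintype ι] [DecidableEq ι]

/-- The intersection number over the cell `S` of `k` copies of the constant vector `1`, which
consists of the support numbers of the polar dual `{v | ∀ i, ⟪v, p i - x⟫_ℝ ≤ 1}`. Up to a
constant it is the volume of the face of the polar dual corresponding to `S`, divided by
`parallelepipedVolume (fun i => p i - x) S`. -/
noncomputable def faceWeight (p : ι → E) (a : ι → ℝ) (k : ℕ) (x : E) (S : Finset ι) : ℝ :=
  intersectionNumber (fun i => p i - x) (boundarySubdivision p a) (List.replicate k 1) S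

theorem faceWeight_nonneg (ha : IsGeneric p a) (hx : x ∈ interior (convexHull ℝ (Set.range p))) :
    0 ≤ faceWeight p a k x S :=
  (isSimplicialFan_sub_of_mem_interior ha hx).intersectionNumber_nonneg
    (fun _ hc => List.eq_of_mem_replicate hc ▸ isNef_one_of_mem_interior a hx) S

omit [FiniteDimensional ℝ E] in
theorem mem_of_faceWeight_ne_zero (h : faceWeight p a k x S ≠ 0) : S ∈ boundarySubdivision p a :=
  not_imp_comm.1 (intersectionNumber_of_notMem _ _) h

theorem faceWeight_singleton_pos [Nontrivial E] (hinj : Function.Injective p) (ha : IsGeneric p a)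
    (hx : x ∈ interior (convexHull ℝ (Set.range p))) {i : ι}
    (hi : p i ∈ (convexHull ℝ (Set.range p)).extremePoints ℝ) :
    0 < faceWeight p a (finrank ℝ E - 1) x {i} := by
  obtain ⟨b, hb⟩ := exists_isAmple_of_mem_interior a hx
  refine (isSimplicialFan_sub_of_mem_interior ha hx).intersectionNumber_pos_of_forall_mem_normalFan
    hb (singleton_mem_boundarySubdivision_of_mem_extremePoints hinj hi hx a) (fun c hc => ?_) ?_
  · rw [List.eq_of_mem_replicate hc]
    exact ⟨isNef_one_of_mem_interior a hx,
      singleton_mem_normalFan_one_of_mem_extremePoints hinj hi hx⟩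
  · have := finrank_pos (R := ℝ) (M := E)
    rw [Finset.card_singleton, List.length_replicate]
    omega

theorem faceWeight_succ (ha : IsGeneric p a) (hx : x ∈ interior (convexHull ℝ (Set.range p)))
    (hS : S ∈ boundarySubdivision p a) {v : E} {s : ℝ} (hvS : ∀ i ∈ S, ⟪v, p i⟫_ℝ = s)
    (hvx : ⟪v, x⟫_ℝ < s) :
    faceWeight p a (k + 1) x S =
      ∑ j, (s - ⟪v, p j⟫_ℝ) / (s - ⟪v, x⟫_ℝ) * faceWeight p a k x (insert j S) := by
  have hne : s - ⟪v, x⟫_ℝ ≠ 0 := (sub_pos.2 hvx).ne'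
  have hinner : ∀ i, ⟪(s - ⟪v, x⟫_ℝ)⁻¹ • v, p i - x⟫_ℝ =
      1 - (s - ⟪v, p i⟫_ℝ) / (s - ⟪v, x⟫_ℝ) := fun i => by
    rw [real_inner_smul_left, inner_sub_right]
    field_simp
    ring
  rw [faceWeight, List.replicate_succ,
    (isSimplicialFan_sub_of_mem_interior ha hx).intersectionNumber_cons _ hS
      (v := (s - ⟪v, x⟫_ℝ)⁻¹ • v)]
  · exact Finset.sum_congr rfl fun j _ => by rw [hinner, Pi.one_apply, sub_sub_cancel, faceWeight]
  · intro i hi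
    rw [hinner, hvS i hi, sub_self, zero_div, sub_zero, Pi.one_apply]

theorem continuousOn_faceWeight (ha : IsGeneric p a) (k : ℕ) (S : Finset ι) :
    ContinuousOn (fun x => faceWeight p a k x S) (interior (convexHull ℝ (Set.range p))) := by
  by_cases hS : S ∈ boundarySubdivision p a
  swap
  · simp only [faceWeight, intersectionNumber_of_notMem _ _ hS, continuousOn_const]
  induction k generalizing S with
  | zero =>
    simp only [faceWeight, List.replicate_zero, intersectionNumber, hS, true_and]
    split_ifs
    · have hcont : Continuous fun x => parallelepipedVolume (fun i => p i - x) S :=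
        (continuous_parallelepipedVolume S).comp (f := fun x i => p i - x) (by fun_prop)
      exact hcont.continuousOn.inv₀ fun x hx => (parallelepipedVolume_pos
        ((isSimplicialFan_sub_of_mem_interior ha hx).linearIndepOn hS)).ne'
    · exact continuousOn_const
  | succ k ih =>
    obtain ⟨⟨v, s, hv, hvS, hlt⟩, -⟩ := id hS
    refine ContinuousOn.congr (continuousOn_finsetSum Finset.univ fun j _ => ContinuousOn.mul ?_ ?_)
      fun x hx => faceWeight_succ ha hx hS hvS (inner_lt_of_mem_interior hx hv hlt)
    · exact continuousOn_const.div (by fun_prop) fun x hx =>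
        (sub_pos.2 (inner_lt_of_mem_interior hx hv hlt)).ne'
    · by_cases hj : insert j S ∈ boundarySubdivision p a
      · exact ih _ hj
      · simp only [faceWeight, intersectionNumber_of_notMem _ _ hj, continuousOn_const]

theorem exists_faceWeight_insert_ne_zero (ha : IsGeneric p a)
    (hx : x ∈ interior (convexHull ℝ (Set.range p))) (h : faceWeight p a (k + 1) x S ≠ 0) :
    ∃ (v : E) (s : ℝ), (∀ i, ⟪v, p i⟫_ℝ ≤ s) ∧ (∀ i ∈ S, ⟪v, p i⟫_ℝ = s) ∧
      ∃ j, ⟪v, p j⟫_ℝ < s ∧ faceWeight p a k x (insert j S) ≠ 0 := by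
  have hS := mem_of_faceWeight_ne_zero h
  obtain ⟨⟨v, s, hv, hvS, hlt⟩, -⟩ := id hS
  rw [faceWeight_succ ha hx hS hvS (inner_lt_of_mem_interior hx hv hlt)] at h
  obtain ⟨j, -, hj⟩ := Finset.exists_ne_zero_of_sum_ne_zero h
  refine ⟨v, s, hv, hvS, j, (hv j).lt_of_ne fun hjs => hj ?_, right_ne_zero_of_mul hj⟩
  rw [hjs, sub_self, zero_div, zero_mul]

omit [Fintype ι] [DecidableEq ι] in
theorem mem_affineSpan_of_card_eq_finrank [Finite ι] (ha : IsGeneric p a)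
    (hx : x ∈ interior (convexHull ℝ (Set.range p))) (hS : S ∈ boundarySubdivision p a)
    (hcard : S.card = finrank ℝ E) {m : ι} (hm : m ∈ faceClosure p S) :
    p m ∈ affineSpan ℝ (p '' S) := by
  have hspan := span_image_eq_top_of_card_eq_finrank
    ((isSimplicialFan_sub_of_mem_interior ha hx).linearIndepOn hS) hcard
  obtain ⟨l, hl⟩ := (Submodule.mem_span_image_finset_iff_exists_fun' ℝ).1
    (hspan ▸ Submodule.mem_top : p m - x ∈ _)
  obtain ⟨⟨v, s, hv, hvS, hlt⟩, -⟩ := hS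
  have hpos : 0 < s - ⟪v, x⟫_ℝ := sub_pos.2 (inner_lt_of_mem_interior hx hv hlt)
  have hsum : ∑ i ∈ S, l i = 1 := by
    have hinner := congrArg (fun y => ⟪v, y⟫_ℝ) hl
    simp only [inner_sum, inner_smul_right, inner_sub_right, hm v s hv hvS] at hinner
    rw [Finset.sum_congr rfl fun i hi => by rw [hvS i hi], ← Finset.sum_mul] at hinner
    exact mul_right_cancel₀ hpos.ne' (hinner.trans (one_mul _).symm)
  have hp : ∑ i ∈ S, l i • p i = p m := by
    simp only [smul_sub, Finset.sum_sub_distrib, ← Finset.sum_smul, hsum, one_smul] at hl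
    exact sub_left_injective hl
  rw [← hp, ← S.affineCombination_eq_linear_combination _ _ hsum]
  exact affineCombination_mem_affineSpan_image hsum (fun i hi hi' => absurd hi hi') p

theorem mem_affineSpan_of_faceWeight_ne_zero (ha : IsGeneric p a)
    (hx : x ∈ interior (convexHull ℝ (Set.range p))) (hne : S.Nonempty)
    (hcard : S.card + k = finrank ℝ E) (h : faceWeight p a k x S ≠ 0) {m : ι}
    (hm : m ∈ faceClosure p S) : p m ∈ affineSpan ℝ (p '' S) := by
  induction k generalizing S with
  | zero => exact mem_affineSpan_of_card_eq_finrank ha hx (mem_of_faceWeight_ne_zero h) hcard hm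
  | succ k ih =>
    obtain ⟨v, s, hv, hvS, j, hjs, hj⟩ := exists_faceWeight_insert_ne_zero ha hx h
    have hjS : j ∉ S := fun hjS => hjs.ne (hvS j hjS)
    have hmem := ih (S.insert_nonempty j) (by rw [Finset.card_insert_of_notMem hjS]; omega) hj
      (faceClosure_mono (by simp) hm)
    obtain ⟨i, hi⟩ := hne
    rw [Finset.coe_insert, Set.image_insert_eq, ← affineSpan_insert_affineSpan,
      AffineSubspace.mem_affineSpan_insert_iff
        (subset_affineSpan ℝ _ (Set.mem_image_of_mem p hi))] at hmem
    obtain ⟨r, y, hy, hpm⟩ := hmem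
    -- Both `p m` and `y` lie on the supporting hyperplane, which does not contain `p j`.
    have hr : r * (⟪v, p j⟫_ℝ - s) = 0 := by
      have := congrArg (fun y => ⟪v, y⟫_ℝ) hpm
      simp only [vsub_eq_sub, vadd_eq_add, inner_add_right, inner_smul_right, inner_sub_right,
        hm v s hv hvS, hvS i hi, inner_eq_of_mem_affineSpan hvS hy] at this
      linarith
    rw [mul_eq_zero, sub_eq_zero, or_iff_left hjs.ne] at hr
    rwa [hpm, hr, zero_smul, zero_vadd]

theorem isExtreme_segment_of_faceWeight_ne_zero (hinj : Function.Injective p)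
    (hext : ∀ i, p i ∈ (convexHull ℝ (Set.range p)).extremePoints ℝ) (ha : IsGeneric p a)
    (hx : x ∈ interior (convexHull ℝ (Set.range p))) {i j : ι} (hij : i ≠ j)
    (hk : k + 2 = finrank ℝ E) (h : faceWeight p a k x {i, j} ≠ 0) :
    IsExtreme ℝ (convexHull ℝ (Set.range p)) (segment ℝ (p i) (p j)) := by
  refine isExtreme_segment_of_forall_collinear hinj hext hij fun m hm =>
    collinear_insert_of_mem_affineSpan_pair ?_
  have := mem_affineSpan_of_faceWeight_ne_zero (m := m) ha hx (by simp)
    (by rw [Finset.card_pair hij]; omega) h (by simpa using hm)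
  rwa [Finset.coe_pair, Set.image_pair] at this

end FaceWeight

section StressForm

variable {ι E : Type*} [NormedAddCommGroup E] [InnerProductSpace ℝ E] [Fintype ι] [DecidableEq ι]
  {p : ι → E} {a α : ι → ℝ} {x : E}

theorem IsSimplicialFan.intersectionForm_single_single [FiniteDimensional ℝ E]
    {𝒯 : Set (Finset ι)} (hF : IsSimplicialFan p 𝒯) (L : List (ι → ℝ)) {i j : ι} (hij : i ≠ j) :
    hF.intersectionForm L ∅ (Pi.single i 1) (Pi.single j 1) =
      intersectionNumber p 𝒯 L {i, j} := by
  rw [hF.intersectionForm_apply, hF.intersectionNumber_single_cons _ (Finset.notMem_empty i),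
    insert_empty_eq, hF.intersectionNumber_single_cons _ (by simpa using hij.symm),
    Finset.pair_comm]

/-- A symmetric bilinear form `B` on functions on the vertices, viewed as an Izmestiev matrix of the
polytope with vertices `p i` based at the point `x`: it is supported on the diagonal and the edges,
nonnegative on the edges, its row sums are the barycentric coordinates `α` of `x`, it is negative
semidefinite on the `B`-orthogonal complement of `1`, and its kernel consists of the linear
functions of `p i - x`. -/
structure IsStressForm (p : ι → E) (x : E) (α : ι → ℝ) (B : LinearMap.BilinForm ℝ (ι → ℝ)) :
    Prop where
  isSymm : B.IsSymm
  apply_one_left : ∀ y, B 1 y = ∑ i, α i * y i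
  weight_pos : ∀ i, 0 < α i
  sum_weight : ∑ i, α i = 1
  apply_single_nonneg : ∀ i j, i ≠ j → 0 ≤ B (Pi.single i 1) (Pi.single j 1)
  isExtreme_segment : ∀ i j, i ≠ j → B (Pi.single i 1) (Pi.single j 1) ≠ 0 →
    IsExtreme ℝ (convexHull ℝ (Set.range p)) (segment ℝ (p i) (p j))
  apply_inner_left : ∀ v y, B (fun i => ⟪v, p i - x⟫_ℝ) y = 0
  apply_self_nonpos : ∀ y, B 1 y = 0 → B y y ≤ 0
  exists_inner_eq : ∀ y, B 1 y = 0 → B y y = 0 → ∃ v, ∀ i, ⟪v, p i - x⟫_ℝ = y i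

/-- The Wachspress coordinate of `x` at the vertex `i`: the barycentric coordinate proportional to
the weight `faceWeight p a (finrank ℝ E - 1) x {i}` of the facet of the polar dual corresponding
to `i`. -/
noncomputable def wachspressCoordinate (p : ι → E) (a : ι → ℝ) (x : E) (i : ι) : ℝ :=
  faceWeight p a (finrank ℝ E - 1) x {i} / ∑ j, faceWeight p a (finrank ℝ E - 1) x {j}

variable [FiniteDimensional ℝ E] [Nontrivial E] (hinj : Function.Injective p)
  (hext : ∀ i, p i ∈ (convexHull ℝ (Set.range p)).extremePoints ℝ) (ha : IsGeneric p a)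

include hinj hext ha

theorem sum_faceWeight_singleton_pos (hx : x ∈ interior (convexHull ℝ (Set.range p))) :
    0 < ∑ i, faceWeight p a (finrank ℝ E - 1) x {i} :=
  have := nonempty_of_mem_interior_convexHull hx
  Finset.sum_pos (fun i _ => faceWeight_singleton_pos hinj ha hx (hext i)) Finset.univ_nonempty

theorem continuousOn_wachspressCoordinate (i : ι) :
    ContinuousOn (fun x => wachspressCoordinate p a x i)
      (interior (convexHull ℝ (Set.range p))) :=
  (continuousOn_faceWeight ha _ _).div
    (continuousOn_finsetSum _ fun _ _ => continuousOn_faceWeight ha _ _)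
    fun _ hx => (sum_faceWeight_singleton_pos hinj hext ha hx).ne'

variable (hx : x ∈ interior (convexHull ℝ (Set.range p)))

include hx

theorem wachspressCoordinate_pos (i : ι) : 0 < wachspressCoordinate p a x i :=
  div_pos (faceWeight_singleton_pos hinj ha hx (hext i))
    (sum_faceWeight_singleton_pos hinj hext ha hx)

theorem sum_wachspressCoordinate : ∑ i, wachspressCoordinate p a x i = 1 := by
  simp only [wachspressCoordinate]
  rw [← Finset.sum_div, div_self (sum_faceWeight_singleton_pos hinj hext ha hx).ne']

theorem intersectionNumber_cons_replicate_one (y : ι → ℝ) :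
    intersectionNumber (fun i => p i - x) (boundarySubdivision p a)
      (y :: List.replicate (finrank ℝ E - 1) 1) ∅ =
        (∑ i, faceWeight p a (finrank ℝ E - 1) x {i}) *
          ∑ i, wachspressCoordinate p a x i * y i := by
  have hF := isSimplicialFan_sub_of_mem_interior ha hx
  have hG := (sum_faceWeight_singleton_pos hinj hext ha hx).ne'
  rw [hF.intersectionNumber_cons_eq_sum, Finset.mul_sum]
  refine Finset.sum_congr rfl fun i _ => ?_
  rw [hF.intersectionNumber_single_cons _ (Finset.notMem_empty i), insert_empty_eq,
    wachspressCoordinate, ← mul_assoc, mul_div_cancel₀ _ hG, faceWeight, mul_comm]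

theorem sum_wachspressCoordinate_mul_inner_sub (v : E) :
    ∑ i, wachspressCoordinate p a x i * ⟪v, p i - x⟫_ℝ = 0 := by
  have h := intersectionNumber_cons_replicate_one hinj hext ha hx fun i => ⟪v, p i - x⟫_ℝ
  rw [(isSimplicialFan_sub_of_mem_interior ha hx).intersectionNumber_inner_cons] at h
  exact (mul_eq_zero.1 h.symm).resolve_left (sum_faceWeight_singleton_pos hinj hext ha hx).ne'

theorem sum_wachspressCoordinate_smul : ∑ i, wachspressCoordinate p a x i • p i = x := by
  refine sub_eq_zero.1 (ext_inner_left ℝ fun v => ?_)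
  rw [inner_zero_right, ← sum_wachspressCoordinate_mul_inner_sub hinj hext ha hx v]
  simp only [inner_sub_right, inner_sum, inner_smul_right, mul_sub, Finset.sum_sub_distrib,
    ← Finset.sum_mul, sum_wachspressCoordinate hinj hext ha hx, one_mul]

theorem exists_isStressForm_of_two_le_finrank (hd : 2 ≤ finrank ℝ E) :
    ∃ B, IsStressForm p x (wachspressCoordinate p a x) B := by
  have hF := isSimplicialFan_sub_of_mem_interior ha hx
  have hnef := isNef_one_of_mem_interior a hx
  obtain ⟨b, hb⟩ := exists_isAmple_of_mem_interior a hx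
  obtain ⟨m, hm⟩ := Nat.exists_eq_add_of_le' hd
  let B := hF.intersectionForm (List.replicate m 1) ∅
  let G := ∑ i, faceWeight p a (finrank ℝ E - 1) x {i}
  have hG : 0 < G := sum_faceWeight_singleton_pos hinj hext ha hx
  have hsymm : B.IsSymm := hF.intersectionForm_isSymm _ _
  have hone : ∀ y, B 1 y = G * ∑ i, wachspressCoordinate p a x i * y i := fun y => by
    rw [← intersectionNumber_cons_replicate_one hinj hext ha hx, hsymm.eq, hm]
    rfl
  have hone_one : B 1 1 = G := by
    simp only [hone, Pi.one_apply, mul_one, sum_wachspressCoordinate hinj hext ha hx]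
  have hhyp : ∀ y, B y y * B 1 1 ≤ B 1 y ^ 2 := hF.alexandrov_fenchel_of_isNef hb
    (fun c hc => List.eq_of_mem_replicate hc ▸ hnef) hF.empty_mem
    (by rw [List.length_replicate, Finset.card_empty]; omega) hnef
  have hsingle : ∀ i j, i ≠ j → B (Pi.single i 1) (Pi.single j 1) = faceWeight p a m x {i, j} :=
    fun i j hij => hF.intersectionForm_single_single _ hij
  have hscale : ∀ y z, (G⁻¹ • B) y z = G⁻¹ * B y z := fun _ _ => rfl
  have hzero : ∀ y z, (G⁻¹ • B) y z = 0 ↔ B y z = 0 := fun y z => by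
    rw [hscale, mul_eq_zero, or_iff_right (inv_pos.2 hG).ne']
  refine ⟨G⁻¹ • B, ⟨fun y z => by simp only [hscale, hsymm.eq]⟩, fun y => ?_,
    wachspressCoordinate_pos hinj hext ha hx, sum_wachspressCoordinate hinj hext ha hx,
    fun i j hij => ?_, fun i j hij h => ?_, fun v y => ?_, fun y hy => ?_, fun y hy hyy => ?_⟩
  · rw [hscale, hone, inv_mul_cancel_left₀ hG.ne']
  · rw [hscale, hsingle i j hij]
    exact mul_nonneg (inv_pos.2 hG).le (faceWeight_nonneg ha hx)
  · rw [Ne, hzero, hsingle i j hij] at h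
    exact isExtreme_segment_of_faceWeight_ne_zero hinj hext ha hx hij hm.symm h
  · exact (hzero _ _).2 (hF.intersectionNumber_inner_cons _ _ v)
  · have h := hhyp y
    rw [(hzero _ _).1 hy, hone_one, zero_pow two_ne_zero] at h
    exact mul_nonpos_of_nonneg_of_nonpos (inv_pos.2 hG).le (nonpos_of_mul_nonpos_left h hG)
  · exact hF.exists_forall_inner_eq_of_forall_intersectionNumber_eq_zero hb hnef
      (empty_mem_normalFan_one _)
      (fun i => singleton_mem_normalFan_one_of_mem_extremePoints hinj (hext i) hx) hm.symm
      (fun i => singleton_mem_boundarySubdivision_of_mem_extremePoints hinj (hext i) hx a)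
      (apply_eq_zero_of_apply_self_eq_zero hsymm (hone_one ▸ hG) hhyp ((hzero _ _).1 hy)
        ((hzero _ _).1 hyy))

theorem exists_isStressForm_of_finrank_eq_one (hd : finrank ℝ E = 1) :
    ∃ B, IsStressForm p x (wachspressCoordinate p a x) B := by
  have hF := isSimplicialFan_sub_of_mem_interior ha hx
  let α := wachspressCoordinate p a x
  let f : (ι → ℝ) →ₗ[ℝ] ℝ := ∑ i, α i • LinearMap.proj i
  have hf : ∀ y, f y = ∑ i, α i * y i := fun y => by
    simp only [f, LinearMap.sum_apply, LinearMap.smul_apply, LinearMap.proj_apply, smul_eq_mul]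
  have hone : f 1 = 1 := by
    simp only [hf, Pi.one_apply, mul_one]
    exact sum_wachspressCoordinate hinj hext ha hx
  have hα : ∀ i, 0 < α i := wachspressCoordinate_pos hinj hext ha hx
  have hf_single : ∀ i, f (Pi.single i 1) = α i := fun i => by
    simp only [hf, Pi.single_apply, mul_ite, mul_one, mul_zero, Finset.sum_ite_eq',
      Finset.mem_univ, if_true]
  refine ⟨LinearMap.BilinForm.linMulLin f f, ⟨fun y z => mul_comm _ _⟩, fun y => ?_, hα,
    sum_wachspressCoordinate hinj hext ha hx, fun i j _ => ?_,
    fun i j hij _ => isExtreme_segment_of_finrank_eq_one hinj hext hij hd, fun v y => ?_,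
    fun y hy => ?_, fun y hy _ => ?_⟩
  · rw [LinearMap.BilinForm.linMulLin_apply, hone, one_mul, hf]
  · rw [LinearMap.BilinForm.linMulLin_apply, hf_single, hf_single]
    exact (mul_pos (hα i) (hα j)).le
  · rw [LinearMap.BilinForm.linMulLin_apply, hf,
      sum_wachspressCoordinate_mul_inner_sub hinj hext ha hx, zero_mul]
  all_goals rw [LinearMap.BilinForm.linMulLin_apply, hone, one_mul] at hy
  · rw [LinearMap.BilinForm.linMulLin_apply, hy, zero_mul]
  · have hy0 : intersectionNumber (fun i => p i - x) (boundarySubdivision p a) [y] ∅ = 0 := by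
      have h := intersectionNumber_cons_replicate_one hinj hext ha hx y
      rwa [← hf, hy, mul_zero, hd] at h
    obtain ⟨v, hv⟩ := hF.exists_forall_inner_eq_of_forall_codim_one (S := ∅) (k := 0)
      (fun S _ hS => by rwa [Finset.card_eq_zero.1 (by omega : S.card = 0)]) hF.empty_mem
      (by rw [hd, Finset.card_empty])
    exact ⟨v, fun i => hv i <| by
      simpa using singleton_mem_boundarySubdivision_of_mem_extremePoints hinj (hext i) hx a⟩

theorem exists_isStressForm : ∃ B, IsStressForm p x (wachspressCoordinate p a x) B := by
  rcases Nat.lt_or_ge 1 (finrank ℝ E) with hd | hd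
  · exact exists_isStressForm_of_two_le_finrank hinj hext ha hx hd
  · exact exists_isStressForm_of_finrank_eq_one hinj hext ha hx
      (le_antisymm hd (finrank_pos (R := ℝ) (M := E)))

end StressForm

section StressInequality

variable {ι E F : Type*} [NormedAddCommGroup E] [InnerProductSpace ℝ E] [Fintype ι] {p : ι → E}
  {α : ι → ℝ} {x : E}

theorem sum_smul_sub_sum_smul [AddCommGroup F] [Module ℝ F] (hα : ∑ i, α i = 1) (q : ι → F) :
    ∑ i, α i • (q i - ∑ j, α j • q j) = 0 := by
  simp only [smul_sub, Finset.sum_sub_distrib, ← Finset.sum_smul, hα, one_smul, sub_self]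

variable [NormedAddCommGroup F] [InnerProductSpace ℝ F]

theorem sum_mul_norm_sub_sq_eq_add (hα : ∑ i, α i = 1) (q : ι → F) (c : F) :
    ∑ i, α i * ‖q i - c‖ ^ 2 =
      ∑ i, α i * ‖q i - ∑ j, α j • q j‖ ^ 2 + ‖∑ j, α j • q j - c‖ ^ 2 := by
  have hcross : ∑ i, α i * ⟪q i - ∑ j, α j • q j, ∑ j, α j • q j - c⟫_ℝ = 0 := by
    simp only [← real_inner_smul_left]
    rw [← sum_inner, sum_smul_sub_sum_smul hα, inner_zero_left]
  have hsq : ∀ i, ‖q i - c‖ ^ 2 = ‖q i - ∑ j, α j • q j‖ ^ 2 +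
      2 * ⟪q i - ∑ j, α j • q j, ∑ j, α j • q j - c⟫_ℝ + ‖∑ j, α j • q j - c‖ ^ 2 := fun i => by
    rw [← norm_add_sq_real, sub_add_sub_cancel]
  simp only [hsq, mul_add, Finset.sum_add_distrib, ← Finset.sum_mul, hα, one_mul]
  simp only [mul_left_comm _ (2 : ℝ), ← Finset.mul_sum, hcross, mul_zero, add_zero]

variable [DecidableEq ι] {B : LinearMap.BilinForm ℝ (ι → ℝ)}

namespace IsStressForm

theorem apply_self (h : IsStressForm p x α B) (y : ι → ℝ) :
    B y y = ∑ i, α i * y i ^ 2 -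
      2⁻¹ * ∑ i, ∑ j, B (Pi.single i 1) (Pi.single j 1) * (y i - y j) ^ 2 := by
  have hexpand : ∀ y z, B y z = ∑ i, ∑ j, B (Pi.single i 1) (Pi.single j 1) * (y i * z j) :=
    fun y z => by
      conv_lhs => rw [← Matrix.toBilin'_toMatrix' B, Matrix.toBilin'_apply]
      exact Finset.sum_congr rfl fun i _ => Finset.sum_congr rfl fun j _ => by
        rw [LinearMap.BilinForm.toMatrix'_apply]
        ring
  have hrow : ∀ i, ∑ j, B (Pi.single i 1) (Pi.single j 1) = α i := fun i => by
    rw [← map_sum, Finset.univ_sum_single (fun _ => (1 : ℝ)), h.isSymm.eq]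
    exact (h.apply_one_left _).trans (by simp [Pi.single_apply])
  rw [← sum_rowSum_mul_sq_sub_sum_mul (fun i j => h.isSymm.eq _ _) y, hexpand y y]
  simp only [hrow, sub_sub_cancel]

theorem sum_apply_inner_self {κ : Type*} [Fintype κ] (h : IsStressForm p x α B)
    (e : OrthonormalBasis κ ℝ F) (z : ι → F) :
    ∑ k, B (fun i => ⟪e k, z i⟫_ℝ) (fun i => ⟪e k, z i⟫_ℝ) = ∑ i, α i * ‖z i‖ ^ 2 -
      2⁻¹ * ∑ i, ∑ j, B (Pi.single i 1) (Pi.single j 1) * ‖z i - z j‖ ^ 2 := by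
  have hsq : ∀ w : F, ‖w‖ ^ 2 = ∑ k, ⟪e k, w⟫_ℝ ^ 2 := fun w => by
    simp only [← e.sum_sq_norm_inner_right, Real.norm_eq_abs, sq_abs]
  simp only [h.apply_self, hsq, Finset.sum_sub_distrib, inner_sub_right, Finset.mul_sum]
  rw [Finset.sum_comm]
  congr 1
  rw [Finset.sum_comm]
  exact Finset.sum_congr rfl fun i _ => Finset.sum_comm

theorem sum_mul_norm_sub_sq_eq [FiniteDimensional ℝ E] (h : IsStressForm p x α B) :
    ∑ i, α i * ‖p i - x‖ ^ 2 =
      2⁻¹ * ∑ i, ∑ j, B (Pi.single i 1) (Pi.single j 1) * ‖p i - p j‖ ^ 2 := by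
  have := h.sum_apply_inner_self (stdOrthonormalBasis ℝ E) fun i => p i - x
  simp only [h.apply_inner_left, Finset.sum_const_zero, sub_sub_sub_cancel_right] at this
  exact sub_eq_zero.1 this.symm

theorem apply_one_inner_sub (h : IsStressForm p x α B) (q : ι → F) (w : F) :
    B 1 (fun i => ⟪w, q i - ∑ j, α j • q j⟫_ℝ) = 0 := by
  rw [h.apply_one_left]
  simp only [← real_inner_smul_right]
  rw [← inner_sum, sum_smul_sub_sum_smul h.sum_weight, inner_zero_right]

omit [InnerProductSpace ℝ F] in
theorem sum_apply_single_mul_le (h : IsStressForm p x α B) {q : ι → F}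
    (hpq : ∀ i j, i ≠ j → IsExtreme ℝ (convexHull ℝ (Set.range p)) (segment ℝ (p i) (p j)) →
      ‖q i - q j‖ ≤ ‖p i - p j‖) :
    ∑ i, ∑ j, B (Pi.single i 1) (Pi.single j 1) * ‖q i - q j‖ ^ 2 ≤
      ∑ i, ∑ j, B (Pi.single i 1) (Pi.single j 1) * ‖p i - p j‖ ^ 2 := by
  refine Finset.sum_le_sum fun i _ => Finset.sum_le_sum fun j _ => ?_
  rcases eq_or_ne i j with rfl | hij
  · simp only [sub_self, norm_zero, le_refl]
  rcases eq_or_ne (B (Pi.single i 1) (Pi.single j 1)) 0 with hB | hB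
  · simp only [hB, zero_mul, le_refl]
  · have := hpq i j hij (h.isExtreme_segment i j hij hB)
    have := h.apply_single_nonneg i j hij
    gcongr

variable [FiniteDimensional ℝ E] [FiniteDimensional ℝ F] (h : IsStressForm p x α B) {q : ι → F}
  (hpq : ∀ i j, i ≠ j → IsExtreme ℝ (convexHull ℝ (Set.range p)) (segment ℝ (p i) (p j)) →
    ‖q i - q j‖ ≤ ‖p i - p j‖)

include h hpq

theorem sum_mul_norm_sub_sq_le_add :
    ∑ i, α i * ‖q i - ∑ j, α j • q j‖ ^ 2 ≤ ∑ i, α i * ‖p i - x‖ ^ 2 +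
      ∑ k, B (fun i => ⟪stdOrthonormalBasis ℝ F k, q i - ∑ j, α j • q j⟫_ℝ)
        (fun i => ⟪stdOrthonormalBasis ℝ F k, q i - ∑ j, α j • q j⟫_ℝ) := by
  have hq := h.sum_apply_inner_self (stdOrthonormalBasis ℝ F) fun i => q i - ∑ j, α j • q j
  simp only [sub_sub_sub_cancel_right] at hq
  have hp := h.sum_mul_norm_sub_sq_eq
  have hle := h.sum_apply_single_mul_le hpq
  linarith

theorem sum_mul_norm_sub_sq_le :
    ∑ i, α i * ‖q i - ∑ j, α j • q j‖ ^ 2 ≤ ∑ i, α i * ‖p i - x‖ ^ 2 :=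
  (h.sum_mul_norm_sub_sq_le_add hpq).trans <| add_le_of_nonpos_right <|
    Finset.sum_nonpos fun _ _ => h.apply_self_nonpos _ (h.apply_one_inner_sub q _)

theorem exists_linearMap_of_sum_mul_norm_sub_sq_eq
    (heq : ∑ i, α i * ‖q i - ∑ j, α j • q j‖ ^ 2 = ∑ i, α i * ‖p i - x‖ ^ 2) :
    ∃ T : E →ₗ[ℝ] F, ∀ i, T (p i - x) = q i - ∑ j, α j • q j := by
  let e := stdOrthonormalBasis ℝ F
  have hnonpos : ∀ k ∈ Finset.univ, B (fun i => ⟪e k, q i - ∑ j, α j • q j⟫_ℝ)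
      (fun i => ⟪e k, q i - ∑ j, α j • q j⟫_ℝ) ≤ 0 := fun k _ =>
    h.apply_self_nonpos _ (h.apply_one_inner_sub q _)
  have hsum := le_antisymm (Finset.sum_nonpos hnonpos) <| by
    simpa only [heq, le_add_iff_nonneg_right] using h.sum_mul_norm_sub_sq_le_add hpq
  choose v hv using fun k => h.exists_inner_eq _ (h.apply_one_inner_sub q (e k))
    ((Finset.sum_eq_zero_iff_of_nonpos hnonpos).1 hsum k (Finset.mem_univ k))
  refine ⟨∑ k, (innerₛₗ ℝ (v k)).smulRight (e k), fun i => ?_⟩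
  simp only [LinearMap.sum_apply, LinearMap.smulRight_apply, innerₛₗ_apply_apply, hv]
  exact e.sum_repr' _

end IsStressForm

end StressInequality

section CombinatorialType

variable {ι E F : Type*} [NormedAddCommGroup E] [InnerProductSpace ℝ E] [FiniteDimensional ℝ E]
  [NormedAddCommGroup F] [InnerProductSpace ℝ F] [FiniteDimensional ℝ F] {p : ι → E} {q : ι → F}

theorem finrank_direction_lt_of_isExtreme (hinj : Function.Injective p)
    (hext : ∀ i, p i ∈ (convexHull ℝ (Set.range p)).extremePoints ℝ) {I A : Set ι} (hIA : I ⊆ A)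
    (hI : IsExtreme ℝ (convexHull ℝ (Set.range p)) (convexHull ℝ (p '' I))) (hne : I.Nonempty)
    {j : ι} (hjA : j ∈ A) (hjI : j ∉ I) :
    finrank ℝ (affineSpan ℝ (p '' I)).direction < finrank ℝ (affineSpan ℝ (p '' A)).direction := by
  have hlt : affineSpan ℝ (p '' I) < affineSpan ℝ (p '' A) := by
    refine (affineSpan_mono ℝ (Set.image_mono hIA)).lt_of_not_ge fun hle => ?_
    exact notMem_affineSpan_of_isExtreme hinj (hext j) hI hjI
      (hle (mem_affineSpan ℝ (Set.mem_image_of_mem p hjA)))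
  exact Submodule.finrank_lt_finrank_of_lt (AffineSubspace.direction_lt_of_nonempty hlt
    ((hne.image p).mono (subset_affineSpan ℝ _)))

variable [Fintype ι]

theorem finrank_direction_add_lt_of_faceWeight_ne_zero [DecidableEq ι] {a : ι → ℝ} {x : E}
    (ha : IsGeneric p a) (hx : x ∈ interior (convexHull ℝ (Set.range p)))
    (hinj : Function.Injective q)
    (hext : ∀ i, q i ∈ (convexHull ℝ (Set.range q)).extremePoints ℝ)
    (hcomb : ∀ I : Set ι, IsExtreme ℝ (convexHull ℝ (Set.range p)) (convexHull ℝ (p '' I)) →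
      IsExtreme ℝ (convexHull ℝ (Set.range q)) (convexHull ℝ (q '' I)))
    {k : ℕ} {S : Finset ι} (hS : S.Nonempty) (h : faceWeight p a k x S ≠ 0) :
    finrank ℝ (affineSpan ℝ (q '' faceClosure p S)).direction + k <
      finrank ℝ (affineSpan ℝ (Set.range q)).direction := by
  have hstep : ∀ {S : Finset ι} {A : Set ι} {j : ι}, S.Nonempty → faceClosure p S ⊆ A → j ∈ A →
      j ∉ faceClosure p S → finrank ℝ (affineSpan ℝ (q '' faceClosure p S)).direction <
        finrank ℝ (affineSpan ℝ (q '' A)).direction := fun hS hSA hjA hj =>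
    finrank_direction_lt_of_isExtreme hinj hext hSA
      (hcomb _ (isExtreme_convexHull_image_faceClosure p _))
      (hS.to_set.mono (subset_faceClosure p _)) hjA hj
  induction k generalizing S with
  | zero =>
    obtain ⟨⟨v, s, hv, hvS, j, hj⟩, -⟩ := mem_of_faceWeight_ne_zero h
    rw [← Set.image_univ, add_zero]
    exact hstep hS (Set.subset_univ _) (Set.mem_univ j) fun hjS => hj.ne (hjS v s hv hvS)
  | succ k ih =>
    obtain ⟨v, s, hv, hvS, j, hj, hne⟩ := exists_faceWeight_insert_ne_zero ha hx h
    have hlt := hstep hS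
      (faceClosure_mono (Finset.coe_subset.2 (Finset.subset_insert j S)))
      (subset_faceClosure p _ (Finset.mem_insert_self j S))
      fun hjS => hj.ne (hjS v s hv hvS)
    have := ih (Finset.insert_nonempty j S) hne
    omega

omit [Fintype ι] in
theorem interior_convexHull_nonempty_of_isExtreme_imp [Finite ι] [Nontrivial E]
    (hinjp : Function.Injective p)
    (hextp : ∀ i, p i ∈ (convexHull ℝ (Set.range p)).extremePoints ℝ)
    (hp : (interior (convexHull ℝ (Set.range p))).Nonempty) (hinj : Function.Injective q)
    (hext : ∀ i, q i ∈ (convexHull ℝ (Set.range q)).extremePoints ℝ)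
    (hcomb : ∀ I : Set ι, IsExtreme ℝ (convexHull ℝ (Set.range p)) (convexHull ℝ (p '' I)) →
      IsExtreme ℝ (convexHull ℝ (Set.range q)) (convexHull ℝ (q '' I)))
    (hfin : finrank ℝ F ≤ finrank ℝ E) :
    (interior (convexHull ℝ (Set.range q))).Nonempty := by
  classical
  cases nonempty_fintype ι
  obtain ⟨a, ha⟩ := exists_isGeneric p
  obtain ⟨x, hx⟩ := hp
  obtain ⟨i⟩ := nonempty_of_mem_interior_convexHull hx
  have hlt := finrank_direction_add_lt_of_faceWeight_ne_zero ha hx hinj hext hcomb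
    (Finset.singleton_nonempty i) (faceWeight_singleton_pos hinjp ha hx (hextp i)).ne'
  rw [interior_convexHull_nonempty_iff_affineSpan_eq_top,
    ← AffineSubspace.direction_eq_top_iff_of_nonempty
      ⟨q i, mem_affineSpan ℝ (Set.mem_range_self i)⟩]
  exact Submodule.eq_top_of_finrank_eq ((Submodule.finrank_le _).antisymm (by omega))

omit [FiniteDimensional ℝ E] in
theorem mem_of_sum_smul_mem_convexHull (hinj : Function.Injective p) {k : ι}
    (hk : p k ∈ (convexHull ℝ (Set.range p)).extremePoints ℝ) {I : Set ι}
    (hI : IsExtreme ℝ (convexHull ℝ (Set.range p)) (convexHull ℝ (p '' I))) {w : ι → ℝ}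
    (hw : ∀ i, 0 ≤ w i) (hw1 : ∑ i, w i = 1) (hmem : ∑ i, w i • p i ∈ convexHull ℝ (p '' I))
    (hwk : 0 < w k) : k ∈ I := by
  classical
  have hwk1 : w k ≤ 1 := hw1 ▸ Finset.single_le_sum (fun i _ => hw i) (Finset.mem_univ k)
  -- The point `y` lies beyond `∑ i, w i • p i` on the ray from `p k` through it.
  let u : ι → ℝ := fun i => (1 + w k) * w i - w k * (Pi.single k 1 : ι → ℝ) i
  have hu : ∀ i, 0 ≤ u i := fun i => by
    obtain rfl | hik := eq_or_ne i k
    · simp only [u, Pi.single_eq_same]; nlinarith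
    · simp only [u, Pi.single_eq_of_ne hik, mul_zero, sub_zero]
      exact mul_nonneg (by linarith) (hw i)
  have hu1 : ∑ i, u i = 1 := by
    simp only [u, Finset.sum_sub_distrib, ← Finset.mul_sum, hw1, Finset.sum_pi_single',
      Finset.mem_univ, if_true]
    ring
  have hy : ∑ i, u i • p i = (1 + w k) • ∑ i, w i • p i - w k • p k := by
    simp only [u, sub_smul, mul_smul, Finset.sum_sub_distrib, ← Finset.smul_sum]
    simp [Pi.single_apply]
  refine mem_of_mem_convexHull_image hinj hk (hI.left_mem_of_mem_openSegment hk.1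
    ((convex_convexHull ℝ _).sum_mem (fun i _ => hu i) hu1 fun i _ =>
      subset_convexHull ℝ _ (Set.mem_range_self i)) hmem
    ⟨w k / (1 + w k), 1 / (1 + w k), by positivity, by positivity, by field_simp; ring, by
      rw [hy]; match_scalars <;> field_simp; ring⟩)

end CombinatorialType

section DetPolynomial

open Polynomial MeasureTheory

theorem exists_polynomial_eval_eq_det_id_add_smul {E : Type*} [AddCommGroup E] [Module ℝ E]
    [FiniteDimensional ℝ E] (A : E →ₗ[ℝ] E) :
    ∃ f : ℝ[X], f.natDegree ≤ finrank ℝ E ∧ ∀ t, f.eval t = (LinearMap.id + t • A).det := by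
  let b := finBasis ℝ E
  let M := LinearMap.toMatrix b b A
  refine ⟨((X : ℝ[X]) • M.map C + (1 : Matrix _ _ ℝ).map C).det, ?_, fun t => ?_⟩
  · simpa only [Fintype.card_fin] using natDegree_det_X_add_C_le M 1
  · have hM : LinearMap.toMatrix b b (LinearMap.id + t • A) = t • M + 1 := by
      rw [map_add, map_smul, LinearMap.toMatrix_id, add_comm]
    rw [← coe_evalRingHom, RingHom.map_det, ← LinearMap.det_toMatrix b, hM]
    congr 1
    ext i j
    by_cases hij : i = j <;> simp [mul_comm t, hij]

theorem integral_eval_eq_of_forall_mem_Ioo {X : Type*} [MeasurableSpace X] {μ : Measure X} {n : ℕ}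
    {f : X → ℝ[X]} (hdeg : ∀ x, (f x).natDegree ≤ n)
    (hint : ∀ t, Integrable (fun x => (f x).eval t) μ) {b c : ℝ} (hb : 0 < b)
    (hc : ∀ t ∈ Set.Ioo 0 b, ∫ x, (f x).eval t ∂μ = c) (t : ℝ) :
    ∫ x, (f x).eval t ∂μ = c := by
  obtain ⟨s, hs, hcard⟩ := (Set.Ioo_infinite hb).exists_subset_card_eq (n + 1)
  have hinj : Set.InjOn id (s : Set ℝ) := Function.injective_id.injOn
  have hdegs : ∀ x, (f x).degree < s.card := fun x =>
    degree_le_natDegree.trans_lt (mod_cast hcard ▸ Nat.lt_succ_of_le (hdeg x))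
  have heval : ∀ x, (f x).eval t = ∑ j ∈ s, (f x).eval j * (Lagrange.basis s id j).eval t :=
    fun x => by
      conv_lhs => rw [Lagrange.eq_interpolate hinj (hdegs x),
        Lagrange.interpolate_apply, eval_finsetSum]
      simp
  calc ∫ x, (f x).eval t ∂μ = ∑ j ∈ s, (∫ x, (f x).eval j ∂μ) * (Lagrange.basis s id j).eval t := by
        simp_rw [heval, integral_finsetSum s fun j _ => (hint j).mul_const _, integral_mul_const]
    _ = c * (∑ j ∈ s, Lagrange.basis s id j).eval t := by
        rw [eval_finsetSum, Finset.mul_sum]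
        exact Finset.sum_congr rfl fun j hj => by rw [hc j (hs hj)]
    _ = c := by
        rw [Lagrange.sum_basis hinj (Finset.card_pos.1 (by omega)), eval_one, mul_one]

end DetPolynomial

section ChangeOfVariables

open MeasureTheory

variable {E : Type*} [NormedAddCommGroup E] [NormedSpace ℝ E] {k : E → E} {K : NNReal} {U : Set E}

theorem lipschitzWith_indicator (hU : IsOpen U) (hk : LipschitzOnWith K k (closure U))
    (h0 : ∀ x ∈ frontier U, k x = 0) : LipschitzWith K (U.indicator k) := by
  have hcross : ∀ x ∈ U, ∀ y ∉ U, dist (k x) 0 ≤ K * dist x y := fun x hx y hy => by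
    obtain ⟨z, hz, hzU⟩ : ∃ z ∈ segment ℝ x y, z ∈ frontier U := by
      by_contra! hne
      refine hy ((convex_segment x y).isPreconnected.subset_of_closure_inter_subset hU
        ⟨x, left_mem_segment ℝ x y, hx⟩ (fun z hz => ?_) (right_mem_segment ℝ x y))
      exact not_imp_comm.1 (fun hzU => ⟨hz.1, hU.interior_eq.symm ▸ hzU⟩) (hne z hz.2)
    calc dist (k x) 0 ≤ K * dist x z :=
          h0 z hzU ▸ hk.dist_le_mul x (subset_closure hx) z (frontier_subset_closure hzU)
      _ ≤ K * dist x y := by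
          gcongr
          linarith [dist_add_dist_of_mem_segment hz, dist_nonneg (x := z) (y := y)]
  refine LipschitzWith.of_dist_le_mul fun x y => ?_
  by_cases hx : x ∈ U <;> by_cases hy : y ∈ U <;>
    simp only [Set.indicator_of_mem, Set.indicator_of_notMem, hx, hy, not_false_eq_true]
  · exact hk.dist_le_mul x (subset_closure hx) y (subset_closure hy)
  · exact hcross x hx y hy
  · rw [dist_comm, dist_comm x]
    exact hcross y hy x hx
  · rw [dist_self]
    positivity

omit [NormedSpace ℝ E] in
theorem bijective_add_of_lipschitzWith [CompleteSpace E] (hK : K < 1) (hk : LipschitzWith K k) :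
    Function.Bijective fun x => x + k x := by
  refine Function.bijective_iff_existsUnique _ |>.2 fun y => ?_
  have hcontr : ContractingWith K fun x => y - k x :=
    ⟨hK, LipschitzWith.of_dist_le_mul fun x z => by
      rw [dist_sub_left]; exact hk.dist_le_mul x z⟩
  refine ⟨hcontr.fixedPoint, ?_, fun x hx => hcontr.fixedPoint_unique ?_⟩
  · exact (eq_sub_iff_add_eq.1 hcontr.fixedPoint_isFixedPt.symm)
  · exact sub_eq_of_eq_add hx.symm

theorem image_eq_of_bijective_of_forall_notMem {X : Type*} {f : X → X} {s : Set X}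
    (hf : Function.Bijective f) (h : ∀ x ∉ s, f x = x) : f '' s = s := by
  rw [← compl_inj_iff, ← Set.image_compl_eq hf]
  exact (Set.image_congr h).trans (Set.image_id' _)

variable [FiniteDimensional ℝ E]

theorem det_id_add_pos {A : E →L[ℝ] E} (hA : ‖A‖ < 1) :
    0 < (ContinuousLinearMap.id ℝ E + A).det := by
  have hne : ∀ s ∈ Set.Icc (0 : ℝ) 1, (ContinuousLinearMap.id ℝ E + s • A).det ≠ 0 := by
    intro s hs hdet
    obtain ⟨v, hv, hv0⟩ :=
      (Submodule.ne_bot_iff _).1 (LinearMap.bot_lt_ker_of_det_eq_zero hdet).ne'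
    have hvA : v = -(s • A v) := eq_neg_of_add_eq_zero_left (by simpa using hv)
    have hlt : ‖v‖ < ‖v‖ := by
      calc ‖v‖ = s * ‖A v‖ := by
            conv_lhs => rw [hvA, norm_neg, norm_smul, Real.norm_of_nonneg hs.1]
        _ ≤ 1 * (‖A‖ * ‖v‖) := by
            gcongr
            exacts [hs.2, A.le_opNorm v]
        _ < ‖v‖ := by
            rw [one_mul]
            exact mul_lt_of_lt_one_left (norm_pos_iff.2 hv0) hA
    exact hlt.false
  have hcont : Continuous fun s : ℝ => (ContinuousLinearMap.id ℝ E + s • A).det :=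
    ContinuousLinearMap.continuous_det.comp (by fun_prop)
  by_contra! hle
  obtain ⟨s, hs, hs0⟩ := intermediate_value_Icc' zero_le_one hcont.continuousOn
    (show (0 : ℝ) ∈ _ from ⟨by simpa using hle, by simp [ContinuousLinearMap.det]⟩)
  exact hne s hs hs0

variable [MeasurableSpace E] [BorelSpace E] (μ : Measure E) [μ.IsAddHaarMeasure]

theorem setIntegral_det_id_add_fderiv_of_lipschitzOnWith (hU : IsOpen U) (hK : K < 1)
    (hd : DifferentiableOn ℝ k U) (hk : LipschitzOnWith K k (closure U))
    (h0 : ∀ x ∈ frontier U, k x = 0) :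
    ∫ x in U, (ContinuousLinearMap.id ℝ E + fderiv ℝ k x).det ∂μ = μ.real U := by
  have := FiniteDimensional.complete ℝ E
  have hbij := bijective_add_of_lipschitzWith hK (lipschitzWith_indicator hU hk h0)
  have himage := image_eq_of_bijective_of_forall_notMem (s := U) hbij
    fun x hx => by rw [Set.indicator_of_notMem hx, add_zero]
  have hderiv : ∀ x ∈ U, HasFDerivWithinAt (fun x => x + U.indicator k x)
      (ContinuousLinearMap.id ℝ E + fderiv ℝ k x) U x := fun x hx => by
    refine ((hasFDerivAt_id x).add (hd.differentiableAt (hU.mem_nhds hx)).hasFDerivAt)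
      |>.hasFDerivWithinAt.congr (fun y hy => ?_) ?_ <;>
    simp [Set.indicator_of_mem, *]
  have hchange := integral_image_eq_integral_abs_det_fderiv_smul μ hU.measurableSet hderiv
    hbij.injective.injOn fun _ => (1 : ℝ)
  rw [himage, setIntegral_const, smul_eq_mul, mul_one] at hchange
  refine (setIntegral_congr_fun hU.measurableSet fun x hx => ?_).trans hchange.symm
  have hnorm := norm_fderiv_le_of_lipschitzOn ℝ
    (mem_of_superset (hU.mem_nhds hx) subset_closure) hk
  rw [abs_of_pos (det_id_add_pos (hnorm.trans_lt (mod_cast hK))), smul_eq_mul, mul_one]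

theorem setIntegral_det_id_add_fderiv (hU : IsOpen U) (hbdd : Bornology.IsBounded U)
    (hk : ContDiff ℝ 1 k) (h0 : ∀ x ∈ frontier U, k x = 0) :
    ∫ x in U, (ContinuousLinearMap.id ℝ E + fderiv ℝ k x).det ∂μ = μ.real U := by
  have := FiniteDimensional.proper ℝ E
  have hcompact : IsCompact (closure U) := hbdd.isCompact_closure
  obtain ⟨K, hK⟩ :=
    hk.locallyLipschitz.locallyLipschitzOn.exists_lipschitzOnWith_of_compact hcompact
  choose f hdeg hf using fun x =>
    exists_polynomial_eval_eq_det_id_add_smul (fderiv ℝ k x : E →ₗ[ℝ] E)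
  have heval : ∀ t x, (f x).eval t = (ContinuousLinearMap.id ℝ E + t • fderiv ℝ k x).det :=
    fun t x => hf x t
  have hint : ∀ t, IntegrableOn (fun x => (f x).eval t) U μ := fun t => by
    simp only [heval]
    have hcont : Continuous fun x => (ContinuousLinearMap.id ℝ E + t • fderiv ℝ k x).det :=
      ContinuousLinearMap.continuous_det.comp
        (continuous_const.add ((hk.continuous_fderiv one_ne_zero).const_smul t))
    exact (hcont.continuousOn.integrableOn_compact hcompact).mono_set subset_closure
  suffices h : ∀ t ∈ Set.Ioo (0 : ℝ) (1 / (K + 1)), ∫ x in U, (f x).eval t ∂μ = μ.real U by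
    simpa only [heval, one_smul] using
      integral_eval_eq_of_forall_mem_Ioo hdeg hint (by positivity) h 1
  intro t ht
  have htK : ‖t‖₊ * K < 1 := by
    rw [← NNReal.coe_lt_coe, NNReal.coe_mul, coe_nnnorm, Real.norm_of_nonneg ht.1.le]
    have := (lt_div_iff₀ (by positivity)).1 ht.2
    push_cast
    linarith [ht.1]
  have hdiff := hk.differentiable one_ne_zero
  have := setIntegral_det_id_add_fderiv_of_lipschitzOnWith (k := fun x => t • k x) μ hU htK
    (hdiff.const_smul t).differentiableOn ((lipschitzWith_smul t).comp_lipschitzOnWith hK)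
    fun x hx => by rw [h0 x hx, smul_zero]
  simpa only [heval, fderiv_fun_const_smul (hdiff _)] using this

end ChangeOfVariables

section AcuteAngle

open MeasureTheory

variable {E : Type*} [NormedAddCommGroup E] [InnerProductSpace ℝ E] [FiniteDimensional ℝ E]

theorem det_fderiv_eq_zero_of_norm_eq {r : E → E} {x : E} {R : ℝ} (hr : DifferentiableAt ℝ r x)
    (hR : R ≠ 0) (h : ∀ᶠ y in 𝓝 x, ‖r y‖ = R) : (fderiv ℝ r x).det = 0 := by
  have horth : ∀ w, ⟪r x, fderiv ℝ r x w⟫_ℝ = 0 := fun w => by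
    have hconst : (fun y => ‖r y‖ ^ 2) =ᶠ[𝓝 x] fun _ => R ^ 2 :=
      h.mono fun y hy => congrArg (· ^ 2) hy
    have hderiv := (hr.hasFDerivAt.norm_sq.congr_of_eventuallyEq hconst.symm).unique
      (hasFDerivAt_const (R ^ 2) x)
    simpa using DFunLike.congr_fun hderiv w
  by_contra hdet
  obtain ⟨w, hw⟩ := ((Module.End.isUnit_iff _).1
    ((LinearMap.isUnit_iff_isUnit_det _).2 (isUnit_iff_ne_zero.2 hdet))).2 (r x)
  have hrx := horth w
  rw [show fderiv ℝ r x w = r x from hw, inner_self_eq_zero] at hrx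
  exact hR (by rw [← h.self_of_nhds, hrx, norm_zero])

theorem exists_eq_zero_of_contDiff {f : E → E} (hf : ContDiff ℝ 1 f) {R : ℝ} (hR : 0 < R)
    (hid : ∀ x, ‖x‖ = R → f x = x) : ∃ x, f x = 0 := by
  by_contra! hne
  let r : E → E := fun x => (R / ‖f x‖) • f x
  have hr : ContDiff ℝ 1 r :=
    (contDiff_const.div (hf.norm ℝ hne) fun x => norm_ne_zero_iff.2 (hne x)).smul hf
  have hnorm : ∀ x, ‖r x‖ = R := fun x => by
    rw [norm_smul, norm_div, norm_norm, Real.norm_of_nonneg hR.le,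
      div_mul_cancel₀ _ (norm_ne_zero_iff.2 (hne x))]
  borelize E
  have hvol := setIntegral_det_id_add_fderiv (volume : Measure E) (k := fun x => r x - x)
    Metric.isOpen_ball Metric.isBounded_ball (hr.sub contDiff_id) fun x hx => by
      rw [frontier_ball (0 : E) hR.ne', mem_sphere_zero_iff_norm] at hx
      simp only [r, hid x hx, hx, div_self hR.ne', one_smul, sub_self]
  have hdet : ∀ x, (ContinuousLinearMap.id ℝ E + fderiv ℝ (fun x => r x - x) x).det = 0 :=
    fun x => by
      have hd := hr.differentiable one_ne_zero x
      rw [fderiv_fun_sub hd differentiableAt_fun_id, fderiv_fun_id, add_sub_cancel]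
      exact det_fderiv_eq_zero_of_norm_eq hd hR.ne' (.of_forall hnorm)
  simp only [hdet, integral_zero] at hvol
  exact (ENNReal.toReal_pos (Metric.measure_ball_pos volume 0 hR).ne'
    measure_ball_lt_top.ne).ne hvol

theorem exists_eq_zero_of_eq_self {g : E → E} (hg : Continuous g) {R : ℝ} (hR : 0 < R)
    (hid : ∀ x, R ≤ ‖x‖ → g x = x) : ∃ x, g x = 0 := by
  by_contra! hne
  obtain ⟨c, hc, hcg⟩ : ∃ c > 0, ∀ x, c < ‖g x‖ := by
    have hlim : Tendsto (fun x => ‖g x‖) (cocompact E) atTop :=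
      (tendsto_norm_cocompact_atTop).congr' <|
        ((tendsto_norm_cocompact_atTop).eventually_ge_atTop R).mono fun x hx =>
          congrArg norm (hid x hx).symm
    obtain ⟨x₀, hx₀⟩ := hg.norm.exists_forall_le hlim
    have hpos := norm_pos_iff.2 (hne x₀)
    exact ⟨‖g x₀‖ / 2, half_pos hpos, fun x => (half_lt_self hpos).trans_le (hx₀ x)⟩
  have hsupp : HasCompactSupport fun x => g x - x :=
    HasCompactSupport.intro (isCompact_closedBall 0 R) fun x hx => by
      rw [mem_closedBall_zero_iff, not_le] at hx
      rw [hid x hx.le, sub_self]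
  have hcont : Continuous fun x => g x - x := hg.sub continuous_id
  obtain ⟨ε, hε, hεc⟩ := Metric.uniformContinuous_iff.1
    (hsupp.uniformContinuous_of_continuous hcont) c hc
  obtain ⟨h, hh, hdist⟩ :=
    hcont.exists_contDiff_dist_le_of_forall_mem_ball_dist_le (lt_min hε one_pos)
  have hnear : ∀ x, dist (h x) (g x - x) ≤ c := fun x => hdist x c fun y hy =>
    (hεc ((Metric.mem_ball.1 hy).trans_le (min_le_left _ _))).le
  have hzero : ∀ x, ‖x‖ = R + 1 → x + h x = x := fun x hx => by
    have hx0 : g x - x = 0 := by rw [hid x (by linarith), sub_self]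
    have := hdist x 0 fun y hy => by
      have hyx : ‖x - y‖ < 1 := by
        rw [← dist_eq_norm, dist_comm]
        exact (Metric.mem_ball.1 hy).trans_le (min_le_right _ _)
      rw [hid y (by linarith [norm_sub_norm_le x y]), sub_self, hx0, dist_self]
    rw [dist_le_zero.1 this, hx0, add_zero]
  obtain ⟨x, hx⟩ := exists_eq_zero_of_contDiff
    (contDiff_id.add (hh.of_le (by exact_mod_cast le_top))) (by linarith : 0 < R + 1) hzero
  have := hnear x
  rw [eq_neg_of_add_eq_zero_right hx, dist_eq_norm, id_eq, ← norm_neg] at this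
  exact (hcg x).not_ge (by simpa using this)

theorem exists_eq_zero_of_eventually_inner_pos {g : E → E} (hg : Continuous g)
    (hpos : ∀ᶠ y in cocompact E, 0 < ⟪y, g y⟫_ℝ) : ∃ y, g y = 0 := by
  obtain ⟨R, hR⟩ : ∃ R, ∀ y, R ≤ ‖y‖ → 0 < ⟪y, g y⟫_ℝ := by
    rw [← Metric.cobounded_eq_cocompact] at hpos
    obtain ⟨R, -, hR⟩ := hasBasis_cobounded_norm.eventually_iff.1 hpos
    exact ⟨R, fun y => @hR y⟩
  -- Deform `g` to the identity in the shell `R ≤ ‖y‖ ≤ R + 1`, where no zeros can appear.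
  let τ : E → ℝ := fun y => max 0 (min 1 (‖y‖ - R))
  have hτ0 : ∀ y, 0 ≤ τ y := fun y => le_max_left _ _
  have hτ1 : ∀ y, τ y ≤ 1 := fun y => max_le zero_le_one (min_le_left _ _)
  have hcont : Continuous fun y => (1 - τ y) • g y + τ y • y := by fun_prop
  obtain ⟨y, hy⟩ := exists_eq_zero_of_eq_self hcont (R := max 1 (R + 1)) (by positivity)
    fun y hy => by
      have : τ y = 1 := by
        have := (le_max_right _ _).trans hy
        simp only [τ, min_eq_left (by linarith : 1 ≤ ‖y‖ - R), max_eq_right zero_le_one]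
      rw [this, sub_self, zero_smul, zero_add, one_smul]
  obtain hyR | hyR := lt_or_ge ‖y‖ R
  · have : τ y = 0 := max_eq_left ((min_le_right _ _).trans (by linarith))
    exact ⟨y, by simpa only [this, sub_zero, one_smul, zero_smul, add_zero] using hy⟩
  · have hzero : (1 - τ y) * ⟪y, g y⟫_ℝ + τ y * ‖y‖ ^ 2 = 0 := by
      simpa only [inner_add_right, inner_smul_right, real_inner_self_eq_norm_sq, inner_zero_right]
        using congrArg (fun z => ⟪y, z⟫_ℝ) hy
    have hypos := hR y hyR
    have hy0 : 0 < ‖y‖ ^ 2 := by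
      have : y ≠ 0 := by rintro rfl; simp at hypos
      positivity
    exact absurd hzero (convex_Ioi (0 : ℝ) hypos hy0 (sub_nonneg.2 (hτ1 y)) (hτ0 y) (by ring)).ne'

end AcuteAngle

section Softmax

variable {ι : Type*} [Fintype ι]

/-- The softmax weights `exp (z i) / ∑ j, exp (z j)` of a finite family of reals; they form an
interior point of the standard simplex depending continuously on `z`. -/
noncomputable def softmax (z : ι → ℝ) (i : ι) : ℝ := Real.exp (z i) / ∑ j, Real.exp (z j)

theorem softmax_pos [Nonempty ι] (z : ι → ℝ) (i : ι) : 0 < softmax z i :=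
  div_pos (Real.exp_pos _) (Finset.sum_pos (fun _ _ => Real.exp_pos _) Finset.univ_nonempty)

theorem sum_softmax [Nonempty ι] (z : ι → ℝ) : ∑ i, softmax z i = 1 := by
  simp only [softmax]
  rw [← Finset.sum_div,
    div_self (Finset.sum_pos (fun _ _ => Real.exp_pos _) Finset.univ_nonempty).ne']

theorem continuous_softmax [Nonempty ι] (i : ι) : Continuous fun z : ι → ℝ => softmax z i := by
  unfold softmax
  exact Continuous.div (by fun_prop) (by fun_prop) fun z =>
    (Finset.sum_pos (fun _ _ => Real.exp_pos _) Finset.univ_nonempty).ne'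

theorem softmax_le_exp_sub (z : ι → ℝ) (i j : ι) : softmax z i ≤ Real.exp (z i - z j) := by
  rw [softmax, Real.exp_sub]
  gcongr
  exact Finset.single_le_sum (f := fun j => Real.exp (z j)) (fun _ _ => (Real.exp_pos _).le)
    (Finset.mem_univ j)

theorem tendsto_softmax_zero [Nonempty ι] {β : Type*} {l : Filter β} {z : β → ι → ℝ} {i j : ι}
    (h : Tendsto (fun y => z y i - z y j) l atBot) :
    Tendsto (fun y => softmax (z y) i) l (𝓝 0) :=
  squeeze_zero (fun y => (softmax_pos (z y) i).le) (fun y => softmax_le_exp_sub (z y) i j)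
    (Real.tendsto_exp_atBot.comp h)

end Softmax

section Surjectivity

variable {ι E F : Type*} [Fintype ι] [NormedAddCommGroup E] [InnerProductSpace ℝ E]
  [NormedAddCommGroup F] [InnerProductSpace ℝ F] {p : ι → E} {q : ι → F}

omit [InnerProductSpace ℝ E] in
theorem convexHull_range_eq_image_stdSimplex [Module ℝ E] (p : ι → E) :
    convexHull ℝ (Set.range p) = (fun w : ι → ℝ => ∑ i, w i • p i) '' stdSimplex ℝ ι := by
  classical
  rw [← convexHull_rangle_single_eq_stdSimplex]
  change _ = Fintype.linearCombination ℝ p '' _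
  rw [LinearMap.image_convexHull, ← Set.range_comp]
  congr 2
  ext i
  simp [Fintype.linearCombination_apply_single]

omit [InnerProductSpace ℝ E] in
theorem sum_smul_mem_interior_convexHull [NormedSpace ℝ E]
    (hne : (interior (convexHull ℝ (Set.range p))).Nonempty)
    {b : ι → ℝ} (hb : ∀ i, 0 < b i) (hb1 : ∑ i, b i = 1) :
    ∑ i, b i • p i ∈ interior (convexHull ℝ (Set.range p)) := by
  obtain ⟨x, hx⟩ := hne
  have hx' := interior_subset hx
  rw [convexHull_range_eq_image_stdSimplex] at hx'
  obtain ⟨w, hw, rfl⟩ := hx'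
  obtain ⟨δ, hδ, hpos⟩ := exists_pos_forall_pos_add_mul b (b - w)
  have hy : ∑ i, (b i + δ * (b - w) i) • p i ∈ convexHull ℝ (Set.range p) := by
    rw [convexHull_range_eq_image_stdSimplex]
    refine ⟨_, ⟨fun i => (hpos i (hb i)).le, ?_⟩, rfl⟩
    simp [Finset.sum_add_distrib, ← Finset.mul_sum, hb1, hw.2]
  convert (convex_convexHull ℝ (Set.range p)).combo_interior_self_mem_interior hx hy
    (a := δ / (1 + δ)) (b := 1 / (1 + δ)) (by positivity) (by positivity)
    (by field_simp; ring) using 1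
  simp only [Finset.smul_sum, smul_smul, ← Finset.sum_add_distrib, ← add_smul, Pi.sub_apply]
  congr! 2
  field_simp
  ring

omit [Fintype ι] in
theorem isExtreme_convexHull_image_ofPred_inner_eq [Finite ι] {v : F} {s : ℝ}
    (hv : ∀ i, ⟪v, q i⟫_ℝ ≤ s) :
    IsExtreme ℝ (convexHull ℝ (Set.range q)) (convexHull ℝ (q '' {i | ⟪v, q i⟫_ℝ = s})) := by
  have : faceClosure q {i | ⟪v, q i⟫_ℝ = s} = {i | ⟪v, q i⟫_ℝ = s} :=
    subset_antisymm (fun m hm => hm v s hv fun i hi => hi) (subset_faceClosure q _)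
  exact this ▸ isExtreme_convexHull_image_faceClosure q _

theorem inner_sum_smul_sub_pos (hinj : Function.Injective p)
    (hext : ∀ i, p i ∈ (convexHull ℝ (Set.range p)).extremePoints ℝ)
    (hcomb : ∀ I : Set ι, IsExtreme ℝ (convexHull ℝ (Set.range q)) (convexHull ℝ (q '' I)) →
      IsExtreme ℝ (convexHull ℝ (Set.range p)) (convexHull ℝ (p '' I)))
    {c : F} (hc : c ∈ interior (convexHull ℝ (Set.range q))) {w : F} (hw : w ≠ 0) {α b : ι → ℝ}
    (hα : α ∈ stdSimplex ℝ ι) (hb : b ∈ stdSimplex ℝ ι)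
    (hαb : ∑ i, α i • p i = ∑ i, b i • p i)
    (hmax : ∀ i, b i ≠ 0 → ∀ j, ⟪w, q j⟫_ℝ ≤ ⟪w, q i⟫_ℝ) :
    0 < ⟪w, ∑ i, α i • (q i - c)⟫_ℝ := by
  obtain ⟨k, -, hk⟩ := Finset.exists_ne_zero_of_sum_ne_zero (hb.2 ▸ one_ne_zero : ∑ i, b i ≠ 0)
  let I : Set ι := {i | ⟪w, q i⟫_ℝ = ⟪w, q k⟫_ℝ}
  have hmem : ∑ i, α i • p i ∈ convexHull ℝ (p '' I) := by
    rw [hαb, ← finsum_eq_sum_of_fintype]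
    exact (convex_convexHull ℝ _).finsum_mem hb.1 (by rw [finsum_eq_sum_of_fintype, hb.2])
      fun i hi => subset_convexHull ℝ _ ⟨i, (hmax k hk i).antisymm (hmax i hi k), rfl⟩
  have hαI : ∀ i, 0 < α i → i ∈ I := fun i => mem_of_sum_smul_mem_convexHull hinj (hext i)
    (hcomb _ (isExtreme_convexHull_image_ofPred_inner_eq (hmax k hk))) hα.1 hα.2 hmem
  obtain ⟨j, hj⟩ := exists_inner_sub_pos_of_mem_interior hc w hw
  calc 0 < ⟪w, q k⟫_ℝ - ⟪w, c⟫_ℝ := by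
        rw [inner_sub_right] at hj
        linarith [hmax k hk j]
    _ = ∑ i, α i * (⟪w, q k⟫_ℝ - ⟪w, c⟫_ℝ) := by rw [← Finset.sum_mul, hα.2, one_mul]
    _ = ⟪w, ∑ i, α i • (q i - c)⟫_ℝ := by
        rw [inner_sum]
        refine Finset.sum_congr rfl fun i _ => ?_
        rw [inner_smul_right, inner_sub_right]
        obtain h | h := (hα.1 i).eq_or_lt
        · rw [← h, zero_mul, zero_mul]
        · rw [show ⟪w, q i⟫_ℝ = ⟪w, q k⟫_ℝ from hαI i h]

theorem tendsto_softmax_inner_zero {l : Filter F} (hl : Tendsto (fun y : F => ‖y‖) l atTop) {w : F}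
    (hw : Tendsto (fun y => ‖y‖⁻¹ • y) l (𝓝 w)) {i j : ι} (hij : ⟪w, q i⟫_ℝ < ⟪w, q j⟫_ℝ) :
    Tendsto (fun y => softmax (fun k => ⟪y, q k⟫_ℝ) i) l (𝓝 0) := by
  have : Nonempty ι := ⟨i⟩
  have hneg : ⟪w, q i - q j⟫_ℝ < 0 := by rw [inner_sub_right]; linarith
  refine tendsto_softmax_zero (j := j) <|
    (hl.atTop_mul_neg hneg (hw.inner tendsto_const_nhds)).congr fun y => ?_
  rw [real_inner_smul_left, ← inner_sub_right]
  obtain rfl | hy := eq_or_ne y 0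
  · simp
  · field_simp

variable [FiniteDimensional ℝ F]

theorem exists_tendsto_inner_sum_smul_sub (hinj : Function.Injective p)
    (hext : ∀ i, p i ∈ (convexHull ℝ (Set.range p)).extremePoints ℝ)
    (hcomb : ∀ I : Set ι, IsExtreme ℝ (convexHull ℝ (Set.range q)) (convexHull ℝ (q '' I)) →
      IsExtreme ℝ (convexHull ℝ (Set.range p)) (convexHull ℝ (p '' I)))
    {c : F} (hc : c ∈ interior (convexHull ℝ (Set.range q))) {α : F → ι → ℝ}
    (hα : ∀ y, α y ∈ stdSimplex ℝ ι)
    (hαp : ∀ y, ∑ i, α y i • p i = ∑ i, softmax (fun j => ⟪y, q j⟫_ℝ) i • p i)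
    {U : Ultrafilter F} (hU : Tendsto (fun y : F => ‖y‖) U atTop) :
    ∃ m, 0 < m ∧ Tendsto (fun y => ⟪‖y‖⁻¹ • y, ∑ i, α y i • (q i - c)⟫_ℝ) U (𝓝 m) := by
  have : Nonempty ι := nonempty_of_mem_interior_convexHull hc
  let b : F → ι → ℝ := fun y => softmax fun j => ⟪y, q j⟫_ℝ
  have hb : ∀ y, b y ∈ stdSimplex ℝ ι := fun y => ⟨fun i => (softmax_pos _ i).le, sum_softmax _⟩
  obtain ⟨w, hw, hwlim⟩ := (isCompact_sphere (0 : F) 1).ultrafilter_le_nhds'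
    (U.map fun y => ‖y‖⁻¹ • y) <| (hU.eventually_gt_atTop 0).mono fun y hy => by
      rw [mem_sphere_zero_iff_norm, norm_smul, norm_inv, norm_norm, inv_mul_cancel₀ hy.ne']
  obtain ⟨β, hβ, hβlim⟩ := (isCompact_stdSimplex ℝ ι).ultrafilter_le_nhds' (U.map b)
    (Eventually.of_forall (f := (U : Filter F)) hb)
  obtain ⟨γ, hγ, hγlim⟩ := (isCompact_stdSimplex ℝ ι).ultrafilter_le_nhds' (U.map α)
    (Eventually.of_forall (f := (U : Filter F)) hα)
  replace hwlim : Tendsto (fun y => ‖y‖⁻¹ • y) U (𝓝 w) := hwlim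
  replace hβlim := tendsto_pi_nhds.1 (show Tendsto b U (𝓝 β) from hβlim)
  replace hγlim := tendsto_pi_nhds.1 (show Tendsto α U (𝓝 γ) from hγlim)
  have hγβ : ∑ i, γ i • p i = ∑ i, β i • p i := by
    refine tendsto_nhds_unique (tendsto_finsetSum _ fun i _ => (hγlim i).smul_const (p i)) ?_
    simp only [hαp]
    exact tendsto_finsetSum _ fun i _ => (hβlim i).smul_const (p i)
  refine ⟨_, inner_sum_smul_sub_pos hinj hext hcomb hc (ne_zero_of_mem_unit_sphere ⟨w, hw⟩) hγ hβ
    hγβ fun i hi j => ?_,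
    hwlim.inner (tendsto_finsetSum _ fun i _ => (hγlim i).smul_const (q i - c))⟩
  by_contra! hij
  exact hi (tendsto_nhds_unique (hβlim i) (tendsto_softmax_inner_zero hU hwlim hij))

theorem eventually_inner_sum_smul_sub_pos (hinj : Function.Injective p)
    (hext : ∀ i, p i ∈ (convexHull ℝ (Set.range p)).extremePoints ℝ)
    (hcomb : ∀ I : Set ι, IsExtreme ℝ (convexHull ℝ (Set.range q)) (convexHull ℝ (q '' I)) →
      IsExtreme ℝ (convexHull ℝ (Set.range p)) (convexHull ℝ (p '' I)))
    {c : F} (hc : c ∈ interior (convexHull ℝ (Set.range q))) {α : F → ι → ℝ}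
    (hα : ∀ y, α y ∈ stdSimplex ℝ ι)
    (hαp : ∀ y, ∑ i, α y i • p i = ∑ i, softmax (fun j => ⟪y, q j⟫_ℝ) i • p i) :
    ∀ᶠ y in cocompact F, 0 < ⟪y, ∑ i, α y i • (q i - c)⟫_ℝ := by
  by_contra hcon
  simp only [Filter.not_eventually, not_lt, frequently_iff_neBot] at hcon
  obtain ⟨U, hU⟩ := Ultrafilter.exists_le
    (cocompact F ⊓ 𝓟 {y | ⟪y, ∑ i, α y i • (q i - c)⟫_ℝ ≤ 0})
  have hle : ∀ᶠ y in (U : Filter F), ⟪y, ∑ i, α y i • (q i - c)⟫_ℝ ≤ 0 :=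
    hU (mem_inf_of_right (mem_principal_self _))
  obtain ⟨m, hm, hlim⟩ := exists_tendsto_inner_sum_smul_sub hinj hext hcomb hc hα hαp
    (tendsto_norm_cocompact_atTop.mono_left (hU.trans inf_le_left))
  refine hm.not_ge (le_of_tendsto hlim ?_)
  filter_upwards [hle] with y hy
  rw [real_inner_smul_left]
  exact mul_nonpos_of_nonneg_of_nonpos (by positivity) hy

theorem exists_sum_wachspressCoordinate_smul_eq [DecidableEq ι] [FiniteDimensional ℝ E]
    [Nontrivial E] (hinj : Function.Injective p)
    (hext : ∀ i, p i ∈ (convexHull ℝ (Set.range p)).extremePoints ℝ)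
    {a : ι → ℝ} (ha : IsGeneric p a) (hne : (interior (convexHull ℝ (Set.range p))).Nonempty)
    (hcomb : ∀ I : Set ι, IsExtreme ℝ (convexHull ℝ (Set.range q)) (convexHull ℝ (q '' I)) →
      IsExtreme ℝ (convexHull ℝ (Set.range p)) (convexHull ℝ (p '' I)))
    {c : F} (hc : c ∈ interior (convexHull ℝ (Set.range q))) :
    ∃ x ∈ interior (convexHull ℝ (Set.range p)), ∑ i, wachspressCoordinate p a x i • q i = c := by
  have : Nonempty ι := nonempty_of_mem_interior_convexHull hc
  let ψ : F → E := fun y => ∑ i, softmax (fun j => ⟪y, q j⟫_ℝ) i • p i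
  have hψ : ∀ y, ψ y ∈ interior (convexHull ℝ (Set.range p)) := fun y =>
    sum_smul_mem_interior_convexHull hne (softmax_pos _) (sum_softmax _)
  have hψcont : Continuous ψ := continuous_finsetSum _ fun i _ =>
    ((continuous_softmax i).comp (f := fun (y : F) j => ⟪y, q j⟫_ℝ) (by fun_prop)).smul
      continuous_const
  let H : F → F := fun y => ∑ i, wachspressCoordinate p a (ψ y) i • (q i - c)
  have hHcont : Continuous H := continuous_finsetSum _ fun i _ =>
    ((continuousOn_wachspressCoordinate hinj hext ha i).comp_continuous hψcont hψ).smul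
      continuous_const
  obtain ⟨y, hy⟩ := exists_eq_zero_of_eventually_inner_pos hHcont <|
    eventually_inner_sum_smul_sub_pos hinj hext hcomb hc
      (fun y => ⟨fun i => (wachspressCoordinate_pos hinj hext ha (hψ y) i).le,
        sum_wachspressCoordinate hinj hext ha (hψ y)⟩)
      fun y => sum_wachspressCoordinate_smul hinj hext ha (hψ y)
  refine ⟨ψ y, hψ y, sub_eq_zero.1 ?_⟩
  rw [← hy]
  simp only [H, smul_sub, Finset.sum_sub_distrib, ← Finset.sum_smul,
    sum_wachspressCoordinate hinj hext ha (hψ y), one_smul]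

end Surjectivity

section Rigidity

variable {ι E F : Type*} [NormedAddCommGroup E] [InnerProductSpace ℝ E]
  [NormedAddCommGroup F] [InnerProductSpace ℝ F] {p : ι → E} {q : ι → F} {T : E →ₗ[ℝ] F}

theorem inner_map_map_eq_of_norm_map_eq (hT : ∀ u, ‖u‖ ≤ ‖T u‖) {g : E} (hg : ‖T g‖ = ‖g‖)
    (w : E) : ⟪T w, T g⟫_ℝ = ⟪w, g⟫_ℝ := by
  have hquad : ∀ t : ℝ, 0 ≤ 0 * (t * t) + 2 * (⟪T w, T g⟫_ℝ - ⟪w, g⟫_ℝ) * t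
      + (‖T w‖ ^ 2 - ‖w‖ ^ 2) := fun t => by
    have h := pow_le_pow_left₀ (norm_nonneg _) (hT (w + t • g)) 2
    rw [map_add, map_smul, norm_add_sq_real, norm_add_sq_real, inner_smul_right,
      inner_smul_right, norm_smul, norm_smul, hg] at h
    linarith
  have h := discrim_le_zero hquad
  rw [discrim, mul_zero, zero_mul, sub_zero] at h
  linarith [pow_eq_zero_iff two_ne_zero |>.1 (h.antisymm (sq_nonneg _))]

theorem eq_of_forall_norm_sub_eq {c c' : F} {r r' : ℝ}
    (hc : c ∈ interior (convexHull ℝ (Set.range q))) (hr : ∀ i, ‖q i - c‖ = r)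
    (hr' : ∀ i, ‖q i - c'‖ = r') : c' = c := by
  by_contra hne
  have hconst : ∀ i, 2 * ⟪c' - c, q i - c⟫_ℝ = r ^ 2 + ‖c' - c‖ ^ 2 - r' ^ 2 := fun i => by
    have h := norm_sub_sq_real (q i - c) (c' - c)
    rw [sub_sub_sub_cancel_right, hr, hr', real_inner_comm] at h
    linarith
  obtain ⟨i, hi⟩ := exists_inner_sub_pos_of_mem_interior hc _ (sub_ne_zero.2 hne)
  obtain ⟨j, hj⟩ := exists_inner_sub_pos_of_mem_interior hc _ (neg_ne_zero.2 (sub_ne_zero.2 hne))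
  rw [inner_neg_left] at hj
  linarith [hconst i, hconst j]

omit [InnerProductSpace ℝ E] in
theorem radius_eq_of_isometryEquiv {cP : E} {cQ : F} {rP rQ : ℝ}
    (hc : cQ ∈ interior (convexHull ℝ (Set.range q)))
    (hP : ∀ i, ‖p i - cP‖ = rP) (hQ : ∀ i, ‖q i - cQ‖ = rQ) (e : E ≃ᵢ F)
    (he : ∀ i, e (p i) = q i) : rP = rQ := by
  have hP' : ∀ i, ‖q i - e cP‖ = rP := fun i => by
    rw [← he, ← dist_eq_norm, e.dist_eq, dist_eq_norm, hP]
  obtain ⟨i⟩ := nonempty_of_mem_interior_convexHull hc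
  rw [← hP' i, eq_of_forall_norm_sub_eq hc hQ hP', hQ]

variable [FiniteDimensional ℝ E] [FiniteDimensional ℝ F]

theorem norm_map_eq_of_forall_norm_map_sub_eq {x : E}
    (hx : x ∈ interior (convexHull ℝ (Set.range p))) (hT : ∀ u, ‖u‖ ≤ ‖T u‖)
    (hp : ∀ i, ‖T (p i - x)‖ = ‖p i - x‖) (u : E) : ‖T u‖ = ‖u‖ := by
  have hadj : LinearMap.adjoint T (T u) = u := by
    by_contra hne
    obtain ⟨i, hi⟩ := exists_inner_sub_pos_of_mem_interior hx _ (sub_ne_zero.2 hne)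
    rw [inner_sub_left, LinearMap.adjoint_inner_left,
      inner_map_map_eq_of_norm_map_eq hT (hp i), sub_self] at hi
    exact hi.false
  rw [← sq_eq_sq₀ (norm_nonneg _) (norm_nonneg _), ← real_inner_self_eq_norm_sq,
    ← LinearMap.adjoint_inner_left, hadj, real_inner_self_eq_norm_sq]

theorem exists_isometryEquiv_of_linearMap (hfin : finrank ℝ E = finrank ℝ F) {x : E} {c : F}
    (hTq : ∀ i, T (p i - x) = q i - c) (hT : ∀ u, ‖T u‖ = ‖u‖) :
    ∃ e : E ≃ᵢ F, ∀ i, e (p i) = q i := by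
  let L : E ≃ₗᵢ[ℝ] F := LinearIsometry.toLinearIsometryEquiv ⟨T, hT⟩ hfin
  refine ⟨((IsometryEquiv.subRight x).trans L.toIsometryEquiv).trans (IsometryEquiv.addRight c),
    fun i => ?_⟩
  change T (p i - x) + c = q i
  rw [hTq, sub_add_cancel]

end Rigidity

section Inscribed

variable {ι E F : Type*} [Fintype ι] [DecidableEq ι]
  [NormedAddCommGroup E] [InnerProductSpace ℝ E] [FiniteDimensional ℝ E] [Nontrivial E]
  [NormedAddCommGroup F] [InnerProductSpace ℝ F] [FiniteDimensional ℝ F]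
  {p : ι → E} {q : ι → F} {a : ι → ℝ}

omit [DecidableEq ι] [FiniteDimensional ℝ F] in
theorem sum_mul_norm_sub_sq_of_forall_norm_sub_eq {α : ι → ℝ} (hα : ∑ i, α i = 1) {c : F} {r : ℝ}
    (hr : ∀ i, ‖q i - c‖ = r) :
    ∑ i, α i * ‖q i - ∑ j, α j • q j‖ ^ 2 = r ^ 2 - ‖∑ i, α i • q i - c‖ ^ 2 := by
  rw [eq_sub_iff_add_eq, ← sum_mul_norm_sub_sq_eq_add hα q c]
  simp only [hr, ← Finset.sum_mul, hα, one_mul]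

section Comparison

variable (hinj : Function.Injective p)
  (hext : ∀ i, p i ∈ (convexHull ℝ (Set.range p)).extremePoints ℝ) (ha : IsGeneric p a)
  (hpq : ∀ i j, i ≠ j → IsExtreme ℝ (convexHull ℝ (Set.range p)) (segment ℝ (p i) (p j)) →
    ‖q i - q j‖ ≤ ‖p i - p j‖)
  {cP x : E} {cQ : F} {rP rQ r : ℝ} (hx : x ∈ interior (convexHull ℝ (Set.range p)))

include hinj hext ha hpq

include hx in
theorem sq_sub_norm_sum_wachspressCoordinate_smul_sub_sq_le
    (hP : ∀ i, ‖p i - cP‖ = rP) (hQ : ∀ i, ‖q i - cQ‖ = rQ) :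
    rQ ^ 2 - ‖∑ i, wachspressCoordinate p a x i • q i - cQ‖ ^ 2 ≤ rP ^ 2 - ‖x - cP‖ ^ 2 := by
  obtain ⟨B, hB⟩ := exists_isStressForm hinj hext ha hx
  have hp := sum_mul_norm_sub_sq_of_forall_norm_sub_eq hB.sum_weight hP
  rw [sum_wachspressCoordinate_smul hinj hext ha hx] at hp
  rw [← hp, ← sum_mul_norm_sub_sq_of_forall_norm_sub_eq hB.sum_weight hQ]
  exact hB.sum_mul_norm_sub_sq_le hpq

omit [Fintype ι] [DecidableEq ι] in
theorem norm_le_norm_map_of_forall_norm_sub_eq [Finite ι]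
    (hcP : cP ∈ interior (convexHull ℝ (Set.range p)))
    (hP : ∀ i, ‖p i - cP‖ = r) (hQ : ∀ i, ‖q i - cQ‖ = r) {T : E →ₗ[ℝ] F}
    (hT : ∀ i, T (p i - cP) = q i - cQ) (u : E) :
    ‖u‖ ≤ ‖T u‖ := by
  classical
  cases nonempty_fintype ι
  have hcont : Continuous fun s : ℝ => cP + s • u := by fun_prop
  obtain ⟨s, hs, hsu⟩ := ((isOpen_interior.preimage hcont).eventually_mem
    (by simpa using hcP : (0 : ℝ) ∈ _)).exists_gt
  have hmap : ∑ i, wachspressCoordinate p a (cP + s • u) i • q i - cQ = s • T u := by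
    calc ∑ i, wachspressCoordinate p a (cP + s • u) i • q i - cQ
        = ∑ i, wachspressCoordinate p a (cP + s • u) i • (q i - cQ) := by
          simp only [smul_sub, Finset.sum_sub_distrib, ← Finset.sum_smul,
            sum_wachspressCoordinate hinj hext ha hsu, one_smul]
      _ = T (∑ i, wachspressCoordinate p a (cP + s • u) i • (p i - cP)) := by
          simp only [map_sum, map_smul, hT]
      _ = s • T u := by
          simp only [smul_sub, Finset.sum_sub_distrib, ← Finset.sum_smul,
            sum_wachspressCoordinate hinj hext ha hsu, one_smul,
            sum_wachspressCoordinate_smul hinj hext ha hsu, add_sub_cancel_left, map_smul]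
  have h := sq_sub_norm_sum_wachspressCoordinate_smul_sub_sq_le hinj hext ha hpq hsu hP hQ
  rw [hmap, add_sub_cancel_left, sub_le_sub_iff_left,
    sq_le_sq₀ (norm_nonneg _) (norm_nonneg _), norm_smul, norm_smul] at h
  exact le_of_mul_le_mul_left h (norm_pos_iff.2 hs.ne')

theorem exists_isometryEquiv_of_sum_wachspressCoordinate_smul_eq
    (hfin : finrank ℝ E = finrank ℝ F) (hcP : cP ∈ interior (convexHull ℝ (Set.range p)))
    (hsum : ∑ i, wachspressCoordinate p a cP i • q i = cQ)
    (hP : ∀ i, ‖p i - cP‖ = r) (hQ : ∀ i, ‖q i - cQ‖ = r) :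
    ∃ e : E ≃ᵢ F, ∀ i, e (p i) = q i := by
  obtain ⟨B, hB⟩ := exists_isStressForm hinj hext ha hcP
  obtain ⟨T, hT⟩ := hB.exists_linearMap_of_sum_mul_norm_sub_sq_eq hpq (by simp [hsum, hP, hQ])
  rw [hsum] at hT
  refine exists_isometryEquiv_of_linearMap hfin hT <|
    norm_map_eq_of_forall_norm_map_sub_eq hcP
      (norm_le_norm_map_of_forall_norm_sub_eq hinj hext ha hpq hcP hP hQ hT) fun i => ?_
  rw [hT, hP, hQ]

end Comparison

omit [Fintype ι] [DecidableEq ι] in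
theorem radius_le_and_exists_isometryEquiv_of_eq [Finite ι] (hinjp : Function.Injective p)
    (hinjq : Function.Injective q)
    (hextp : ∀ i, p i ∈ (convexHull ℝ (Set.range p)).extremePoints ℝ)
    (hextq : ∀ i, q i ∈ (convexHull ℝ (Set.range q)).extremePoints ℝ)
    (hfin : finrank ℝ E = finrank ℝ F)
    (hcomb : ∀ I : Set ι, IsExtreme ℝ (convexHull ℝ (Set.range q)) (convexHull ℝ (q '' I)) →
      IsExtreme ℝ (convexHull ℝ (Set.range p)) (convexHull ℝ (p '' I)))
    {cP : E} {cQ : F} {rP rQ : ℝ} (hP : ∀ i, ‖p i - cP‖ = rP) (hQ : ∀ i, ‖q i - cQ‖ = rQ)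
    (hc : cQ ∈ interior (convexHull ℝ (Set.range q)))
    (hpq : ∀ i j, i ≠ j → IsExtreme ℝ (convexHull ℝ (Set.range p)) (segment ℝ (p i) (p j)) →
      ‖q i - q j‖ ≤ ‖p i - p j‖) :
    rQ ≤ rP ∧ (rP = rQ → ∃ e : E ≃ᵢ F, ∀ i, e (p i) = q i) := by
  classical
  have := Fintype.ofFinite ι
  obtain ⟨k⟩ := nonempty_of_mem_interior_convexHull hc
  have : Nontrivial F := nontrivial_of_finrank_pos (R := ℝ) (hfin ▸ finrank_pos)
  obtain ⟨a, ha⟩ := exists_isGeneric p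
  obtain ⟨x, hx, hsum⟩ := exists_sum_wachspressCoordinate_smul_eq hinjp hextp ha
    (interior_convexHull_nonempty_of_isExtreme_imp hinjq hextq ⟨cQ, hc⟩ hinjp hextp hcomb hfin.le)
    hcomb hc
  have hle := sq_sub_norm_sum_wachspressCoordinate_smul_sub_sq_le hinjp hextp ha hpq hx hP hQ
  rw [hsum, sub_self, norm_zero, zero_pow two_ne_zero, sub_zero] at hle
  refine ⟨le_of_abs_le (abs_le_of_sq_le_sq ?_ (hP k ▸ norm_nonneg _)), ?_⟩
  · linarith [sq_nonneg ‖x - cP‖]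
  · rintro rfl
    have hxP : x = cP := by
      rw [← sub_eq_zero, ← norm_eq_zero, ← sq_nonpos_iff]
      linarith
    subst hxP
    exact exists_isometryEquiv_of_sum_wachspressCoordinate_smul_eq hinjp hextp ha hpq hfin hx hsum
      hP hQ

omit [Fintype ι] [DecidableEq ι] [Nontrivial E] in
theorem inscribed_version_general [Finite ι] (hinjp : Function.Injective p)
    (hinjq : Function.Injective q)
    (hextp : ∀ i, p i ∈ (convexHull ℝ (Set.range p)).extremePoints ℝ)
    (hextq : ∀ i, q i ∈ (convexHull ℝ (Set.range q)).extremePoints ℝ)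
    (hfin : finrank ℝ E = finrank ℝ F)
    (hcomb : ∀ I : Set ι, IsExtreme ℝ (convexHull ℝ (Set.range q)) (convexHull ℝ (q '' I)) →
      IsExtreme ℝ (convexHull ℝ (Set.range p)) (convexHull ℝ (p '' I)))
    {cP : E} {cQ : F} {rP rQ : ℝ} (hP : ∀ i, ‖p i - cP‖ = rP) (hQ : ∀ i, ‖q i - cQ‖ = rQ)
    (hc : cQ ∈ interior (convexHull ℝ (Set.range q)))
    (hpq : ∀ i j, i ≠ j → IsExtreme ℝ (convexHull ℝ (Set.range p)) (segment ℝ (p i) (p j)) →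
      ‖q i - q j‖ ≤ ‖p i - p j‖) :
    rQ ≤ rP ∧ (rP = rQ ↔ ∃ e : E ≃ᵢ F, ∀ i, e (p i) = q i) := by
  suffices h : rQ ≤ rP ∧ (rP = rQ → ∃ e : E ≃ᵢ F, ∀ i, e (p i) = q i) from
    ⟨h.1, h.2, fun ⟨e, he⟩ => radius_eq_of_isometryEquiv hc hP hQ e he⟩
  obtain hE | hE := subsingleton_or_nontrivial E
  · have hF : Subsingleton F := finrank_zero_iff.1 (hfin ▸ finrank_zero_of_subsingleton (R := ℝ))
    obtain ⟨k⟩ := nonempty_of_mem_interior_convexHull hc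
    refine ⟨?_, fun _ => ⟨⟨⟨0, 0, fun _ => Subsingleton.elim _ _, fun _ => Subsingleton.elim _ _⟩,
      isometry_subsingleton⟩, fun _ => Subsingleton.elim _ _⟩⟩
    rw [← hP k, ← hQ k, Subsingleton.elim (q k - cQ) 0, norm_zero]
    exact norm_nonneg _
  · exact radius_le_and_exists_isometryEquiv_of_eq hinjp hinjq hextp hextq hfin hcomb hP hQ hc hpq

end Inscribed

theorem inscribed_version {n d : ℕ}
    (p q : Fin n → EuclideanSpace ℝ (Fin d))
    (hpinj : Function.Injective p) (hqinj : Function.Injective q)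
    (hpvert : Set.range p = Set.extremePoints ℝ (convexHull ℝ (Set.range p)))
    (hqvert : Set.range q = Set.extremePoints ℝ (convexHull ℝ (Set.range q)))
    (hcomb : CombEquiv p q)
    (cP cQ : EuclideanSpace ℝ (Fin d)) (rP rQ : ℝ)
    (hrP : 0 ≤ rP) (hrQ : 0 ≤ rQ)
    (hinsP : ∀ i, ‖p i - cP‖ = rP) (hinsQ : ∀ i, ‖q i - cQ‖ = rQ)
    (hc : cQ ∈ interior (convexHull ℝ (Set.range q)))
    (h1 : ∀ i j, IsEdge p i j → ‖q i - q j‖ ≤ ‖p i - p j‖) :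
    rQ ≤ rP ∧
      (rP = rQ ↔ ∃ e : EuclideanSpace ℝ (Fin d) ≃ᵢ EuclideanSpace ℝ (Fin d),
        ∀ i, e (p i) = q i) := by
  exact inscribed_version_general hpinj hqinj (fun i => hpvert ▸ Set.mem_range_self i)
    (fun i => hqvert ▸ Set.mem_range_self i) rfl (fun I => (hcomb I).2) hinsP hinsQ hc
    fun i j hij he => h1 i j ⟨hij, he⟩
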